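/- Let 2 < p ≤ 3 and assume E|X_i|^p < ∞ for every i and that condition (LD4*) holds; let κ = max_{i∈𝒥} max(|D_i*|, |{j ∈ 𝒥 : i ∈ D_j*}|). Then there is an absolute constant C such that for every z ∈ ℝ, |F(z) − Φ(z)| ≤ C κ^p (1 + |z|)^{−p} Σ_{i∈𝒥} E|X_i|^p. -/

import Mathlib

open MeasureTheory ProbabilityTheory Real

noncomputable def stdGaussianCDF : ℝ → ℝ :=
  fun z => ∫ x in Set.Iic z, (Real.sqrt (2 * Real.pi))⁻¹ * Real.exp (-x ^ 2 / 2)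


lemma gint : Integrable (fun x : ℝ => Real.exp (-x ^ 2 / 2)) := by
  have := integrable_exp_neg_mul_sq (b := 1/2) (by norm_num)
  refine this.congr (Filter.Eventually.of_forall fun x => ?_)
  simp only []
  congr 1; ring

lemma gtot : ∫ x : ℝ, Real.exp (-x ^ 2 / 2) = √(2 * π) := by
  have := integral_gaussian (1/2)
  rw [show π / (1/2) = 2 * π by ring] at this
  rw [← this]
  congr 1; ext x; congr 1; ring

lemma sq2pi_le : √(2 * π) ≤ 3 := by
  rw [Real.sqrt_le_left (by norm_num)]
  have := Real.pi_lt_d2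
  norm_num at *; linarith

lemma sq2pi_ge : 1 ≤ √(2 * π) := by
  rw [Real.one_le_sqrt]
  have := Real.pi_gt_three
  linarith

lemma mills_deriv (w : ℝ) : ∫ x in Set.Ioi w, x * Real.exp (-x ^ 2 / 2) = Real.exp (-w ^ 2 / 2) ∧
    IntegrableOn (fun x => x * Real.exp (-x ^ 2 / 2)) (Set.Ioi w) := by
  have hi : Integrable (fun x : ℝ => x * Real.exp (-x ^ 2 / 2)) := by
    have := integrable_mul_exp_neg_mul_sq (b := 1/2) (by norm_num)
    refine this.congr (Filter.Eventually.of_forall fun x => ?_)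
    simp only []
    congr 2; ring
  refine ⟨?_, hi.integrableOn⟩
  have ht : Filter.Tendsto (fun x : ℝ => -Real.exp (-x ^ 2 / 2)) Filter.atTop (nhds (-0)) := by
    apply Filter.Tendsto.neg
    apply Real.tendsto_exp_atBot.comp
    have h1 : Filter.Tendsto (fun x : ℝ => x ^ 2) Filter.atTop Filter.atTop :=
      Filter.tendsto_pow_atTop (by norm_num)
    have := (h1.atTop_div_const (r := 2) (by norm_num))
    have h2 := Filter.tendsto_neg_atTop_atBot.comp this
    refine h2.congr fun x => ?_
    simp [neg_div]
  have := integral_Ioi_of_hasDerivAt_of_tendsto' (a := w) (f := fun x : ℝ => -Real.exp (-x ^ 2 / 2))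
    (f' := fun x => x * Real.exp (-x ^ 2 / 2)) (m := -0) (fun x _ => ?_) hi.integrableOn ht
  · rw [this]; simp
  · have h0 : HasDerivAt (fun x : ℝ => -x ^ 2 / 2) (-x) x :=
      ((hasDerivAt_pow 2 x).fun_neg.div_const 2).congr_deriv (by push_cast; ring)
    exact h0.exp.fun_neg.congr_deriv (by ring)

lemma gint_nonneg (s : Set ℝ) : 0 ≤ ∫ x in s, Real.exp (-x ^ 2 / 2) :=
  integral_nonneg fun x => (Real.exp_pos _).le

lemma gint_le (s : Set ℝ) : ∫ x in s, Real.exp (-x ^ 2 / 2) ≤ 3 := by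
  refine le_trans ?_ (gtot.le.trans sq2pi_le)
  exact setIntegral_le_integral gint (Filter.Eventually.of_forall fun x => (Real.exp_pos _).le)

lemma mills_mul {w : ℝ} (_hw : 0 ≤ w) :
    w * (Real.exp (w ^ 2 / 2) * ∫ x in Set.Ioi w, Real.exp (-x ^ 2 / 2)) ≤ 1 := by
  have h1 : w * ∫ x in Set.Ioi w, Real.exp (-x ^ 2 / 2) ≤ Real.exp (-w ^ 2 / 2) := by
    rw [← (mills_deriv w).1, ← integral_const_mul]
    refine setIntegral_mono_on (gint.integrableOn.const_mul _) (mills_deriv w).2 measurableSet_Ioi ?_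
    intro x hx
    exact mul_le_mul_of_nonneg_right (le_of_lt hx) (Real.exp_pos _).le
  calc _ = Real.exp (w ^ 2 / 2) * (w * ∫ x in Set.Ioi w, Real.exp (-x ^ 2 / 2)) := by ring
    _ ≤ Real.exp (w ^ 2 / 2) * Real.exp (-w ^ 2 / 2) := by gcongr
    _ = 1 := by rw [← Real.exp_add]; ring_nf; simp

lemma mills_le {w : ℝ} (hw : 0 ≤ w) :
    Real.exp (w ^ 2 / 2) * ∫ x in Set.Ioi w, Real.exp (-x ^ 2 / 2) ≤ 9 := by
  rcases le_total w 1 with h | h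
  · have h1 : Real.exp (w ^ 2 / 2) ≤ 3 := by
      refine le_trans (Real.exp_le_exp.2 (by nlinarith : w ^ 2 / 2 ≤ 1)) ?_
      linarith [Real.exp_one_lt_d9]
    have h2 := gint_le (Set.Ioi w)
    have h3 := gint_nonneg (Set.Ioi w)
    nlinarith [Real.exp_pos (w ^ 2 / 2)]
  · have := mills_mul hw
    have h3 := gint_nonneg (Set.Ioi w)
    have : 0 ≤ Real.exp (w ^ 2 / 2) * ∫ x in Set.Ioi w, Real.exp (-x ^ 2 / 2) := by positivity
    nlinarith

lemma gint_Iic (w : ℝ) : ∫ x in Set.Iic w, Real.exp (-x ^ 2 / 2) =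
    ∫ x in Set.Ioi (-w), Real.exp (-x ^ 2 / 2) := by
  have := integral_comp_neg_Iic w (fun x => Real.exp (-x ^ 2 / 2))
  simp only [neg_sq] at this
  exact this

/-- psi -/
noncomputable def psi (w : ℝ) : ℝ := Real.exp (w ^ 2 / 2) * ∫ x in Set.Iic w, Real.exp (-x ^ 2 / 2)

lemma psi_nonneg (w : ℝ) : 0 ≤ psi w := mul_nonneg (Real.exp_pos _).le (gint_nonneg _)

lemma psi_le_of_nonpos {w : ℝ} (hw : w ≤ 0) : psi w ≤ 9 ∧ |w| * psi w ≤ 1 := by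
  unfold psi
  rw [gint_Iic]
  have h1 := mills_le (w := -w) (by linarith)
  have h2 := mills_mul (w := -w) (by linarith)
  rw [neg_sq] at h1 h2
  rw [abs_of_nonpos hw]
  exact ⟨h1, h2⟩

lemma psi_le_exp (w : ℝ) : psi w ≤ 3 * Real.exp (w ^ 2 / 2) := by
  unfold psi
  have := gint_le (Set.Iic w)
  nlinarith [Real.exp_pos (w ^ 2 / 2)]

/-- ramp -/
noncomputable def ramp (a b : ℝ) (w : ℝ) : ℝ := max 0 (min 1 ((w - a) / (b - a)))

lemma ramp_nonneg (a b w : ℝ) : 0 ≤ ramp a b w := le_max_left _ _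
lemma ramp_le_one (a b w : ℝ) : ramp a b w ≤ 1 := max_le (by norm_num) (min_le_left _ _)
lemma ramp_cont (a b : ℝ) : Continuous (ramp a b) := by unfold ramp; fun_prop
lemma ramp_left {a b w : ℝ} (hab : a < b) (h : w ≤ a) : ramp a b w = 0 := by
  unfold ramp
  have : (w - a) / (b - a) ≤ 0 := div_nonpos_of_nonpos_of_nonneg (by linarith) (by linarith)
  rw [max_eq_left]; exact (min_le_right _ _).trans this
lemma ramp_right {a b w : ℝ} (hab : a < b) (h : b ≤ w) : ramp a b w = 1 := by
  unfold ramp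
  have : 1 ≤ (w - a) / (b - a) := by rw [le_div_iff₀ (by linarith)]; linarith
  rw [min_eq_left this]; simp

noncomputable def Nr (a b : ℝ) : ℝ :=
  (√(2 * π))⁻¹ * ∫ x, ramp a b x * Real.exp (-x ^ 2 / 2)

lemma ramp_gint (a b : ℝ) : Integrable (fun x => ramp a b x * Real.exp (-x ^ 2 / 2)) := by
  refine gint.mono' ((ramp_cont a b).mul (by fun_prop)).aestronglyMeasurable
    (Filter.Eventually.of_forall fun x => ?_)
  rw [Real.norm_eq_abs, abs_mul, abs_of_nonneg (ramp_nonneg _ _ _), abs_of_nonneg (Real.exp_pos _).le]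
  have := ramp_le_one a b x
  nlinarith [Real.exp_pos (-x ^ 2 / 2)]

lemma Nr_nonneg (a b : ℝ) : 0 ≤ Nr a b := by
  unfold Nr
  have : 0 ≤ ∫ x, ramp a b x * Real.exp (-x ^ 2 / 2) :=
    integral_nonneg fun x => mul_nonneg (ramp_nonneg _ _ _) (Real.exp_pos _).le
  positivity

lemma cdf_eq (z : ℝ) : stdGaussianCDF z = (√(2 * π))⁻¹ * ∫ x in Set.Iic z, Real.exp (-x ^ 2 / 2) := by
  unfold stdGaussianCDF
  rw [integral_const_mul]

lemma cdf_compl (z : ℝ) : 1 - stdGaussianCDF z =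
    (√(2 * π))⁻¹ * ∫ x in Set.Ioi z, Real.exp (-x ^ 2 / 2) := by
  rw [cdf_eq]
  have h := integral_add_compl (μ := volume) (measurableSet_Iic (a := z)) gint
  rw [gtot, Set.compl_Iic] at h
  have h0 : √(2 * π) ≠ 0 := by have := sq2pi_ge; positivity
  have : (1:ℝ) = (√(2 * π))⁻¹ * √(2 * π) := by field_simp
  rw [this, ← h]; ring

lemma cdf_neg (z : ℝ) : stdGaussianCDF (-z) = 1 - stdGaussianCDF z := by
  rw [cdf_compl, cdf_eq, gint_Iic, neg_neg]

lemma cdf_nonneg (z : ℝ) : 0 ≤ stdGaussianCDF z := by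
  rw [cdf_eq]; exact mul_nonneg (by positivity) (gint_nonneg _)

lemma cdf_le_one (z : ℝ) : stdGaussianCDF z ≤ 1 := by
  have := cdf_compl z
  have h : 0 ≤ (√(2 * π))⁻¹ * ∫ x in Set.Ioi z, Real.exp (-x ^ 2 / 2) :=
    mul_nonneg (by positivity) (gint_nonneg _)
  linarith

lemma Nr_le {a b : ℝ} (hab : a < b) : Nr a b ≤ 1 - stdGaussianCDF a := by
  rw [cdf_compl]
  unfold Nr
  refine mul_le_mul_of_nonneg_left ?_ (by positivity)
  rw [← integral_indicator measurableSet_Ioi]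
  refine integral_mono (ramp_gint _ _) (gint.indicator measurableSet_Ioi) fun x => ?_
  simp only [Set.indicator]
  split_ifs with h
  · have := ramp_le_one a b x
    nlinarith [Real.exp_pos (-x ^ 2 / 2)]
  · rw [ramp_left hab (by simpa using h)]; simp

lemma Nr_ge {a b : ℝ} (hab : a < b) : 1 - stdGaussianCDF b ≤ Nr a b := by
  rw [cdf_compl]
  unfold Nr
  refine mul_le_mul_of_nonneg_left ?_ (by positivity)
  rw [← integral_indicator measurableSet_Ioi]
  refine integral_mono (gint.indicator measurableSet_Ioi) (ramp_gint _ _) fun x => ?_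
  simp only [Set.indicator]
  split_ifs with h
  · rw [ramp_right hab (le_of_lt h)]; simp
  · exact mul_nonneg (ramp_nonneg _ _ _) (Real.exp_pos _).le

lemma Nr_le_one {a b : ℝ} (hab : a < b) : Nr a b ≤ 1 := by
  have := Nr_le hab
  have := cdf_nonneg a
  linarith

lemma cdf_tail {a : ℝ} (ha : 0 ≤ a) : 1 - stdGaussianCDF a ≤ 9 * Real.exp (-a ^ 2 / 2) := by
  rw [cdf_compl]
  have h1 := mills_le ha
  have h2 : ∫ x in Set.Ioi a, Real.exp (-x ^ 2 / 2) ≤ 9 * Real.exp (-a ^ 2 / 2) := by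
    have : Real.exp (-a ^ 2 / 2) * Real.exp (a ^ 2 / 2) = 1 := by
      rw [← Real.exp_add]; ring_nf; simp
    calc _ = Real.exp (-a ^ 2 / 2) * (Real.exp (a ^ 2 / 2) * ∫ x in Set.Ioi a, Real.exp (-x ^ 2 / 2)) := by
          rw [← mul_assoc, this, one_mul]
      _ ≤ Real.exp (-a ^ 2 / 2) * 9 := by gcongr
      _ = _ := by ring
  have h3 : (√(2 * π))⁻¹ ≤ 1 := inv_le_one_of_one_le₀ sq2pi_ge
  have := gint_nonneg (Set.Ioi a)
  have h4 : 0 ≤ (√(2 * π))⁻¹ := by positivity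
  nlinarith

/-- increments of the cdf -/
lemma cdf_incr {x y D : ℝ} (hxy : x ≤ y) (hD : ∀ t ∈ Set.Ioc x y, Real.exp (-t ^ 2 / 2) ≤ D) :
    stdGaussianCDF x ≤ stdGaussianCDF y ∧ stdGaussianCDF y - stdGaussianCDF x ≤ (y - x) * D := by
  rw [cdf_eq, cdf_eq]
  have h := intervalIntegral.integral_Iic_sub_Iic (a := x) (b := y) gint.integrableOn gint.integrableOn
  have h4 : 0 ≤ (√(2 * π))⁻¹ := by positivity
  have h3 : (√(2 * π))⁻¹ ≤ 1 := inv_le_one_of_one_le₀ sq2pi_ge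
  have h0 : 0 ≤ ∫ t in x..y, Real.exp (-t ^ 2 / 2) :=
    intervalIntegral.integral_nonneg hxy fun t _ => (Real.exp_pos _).le
  have h1 : ∫ t in x..y, Real.exp (-t ^ 2 / 2) ≤ (y - x) * D := by
    have := intervalIntegral.norm_integral_le_of_norm_le_const (a := x) (b := y) (C := D)
      (f := fun t => Real.exp (-t ^ 2 / 2)) (fun t ht => by
        rw [Set.uIoc_of_le hxy] at ht
        rw [Real.norm_eq_abs, abs_of_nonneg (Real.exp_pos _).le]; exact hD t ht)
    rw [abs_of_nonneg (by linarith : 0 ≤ y - x)] at this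
    calc _ ≤ _ := le_abs_self _
      _ ≤ _ := this
      _ = _ := by ring
  rw [← mul_sub]
  constructor
  · have : (√(2 * π))⁻¹ * (∫ x in Set.Iic y, Real.exp (-x ^ 2 / 2)) - (√(2 * π))⁻¹ * (∫ x in Set.Iic x, Real.exp (-x ^ 2 / 2)) ≥ 0 := by
      rw [← mul_sub, h]; positivity
    linarith
  · rw [h]; nlinarith

/-- Stein solution -/
noncomputable def stf (a b : ℝ) (w : ℝ) : ℝ :=
  Real.exp (w ^ 2 / 2) * ∫ x in Set.Iic w, (ramp a b x - Nr a b) * Real.exp (-x ^ 2 / 2)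

lemma st_int (a b : ℝ) : Integrable (fun x => (ramp a b x - Nr a b) * Real.exp (-x ^ 2 / 2)) := by
  have := (ramp_gint a b).sub (gint.const_mul (Nr a b))
  refine this.congr (Filter.Eventually.of_forall fun x => ?_)
  simp; ring

lemma st_total (a b : ℝ) : ∫ x, (ramp a b x - Nr a b) * Real.exp (-x ^ 2 / 2) = 0 := by
  have : (fun x => (ramp a b x - Nr a b) * Real.exp (-x ^ 2 / 2)) =
    fun x => ramp a b x * Real.exp (-x ^ 2 / 2) - Nr a b * Real.exp (-x ^ 2 / 2) := by ext; ring
  rw [this, integral_sub (ramp_gint a b) (gint.const_mul _), integral_const_mul, gtot]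
  unfold Nr
  have h0 : √(2 * π) ≠ 0 := by have := sq2pi_ge; positivity
  field_simp; ring

lemma stf_hasDeriv (a b w : ℝ) :
    HasDerivAt (stf a b) (w * stf a b w + (ramp a b w - Nr a b)) w := by
  have hc : Continuous (fun x => (ramp a b x - Nr a b) * Real.exp (-x ^ 2 / 2)) := by
    have := ramp_cont a b
    fun_prop
  have h1 : HasDerivAt (fun w => ∫ x in Set.Iic w, (ramp a b x - Nr a b) * Real.exp (-x ^ 2 / 2))
      ((ramp a b w - Nr a b) * Real.exp (-w ^ 2 / 2)) w := by
    have h2 : ∀ w, ∫ x in Set.Iic w, (ramp a b x - Nr a b) * Real.exp (-x ^ 2 / 2) =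
      (∫ x in Set.Iic 0, (ramp a b x - Nr a b) * Real.exp (-x ^ 2 / 2)) +
        ∫ x in (0:ℝ)..w, (ramp a b x - Nr a b) * Real.exp (-x ^ 2 / 2) := by
      intro w
      rw [← intervalIntegral.integral_Iic_sub_Iic (st_int a b).integrableOn (st_int a b).integrableOn]
      ring
    rw [funext h2]
    exact (intervalIntegral.integral_hasDerivAt_right (hc.intervalIntegrable _ _)
      (hc.stronglyMeasurableAtFilter _ _) hc.continuousAt).const_add _
  have h3 : HasDerivAt (fun w : ℝ => Real.exp (w ^ 2 / 2)) (Real.exp (w ^ 2 / 2) * w) w := by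
    have h0 : HasDerivAt (fun x : ℝ => x ^ 2 / 2) w w :=
      ((hasDerivAt_pow 2 w).div_const 2).congr_deriv (by push_cast; ring)
    exact h0.exp
  have h5 := h3.fun_mul h1
  refine h5.congr_deriv ?_
  unfold stf
  have : Real.exp (w ^ 2 / 2) * Real.exp (-w ^ 2 / 2) = 1 := by
    rw [← Real.exp_add]; ring_nf; simp
  linear_combination (ramp a b w - Nr a b) * this

lemma ramp_sub_abs {a b : ℝ} (hab : a < b) (x : ℝ) : |ramp a b x - Nr a b| ≤ 1 := by
  have := ramp_nonneg a b x
  have := ramp_le_one a b x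
  have := Nr_nonneg a b
  have := Nr_le_one hab
  rw [abs_le]; constructor <;> linarith

lemma stf_abs {a b : ℝ} (hab : a < b) (w : ℝ) : |stf a b w| ≤ psi (-|w|) := by
  have key : ∀ s : Set ℝ, |∫ x in s, (ramp a b x - Nr a b) * Real.exp (-x ^ 2 / 2)| ≤
      ∫ x in s, Real.exp (-x ^ 2 / 2) := by
    intro s
    refine abs_integral_le_integral_abs.trans ?_
    refine integral_mono_of_nonneg (Filter.Eventually.of_forall fun x => abs_nonneg _) gint.integrableOn
      (Filter.Eventually.of_forall fun x => ?_)
    simp only [abs_mul, abs_of_nonneg (Real.exp_pos _).le]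
    have := ramp_sub_abs hab x
    nlinarith [Real.exp_pos (-x ^ 2 / 2)]
  unfold stf psi
  rw [abs_mul, abs_of_nonneg (Real.exp_pos _).le, neg_sq, sq_abs]
  refine mul_le_mul_of_nonneg_left ?_ (Real.exp_pos _).le
  rcases le_total w 0 with h | h
  · rw [abs_of_nonpos h, neg_neg]; exact key _
  · rw [abs_of_nonneg h, gint_Iic, neg_neg]
    have h1 := integral_add_compl (μ := volume) (measurableSet_Iic (a := w)) (st_int a b)
    rw [st_total, Set.compl_Iic] at h1
    rw [eq_neg_of_add_eq_zero_left h1, abs_neg]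
    exact key _

lemma stf_bounds {a b : ℝ} (hab : a < b) (w : ℝ) :
    |stf a b w| ≤ 9 ∧ |w * stf a b w| ≤ 1 ∧ |w * stf a b w + (ramp a b w - Nr a b)| ≤ 2 := by
  have h1 := stf_abs hab w
  obtain ⟨h2, h3⟩ := psi_le_of_nonpos (w := -|w|) (by simp)
  rw [abs_neg, abs_abs] at h3
  have h4 : |w * stf a b w| ≤ 1 := by
    rw [abs_mul]
    exact (mul_le_mul_of_nonneg_left h1 (abs_nonneg _)).trans h3
  refine ⟨h1.trans h2, h4, (abs_add_le _ _).trans ?_⟩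
  have := ramp_sub_abs hab w
  linarith

lemma stf_left {a b w : ℝ} (hab : a < b) (hw : w ≤ a) : stf a b w = -Nr a b * psi w := by
  unfold stf psi
  have : ∫ x in Set.Iic w, (ramp a b x - Nr a b) * Real.exp (-x ^ 2 / 2) =
    ∫ x in Set.Iic w, -Nr a b * Real.exp (-x ^ 2 / 2) := by
    refine setIntegral_congr_fun measurableSet_Iic fun x hx => ?_
    rw [ramp_left hab (le_trans hx hw)]; ring
  rw [this, integral_const_mul]; ring


lemma pow_exp_bound (n : ℕ) : ∃ C : ℝ, 0 < C ∧ ∀ x : ℝ, 0 ≤ x → ∀ Z : ℝ, 0 ≤ Z → Z ≤ x + 3 →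
    Z ^ n * Real.exp (-(3 * x ^ 2 / 8)) ≤ C := by
  refine ⟨n.factorial * Real.exp 4, by positivity, fun x hx Z hZ hZx => ?_⟩
  have h1 := Real.pow_div_factorial_le_exp Z hZ n
  rw [div_le_iff₀ (by positivity)] at h1
  calc Z ^ n * Real.exp (-(3 * x ^ 2 / 8)) ≤ (Real.exp Z * n.factorial) * Real.exp (-(3 * x ^ 2 / 8)) := by gcongr
    _ = n.factorial * Real.exp (Z - 3 * x ^ 2 / 8) := by rw [sub_eq_add_neg, Real.exp_add]; ring
    _ ≤ _ := by
      gcongr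
      nlinarith [sq_nonneg (3 * x - 4)]

noncomputable def stphi (a b w : ℝ) : ℝ := w * stf a b w + (ramp a b w - Nr a b)
noncomputable def stg (a b w : ℝ) : ℝ := stf a b w + w * stphi a b w

noncomputable def indI (c w : ℝ) : ℝ := (Set.Ici c).indicator (fun _ => (1:ℝ)) w

lemma indI_nonneg (c w : ℝ) : 0 ≤ indI c w := Set.indicator_nonneg (fun _ _ => zero_le_one) _
lemma indI_le_one (c w : ℝ) : indI c w ≤ 1 := by
  unfold indI; simp only [Set.indicator]; split_ifs <;> norm_num
lemma indI_of_le {c w : ℝ} (h : c ≤ w) : indI c w = 1 := by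
  unfold indI; simp [Set.indicator, h]
lemma indI_of_lt {c w : ℝ} (h : w < c) : indI c w = 0 := by
  unfold indI; simp [Set.indicator, h]
lemma indI_mono {c d v w : ℝ} (h : c ≤ v → d ≤ w) : indI c v ≤ indI d w := by
  by_cases hc : c ≤ v
  · rw [indI_of_le (h hc)]; exact indI_le_one _ _
  · rw [indI_of_lt (not_le.1 hc)]; exact indI_nonneg _ _
lemma indI_meas (c : ℝ) : Measurable (indI c) := measurable_const.indicator measurableSet_Ici

lemma stphi_cont (a b : ℝ) : Continuous (stphi a b) := by
  have h : Continuous (stf a b) :=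
    continuous_iff_continuousAt.2 fun w => (stf_hasDeriv a b w).continuousAt
  have := ramp_cont a b
  unfold stphi
  fun_prop

lemma stf_mul_hasDeriv (a b w : ℝ) : HasDerivAt (fun w => w * stf a b w) (stg a b w) w := by
  have := (hasDerivAt_id w).fun_mul (stf_hasDeriv a b w)
  refine this.congr_deriv ?_
  unfold stg stphi; simp

lemma stf_main : ∃ C : ℝ, 0 < C ∧ ∀ Z a b : ℝ, 1 ≤ Z → a < b → Z - 2 ≤ a → ∀ w : ℝ,
    |stphi a b w| ≤ C * ((Z ^ 4)⁻¹ + indI (Z / 2 - 3) w) ∧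
    |stg a b w| ≤ C * (1 + |w|) * ((Z ^ 4)⁻¹ + indI (Z / 2 - 3) w) := by
  obtain ⟨C0, hC0, hC⟩ := pow_exp_bound 5
  refine ⟨1000 + 1000 * C0, by positivity, fun Z a b hZ hab hZa w => ?_⟩
  obtain ⟨g1, g2, g3⟩ := stf_bounds hab w
  have hZ4 : 0 < (Z ^ 4)⁻¹ := by positivity
  have hin := indI_nonneg (Z / 2 - 3) w
  -- it suffices to bound
  suffices h : ∃ D : ℝ, 0 ≤ D ∧ |stf a b w| ≤ D ∧ |stphi a b w| ≤ D ∧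
      D ≤ (1000 + 1000 * C0) * ((Z ^ 4)⁻¹ + indI (Z / 2 - 3) w) by
    obtain ⟨D, hD0, h1, h2, h3⟩ := h
    refine ⟨h2.trans h3, ?_⟩
    unfold stg
    calc |stf a b w + w * stphi a b w| ≤ |stf a b w| + |w| * |stphi a b w| := by
          rw [← abs_mul]; exact abs_add_le _ _
      _ ≤ D + |w| * D := by gcongr
      _ = (1 + |w|) * D := by ring
      _ ≤ (1 + |w|) * ((1000 + 1000 * C0) * ((Z ^ 4)⁻¹ + indI (Z / 2 - 3) w)) := by gcongr
      _ = _ := by ring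
  by_cases hw : Z / 2 - 3 ≤ w
  · refine ⟨9, by norm_num, g1, (by unfold stphi; linarith), ?_⟩
    rw [indI_of_le hw]; nlinarith
  push Not at hw
  rw [indI_of_lt hw]
  by_cases ha : a < 0
  · refine ⟨9, by norm_num, g1, (by unfold stphi; linarith), ?_⟩
    have : Z ^ 4 ≤ 2 ^ 4 := by
      apply pow_le_pow_left₀ (by linarith); linarith
    have : (1/16 : ℝ) ≤ (Z ^ 4)⁻¹ := by
      rw [one_div]; apply inv_anti₀ (by positivity); linarith
    nlinarith
  push Not at ha
  have hNr : Nr a b ≤ 9 * Real.exp (-a ^ 2 / 2) := (Nr_le hab).trans (cdf_tail ha)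
  have hN0 := Nr_nonneg a b
  have hwa : w ≤ a / 2 := by linarith
  have hf := stf_left hab (by linarith : w ≤ a)
  have hr := ramp_left hab (by linarith : w ≤ a)
  have hpsi : psi w ≤ 9 * Real.exp (a ^ 2 / 8) ∧ |w| * psi w ≤ (1 + a) * (3 * Real.exp (a ^ 2 / 8)) := by
    have he : 1 ≤ Real.exp (a ^ 2 / 8) := Real.one_le_exp (by positivity)
    rcases le_total w 0 with h0 | h0
    · obtain ⟨p1, p2⟩ := psi_le_of_nonpos h0
      refine ⟨by linarith, ?_⟩
      nlinarith
    · have h1 := psi_le_exp w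
      have h2 : Real.exp (w ^ 2 / 2) ≤ Real.exp (a ^ 2 / 8) := by
        apply Real.exp_le_exp.2; nlinarith
      refine ⟨by nlinarith, ?_⟩
      rw [abs_of_nonneg h0]
      apply mul_le_mul (by linarith) (by linarith) (psi_nonneg _) (by linarith)
  set E := Real.exp (a ^ 2 / 8) with hE
  have he : 1 ≤ E := Real.one_le_exp (by positivity)
  have hEE : Real.exp (-a ^ 2 / 2) * E = Real.exp (-(3 * a ^ 2 / 8)) := by
    rw [hE, ← Real.exp_add]; congr 1; ring
  have hp0 := psi_nonneg w
  refine ⟨Nr a b * ((1 + a) * (9 * E)), by positivity, ?_, ?_, ?_⟩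
  · rw [hf, abs_mul, abs_neg, abs_of_nonneg hN0, abs_of_nonneg hp0]
    gcongr
    nlinarith
  · unfold stphi
    rw [hf, hr]
    rw [show w * (-Nr a b * psi w) + (0 - Nr a b) = -(Nr a b * (w * psi w + 1)) by ring, abs_neg,
      abs_mul, abs_of_nonneg hN0]
    gcongr
    refine (abs_add_le _ _).trans ?_
    rw [abs_mul, abs_of_nonneg hp0, abs_one]
    nlinarith
  · have h1 := hC a ha Z (by linarith) (by linarith)
    have h2 := hC a ha (1 + a) (by linarith) (by linarith)
    have h3 : (1 + a) ≤ 3 * (a + 2) := by linarith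
    have h5 := hC a ha (a + 2) (by linarith) (by linarith)
    set e := Real.exp (-(3 * a ^ 2 / 8)) with hee
    have he0 : 0 < e := Real.exp_pos _
    have h6 : Z ^ 4 * (1 + a) ≤ (a + 2) ^ 5 := by
      have : Z ^ 4 ≤ (a + 2) ^ 4 := pow_le_pow_left₀ (by linarith) (by linarith) _
      calc Z ^ 4 * (1 + a) ≤ (a + 2) ^ 4 * (a + 2) :=
          mul_le_mul this (by linarith) (by linarith) (by positivity)
        _ = _ := by ring
    have h7 : (1 + a) * e ≤ C0 * (Z ^ 4)⁻¹ := by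
      rw [← div_eq_mul_inv, le_div_iff₀ (by positivity)]
      calc (1 + a) * e * Z ^ 4 = (Z ^ 4 * (1 + a)) * e := by ring
        _ ≤ (a + 2) ^ 5 * e := by gcongr
        _ ≤ C0 := h5
    calc Nr a b * ((1 + a) * (9 * E)) ≤ 9 * Real.exp (-a ^ 2 / 2) * ((1 + a) * (9 * E)) := by gcongr
      _ = 81 * ((1 + a) * (Real.exp (-a ^ 2 / 2) * E)) := by ring
      _ = 81 * ((1 + a) * e) := by rw [hEE]
      _ ≤ 81 * (C0 * (Z ^ 4)⁻¹) := by gcongr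
      _ ≤ _ := by nlinarith [mul_pos hC0 hZ4]

noncomputable def indIcc (a b w : ℝ) : ℝ := (Set.Icc a b).indicator (fun _ => (1:ℝ)) w
lemma indIcc_nonneg (a b w : ℝ) : 0 ≤ indIcc a b w := Set.indicator_nonneg (fun _ _ => zero_le_one) _
lemma indIcc_le_one (c d w : ℝ) : indIcc c d w ≤ 1 := by
  unfold indIcc; simp only [Set.indicator]; split_ifs <;> norm_num
lemma indIcc_meas (a b : ℝ) : Measurable (indIcc a b) := measurable_const.indicator measurableSet_Icc

lemma indIcc_ii (a b x y : ℝ) : IntervalIntegrable (indIcc a b) volume x y := by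
  refine (intervalIntegrable_const (c := (1:ℝ))).mono_fun (indIcc_meas a b).aestronglyMeasurable
    (Filter.Eventually.of_forall fun t => ?_)
  simp only [Real.norm_eq_abs, abs_of_nonneg (indIcc_nonneg a b t), abs_one]
  exact indIcc_le_one _ _ _

lemma ramp_sub {a b : ℝ} (hab : a < b) (x y : ℝ) :
    ramp a b x - ramp a b y = (x - y) * ∫ t in (0:ℝ)..1, (b - a)⁻¹ * indIcc a b (y + (x - y) * t) := by
  have h1 : ∫ t in y..x, (b - a)⁻¹ * indIcc a b t = ramp a b x - ramp a b y := by
    refine integral_eq_of_hasDerivAt_off_countable (ramp a b) _ (s := {a, b}) (Set.to_countable _)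
      (ramp_cont a b).continuousOn (fun t ht => ?_) ((indIcc_ii a b y x).const_mul _)
    have hta : t ≠ a := fun h => ht.2 (by simp [h])
    have htb : t ≠ b := fun h => ht.2 (by simp [h])
    rcases lt_or_gt_of_ne hta with h | h
    · have : indIcc a b t = 0 := by simp [indIcc, h]
      rw [this, mul_zero]
      refine (hasDerivAt_const t (0:ℝ)).congr_of_eventuallyEq ?_
      filter_upwards [Iio_mem_nhds h] with s hs
      exact ramp_left hab (le_of_lt hs)
    rcases lt_or_gt_of_ne htb with h' | h'
    · have : indIcc a b t = 1 := by simp [indIcc, h.le, h'.le]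
      rw [this, mul_one]
      have h2 : HasDerivAt (fun s => (s - a) / (b - a)) ((b - a)⁻¹) t :=
        (((hasDerivAt_id t).sub_const a).div_const (b - a)).congr_deriv (by simp)
      refine h2.congr_of_eventuallyEq ?_
      filter_upwards [Ioo_mem_nhds h h'] with s hs
      unfold ramp
      have hba : 0 < b - a := by linarith
      rw [min_eq_right, max_eq_right]
      · exact div_nonneg (by linarith [hs.1]) hba.le
      · rw [div_le_one hba]; linarith [hs.2]
    · have : indIcc a b t = 0 := by simp [indIcc, h']
      rw [this, mul_zero]
      refine (hasDerivAt_const t (1:ℝ)).congr_of_eventuallyEq ?_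
      filter_upwards [Ioi_mem_nhds h'] with s hs
      exact ramp_right hab (le_of_lt hs)
  rw [← h1]
  have := intervalIntegral.mul_integral_comp_add_mul (a := 0) (b := 1)
    (f := fun t => (b - a)⁻¹ * indIcc a b t) (x - y) y
  rw [this]; simp

set_option linter.unusedVariables false
set_option linter.unusedSectionVars false

/-- bounded measurable -/
def BdM {Ω : Type} [MeasurableSpace Ω] (f : Ω → ℝ) : Prop := Measurable f ∧ ∃ K : ℝ, ∀ ω, |f ω| ≤ K

section BdMsec
variable {Ω : Type} [MeasurableSpace Ω] {f g : Ω → ℝ}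

lemma BdM.const (c : ℝ) : BdM (fun _ : Ω => c) := ⟨measurable_const, |c|, fun _ => le_rfl⟩
lemma BdM.add (hf : BdM f) (hg : BdM g) : BdM (fun ω => f ω + g ω) := by
  obtain ⟨h1, K, hK⟩ := hf
  obtain ⟨h2, L, hL⟩ := hg
  exact ⟨h1.add h2, K + L, fun ω => (abs_add_le _ _).trans (add_le_add (hK ω) (hL ω))⟩
lemma BdM.neg (hf : BdM f) : BdM (fun ω => - f ω) := by
  obtain ⟨h1, K, hK⟩ := hf
  exact ⟨h1.neg, K, fun ω => by rw [abs_neg]; exact hK ω⟩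
lemma BdM.sub (hf : BdM f) (hg : BdM g) : BdM (fun ω => f ω - g ω) := by
  simpa [sub_eq_add_neg] using hf.add hg.neg
lemma BdM.mul (hf : BdM f) (hg : BdM g) : BdM (fun ω => f ω * g ω) := by
  obtain ⟨h1, K, hK⟩ := hf
  obtain ⟨h2, L, hL⟩ := hg
  refine ⟨h1.mul h2, K * L, fun ω => ?_⟩
  rw [abs_mul]
  exact mul_le_mul (hK ω) (hL ω) (abs_nonneg _) ((abs_nonneg _).trans (hK ω))
lemma BdM.abs (hf : BdM f) : BdM (fun ω => |f ω|) := by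
  obtain ⟨h1, K, hK⟩ := hf
  exact ⟨h1.abs, K, fun ω => by rw [abs_abs]; exact hK ω⟩
lemma BdM.pow (hf : BdM f) (n : ℕ) : BdM (fun ω => f ω ^ n) := by
  induction n with
  | zero => simpa using BdM.const 1
  | succ n ih => simpa [pow_succ] using ih.mul hf
lemma BdM.sum {ι : Type} (s : Finset ι) {F : ι → Ω → ℝ} (h : ∀ i ∈ s, BdM (F i)) :
    BdM (fun ω => ∑ i ∈ s, F i ω) := by
  classical
  induction s using Finset.induction_on with
  | empty => simpa using BdM.const 0
  | insert a s ha ih =>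
    simp only [Finset.sum_insert ha]
    exact (h a (by simp)).add (ih fun i hi => h i (by simp [hi]))
lemma BdM.comp_cont (hf : BdM f) {φ : ℝ → ℝ} (hφ : Continuous φ) : BdM (fun ω => φ (f ω)) := by
  obtain ⟨h1, K, hK⟩ := hf
  obtain ⟨L, hL⟩ := (isCompact_Icc (a := -K) (b := K)).exists_bound_of_continuousOn hφ.continuousOn
  exact ⟨hφ.measurable.comp h1, L, fun ω => hL _ (abs_le.1 (hK ω))⟩
lemma BdM.comp_bd (hf : Measurable f) {φ : ℝ → ℝ} (hφ : Measurable φ) {K : ℝ} (hK : ∀ x, |φ x| ≤ K) :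
    BdM (fun ω => φ (f ω)) := ⟨hφ.comp hf, K, fun ω => hK _⟩
lemma BdM.indI (hf : Measurable f) (c : ℝ) : BdM (fun ω => indI c (f ω)) :=
  BdM.comp_bd hf (indI_meas c) (K := 1) fun x => by
    rw [abs_of_nonneg (indI_nonneg _ _)]; exact indI_le_one _ _
lemma BdM.indIcc (hf : Measurable f) (c d : ℝ) : BdM (fun ω => indIcc c d (f ω)) :=
  BdM.comp_bd hf (indIcc_meas c d) (K := 1) fun x => by
    rw [abs_of_nonneg (indIcc_nonneg _ _ _)]; exact indIcc_le_one _ _ _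
lemma BdM.int (hf : BdM f) {μ : Measure Ω} [IsFiniteMeasure μ] : Integrable f μ := by
  obtain ⟨h1, K, hK⟩ := hf
  exact Integrable.of_bound h1.aestronglyMeasurable K (Filter.Eventually.of_forall hK)

lemma fub {μ : Measure Ω} [IsProbabilityMeasure μ] {F : ℝ → Ω → ℝ} {a b : ℝ} (hab : a ≤ b)
    (hF : Measurable (fun q : ℝ × Ω => F q.1 q.2)) {K : ℝ} (hK : ∀ t ω, |F t ω| ≤ K) :
    ∫ ω, (∫ t in a..b, F t ω) ∂μ = ∫ t in a..b, ∫ ω, F t ω ∂μ := by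
  simp only [intervalIntegral.integral_of_le hab]
  refine (integral_integral_swap ?_).symm
  refine Integrable.of_bound (C := K) hF.aestronglyMeasurable (Filter.Eventually.of_forall fun q => hK _ _)

lemma imono {μ : Measure Ω} [IsProbabilityMeasure μ] (hf : BdM f) (hg : BdM g) (h : ∀ ω, f ω ≤ g ω) :
    ∫ ω, f ω ∂μ ≤ ∫ ω, g ω ∂μ := integral_mono hf.int hg.int h
end BdMsec

lemma indep_mul {Ω : Type} {m1 m2 : MeasurableSpace Ω} [m0 : MeasurableSpace Ω] {μ : Measure Ω}
    {f g : Ω → ℝ}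
    (h : Indep m1 m2 μ) (hm1 : m1 ≤ m0) (hm2 : m2 ≤ m0)
    (hf : Measurable[m1] f) (hg : Measurable[m2] g) :
    ∫ ω, f ω * g ω ∂μ = (∫ ω, f ω ∂μ) * ∫ ω, g ω ∂μ := by
  have : IndepFun f g μ := by
    rw [IndepFun_iff_Indep]
    exact indep_of_indep_of_le_left (indep_of_indep_of_le_right h hg.comap_le) hf.comap_le
  exact this.integral_fun_mul_eq_mul_integral (hf.mono hm1 le_rfl).aestronglyMeasurable
    (hg.mono hm2 le_rfl).aestronglyMeasurable


@[reducible] def sgm {Ω ι : Type} (X : ι → Ω → ℝ) (S : Set ι) : MeasurableSpace Ω :=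
  ⨆ j ∈ S, MeasurableSpace.comap (X j) inferInstance

section sgmsec
variable {Ω ι : Type} {X : ι → Ω → ℝ} {S T : Set ι}
lemma sgm_mono (h : S ⊆ T) : sgm X S ≤ sgm X T := biSup_mono h
lemma sgm_le [m0 : MeasurableSpace Ω] (h : ∀ i, Measurable (X i)) : sgm X S ≤ m0 :=
  iSup₂_le fun j _ => (h j).comap_le
lemma sgm_meas {j : ι} (h : j ∈ S) : Measurable[sgm X S] (X j) := by
  rw [measurable_iff_comap_le]
  exact le_iSup₂_of_le j h le_rfl
lemma sgm_sum {F : Finset ι} (h : ∀ j ∈ F, j ∈ S) : Measurable[sgm X S] (fun ω => ∑ j ∈ F, X j ω) :=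
  Finset.measurable_sum F fun j hj => sgm_meas (h j hj)
end sgmsec

structure LD {Ω ι : Type} [MeasurableSpace Ω] [Fintype ι] [DecidableEq ι] (μ : Measure Ω)
    (X : ι → Ω → ℝ) (A B C : ι → Finset ι) (κ τ : ℝ) : Prop where
  meas : ∀ i, Measurable (X i)
  bdd : ∀ i ω, |X i ω| ≤ τ
  mean : ∀ i, ∫ ω, X i ω ∂μ = 0
  memA : ∀ i, i ∈ A i
  AB : ∀ i, A i ⊆ B i
  BC : ∀ i, B i ⊆ C i
  cardC : ∀ i, ((C i).card : ℝ) ≤ κ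
  cardC' : ∀ i, ((Finset.univ.filter fun j => i ∈ C j).card : ℝ) ≤ κ
  J1 : ∀ i, Indep (sgm X {i}) (sgm X {j | j ∉ A i}) μ
  J2 : ∀ i, Indep (sgm X {j | j ∈ A i}) (sgm X {j | ∃ l, l ∉ B i ∧ j ∈ A l}) μ
  J3 : ∀ i, Indep (sgm X {j | j ∈ B i}) (sgm X {j | ∃ l, l ∉ C i ∧ j ∈ A l}) μ
  J4 : ∀ i l, l ∉ C i → Indep (sgm X {l}) (sgm X {j | j ∉ A l ∨ j ∈ B i}) μ

lemma amgm3 {a b c : ℝ} (ha : 0 ≤ a) (hb : 0 ≤ b) (hc : 0 ≤ c) : a * b * c ≤ (a ^ 3 + b ^ 3 + c ^ 3) / 3 := by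
  nlinarith [mul_nonneg (add_nonneg (add_nonneg ha hb) hc) (add_nonneg (add_nonneg (sq_nonneg (a - b)) (sq_nonneg (b - c))) (sq_nonneg (a - c)))]

section count
variable {ι : Type} [Fintype ι] [DecidableEq ι] {C : ι → Finset ι} {κ : ℝ}

lemma count_fwd (h1 : ∀ i, ((C i).card : ℝ) ≤ κ) {y : ι → ℝ} (hy : ∀ i, 0 ≤ y i) :
    ∑ i, ∑ _j ∈ C i, y i ≤ κ * ∑ i, y i := by
  rw [Finset.mul_sum]
  refine Finset.sum_le_sum fun i _ => ?_
  rw [Finset.sum_const, nsmul_eq_mul]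
  exact mul_le_mul_of_nonneg_right (h1 i) (hy i)

lemma count_bwd (h2 : ∀ i, ((Finset.univ.filter fun j => i ∈ C j).card : ℝ) ≤ κ) {y : ι → ℝ}
    (hy : ∀ i, 0 ≤ y i) : ∑ i, ∑ j ∈ C i, y j ≤ κ * ∑ i, y i := by
  have : ∑ i, ∑ j ∈ C i, y j = ∑ j, ∑ i ∈ Finset.univ.filter (fun i => j ∈ C i), y j := by
    rw [Finset.sum_comm' (t' := Finset.univ) (s' := fun j => Finset.univ.filter (fun i => j ∈ C i))]
    simp
  rw [this, Finset.mul_sum]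
  refine Finset.sum_le_sum fun i _ => ?_
  rw [Finset.sum_const, nsmul_eq_mul]
  exact mul_le_mul_of_nonneg_right (h2 i) (hy i)

lemma count3 (hκ : 0 ≤ κ) (h1 : ∀ i, ((C i).card : ℝ) ≤ κ)
    (h2 : ∀ i, ((Finset.univ.filter fun j => i ∈ C j).card : ℝ) ≤ κ)
    {x e : ι → ℝ} (hx : ∀ i, 0 ≤ x i) (he : ∀ i, 0 ≤ e i) :
    ∑ i, x i * (∑ j ∈ C i, x j) * (∑ k ∈ C i, e k) ≤ κ ^ 2 * ((2 * ∑ i, x i ^ 3 + ∑ i, e i ^ 3) / 3) := by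
  have hx3 : ∀ i, 0 ≤ x i ^ 3 := fun i => pow_nonneg (hx i) 3
  have he3 : ∀ i, 0 ≤ e i ^ 3 := fun i => pow_nonneg (he i) 3
  have step : ∀ i, x i * (∑ j ∈ C i, x j) * (∑ k ∈ C i, e k) ≤
      κ * ((∑ _j ∈ C i, x i ^ 3) + (∑ j ∈ C i, x j ^ 3) + ∑ k ∈ C i, e k ^ 3) / 3 := by
    intro i
    have : x i * (∑ j ∈ C i, x j) * (∑ k ∈ C i, e k) = ∑ j ∈ C i, ∑ k ∈ C i, x i * x j * e k := by
      rw [mul_assoc, Finset.sum_mul_sum, Finset.mul_sum]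
      refine Finset.sum_congr rfl fun j _ => ?_
      rw [Finset.mul_sum]
      exact Finset.sum_congr rfl fun k _ => by ring
    rw [this]
    calc ∑ j ∈ C i, ∑ k ∈ C i, x i * x j * e k
        ≤ ∑ j ∈ C i, ∑ k ∈ C i, (x i ^ 3 + x j ^ 3 + e k ^ 3) / 3 :=
          Finset.sum_le_sum fun j _ => Finset.sum_le_sum fun k _ => amgm3 (hx i) (hx j) (he k)
      _ = (C i).card * ((∑ _j ∈ C i, x i ^ 3) + (∑ j ∈ C i, x j ^ 3) + ∑ k ∈ C i, e k ^ 3) / 3 := by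
          simp only [← Finset.sum_div, Finset.sum_add_distrib, Finset.sum_const, nsmul_eq_mul,
            ← Finset.mul_sum]
          ring
      _ ≤ _ := by
          have h0 : 0 ≤ (∑ _j ∈ C i, x i ^ 3) + (∑ j ∈ C i, x j ^ 3) + ∑ k ∈ C i, e k ^ 3 :=
            add_nonneg (add_nonneg (Finset.sum_nonneg fun j _ => hx3 i) (Finset.sum_nonneg fun j _ => hx3 j))
              (Finset.sum_nonneg fun j _ => he3 j)
          have := mul_le_mul_of_nonneg_right (h1 i) h0
          linarith
  refine (Finset.sum_le_sum fun i _ => step i).trans ?_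
  rw [← Finset.sum_div, ← Finset.mul_sum, Finset.sum_add_distrib, Finset.sum_add_distrib]
  have a1 := count_fwd h1 hx3
  have a2 := count_bwd h2 hx3
  have a3 := count_bwd h2 he3
  have := mul_le_mul_of_nonneg_left (add_le_add (add_le_add a1 a2) a3) hκ
  nlinarith

lemma count2 (h1 : ∀ i, ((C i).card : ℝ) ≤ κ)
    (h2 : ∀ i, ((Finset.univ.filter fun j => i ∈ C j).card : ℝ) ≤ κ)
    {x : ι → ℝ} (hx : ∀ i, 0 ≤ x i) :
    ∑ i, x i ^ 2 * (∑ j ∈ C i, x j) ≤ κ * ∑ i, x i ^ 3 := by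
  have hx3 : ∀ i, 0 ≤ x i ^ 3 := fun i => pow_nonneg (hx i) 3
  have a1 := count_fwd h1 hx3
  have a2 := count_bwd h2 hx3
  have : ∑ i, x i ^ 2 * (∑ j ∈ C i, x j) ≤ ∑ i, ((2 * ∑ _j ∈ C i, x i ^ 3) + (∑ j ∈ C i, x j ^ 3)) / 3 := by
    refine Finset.sum_le_sum fun i _ => ?_
    rw [Finset.mul_sum, Finset.mul_sum, ← Finset.sum_add_distrib, Finset.sum_div]
    refine Finset.sum_le_sum fun j _ => ?_
    have := amgm3 (hx i) (hx i) (hx j)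
    nlinarith
  refine this.trans ?_
  rw [← Finset.sum_div, Finset.sum_add_distrib, ← Finset.mul_sum]
  linarith
end count

set_option linter.unusedVariables false
set_option linter.unusedSectionVars false

def SX {Ω ι : Type} (X : ι → Ω → ℝ) (F : Finset ι) (ω : Ω) : ℝ := ∑ j ∈ F, X j ω

noncomputable def bet {Ω ι : Type} [MeasurableSpace Ω] [Fintype ι] (μ : Measure Ω) (X : ι → Ω → ℝ) : ℝ :=
  ∑ i, ∫ ω, |X i ω| ^ 3 ∂μ

lemma jensen3 {Ω : Type} [MeasurableSpace Ω] {μ : Measure Ω} [IsProbabilityMeasure μ] {f : Ω → ℝ} (hf : BdM f) :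
    (∫ ω, |f ω| ∂μ) ^ 3 ≤ ∫ ω, |f ω| ^ 3 ∂μ := by
  set e := ∫ ω, |f ω| ∂μ with he
  have he0 : 0 ≤ e := integral_nonneg fun ω => abs_nonneg _
  have h1 : ∫ ω, (3 * e ^ 2 * |f ω| - 2 * e ^ 3) ∂μ ≤ ∫ ω, |f ω| ^ 3 ∂μ := by
    refine imono (((BdM.const _).mul hf.abs).sub (BdM.const _)) (hf.abs.pow 3) fun ω => ?_
    have := amgm3 (abs_nonneg (f ω)) he0 he0
    nlinarith
  rw [integral_sub (((BdM.const _).mul hf.abs).int) (BdM.const _).int, integral_const_mul, ← he] at h1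
  simp at h1
  nlinarith

section
variable {Ω ι : Type} [MeasurableSpace Ω] [Fintype ι] [DecidableEq ι] {μ : Measure Ω} [IsProbabilityMeasure μ]
    {X : ι → Ω → ℝ} {A B C : ι → Finset ι} {κ τ : ℝ}

lemma SX_compl (F : Finset ι) (ω : Ω) : SX X Finset.univ ω - SX X F ω = SX X Fᶜ ω := by
  unfold SX; rw [← Finset.sum_compl_add_sum F]; ring

lemma abs_SX_le (F : Finset ι) (ω : Ω) : |SX X F ω| ≤ ∑ j ∈ F, |X j ω| := Finset.abs_sum_le_sum_abs _ _

lemma SX_sgm {F : Finset ι} {S : Set ι} (h : ∀ j ∈ F, j ∈ S) : Measurable[sgm X S] (SX X F) := sgm_sum h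

namespace LD
variable (h : LD μ X A B C κ τ)
include h

lemma xb (i : ι) : BdM (X i) := ⟨h.meas i, τ, h.bdd i⟩
lemma sb (F : Finset ι) : BdM (SX X F) := BdM.sum F fun i _ => h.xb i
lemma AC (i : ι) : A i ⊆ C i := (h.AB i).trans (h.BC i)
lemma κ1 (i : ι) : 1 ≤ κ := by
  refine le_trans ?_ (h.cardC i)
  exact_mod_cast Finset.card_pos.2 ⟨i, h.AC i (h.memA i)⟩
lemma τ0 (i : ι) : 0 ≤ τ := by
  have : Nonempty Ω := nonempty_of_isProbabilityMeasure μ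
  obtain ⟨ω⟩ := this
  exact (abs_nonneg _).trans (h.bdd i ω)
lemma le_sum_C {i : ι} {F : Finset ι} (hF : F ⊆ C i) (ω : Ω) : |SX X F ω| ≤ ∑ j ∈ C i, |X j ω| :=
  (abs_SX_le F ω).trans (Finset.sum_le_sum_of_subset_of_nonneg hF fun _ _ _ => abs_nonneg _)
lemma sum_C_le (i : ι) (ω : Ω) : ∑ j ∈ C i, |X j ω| ≤ κ * τ := by
  calc ∑ j ∈ C i, |X j ω| ≤ ∑ j ∈ C i, τ := Finset.sum_le_sum fun j _ => h.bdd j ω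
    _ = (C i).card * τ := by simp
    _ ≤ κ * τ := mul_le_mul_of_nonneg_right (h.cardC i) (h.τ0 i)
lemma SX_le {i : ι} {F : Finset ι} (hF : F ⊆ C i) (ω : Ω) : |SX X F ω| ≤ κ * τ :=
  (h.le_sum_C hF ω).trans (h.sum_C_le i ω)
lemma ab (i : ι) : BdM (fun ω => ∑ j ∈ C i, |X j ω|) := BdM.sum _ fun j _ => (h.xb j).abs

lemma XA_zero (i : ι) {g : Ω → ℝ} (hg : Measurable[sgm X {j | j ∉ A i}] g) : ∫ ω, X i ω * g ω ∂μ = 0 := by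
  rw [indep_mul (h.J1 i) (sgm_le h.meas) (sgm_le h.meas) (sgm_meas (by simp)) hg, h.mean i, zero_mul]

lemma sig : ∑ i, ∫ ω, X i ω * SX X (A i) ω ∂μ = ∫ ω, SX X Finset.univ ω ^ 2 ∂μ := by
  have h1 : ∀ ω, SX X Finset.univ ω ^ 2 = ∑ i, X i ω * SX X Finset.univ ω := fun ω => by
    rw [← Finset.sum_mul, sq]; rfl
  simp only [h1]
  rw [integral_finsetSum _ fun i _ => ((h.xb i).mul (h.sb _)).int]
  refine Finset.sum_congr rfl fun i _ => ?_
  have h2 : ∀ ω, X i ω * SX X Finset.univ ω = X i ω * SX X (A i) ω + X i ω * SX X (A i)ᶜ ω := fun ω => by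
    rw [← SX_compl]; ring
  simp only [h2]
  rw [integral_add ((h.xb i).mul (h.sb _)).int ((h.xb i).mul (h.sb _)).int, h.XA_zero i (g := SX X (A i)ᶜ) (SX_sgm (by simp)), add_zero]

lemma m3 {F H : ι → Finset ι} (hF : ∀ i, F i ⊆ C i) (hH : ∀ i, H i ⊆ C i) (hκ : 0 ≤ κ) :
    ∑ i, ∫ ω, |X i ω * SX X (F i) ω| * |SX X (H i) ω| ∂μ ≤ κ ^ 2 * bet μ X := by
  have hb : ∀ i, BdM (fun ω => |X i ω * SX X (F i) ω| * |SX X (H i) ω|) := fun i =>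
    (((h.xb i).mul (h.sb _)).abs).mul (h.sb _).abs
  rw [← integral_finsetSum _ fun i _ => (hb i).int]
  unfold bet
  rw [← integral_finsetSum _ fun i _ => ((h.xb i).abs.pow 3).int, ← integral_const_mul]
  refine imono (BdM.sum _ fun i _ => hb i) ((BdM.const _).mul (BdM.sum _ fun i _ => (h.xb i).abs.pow 3)) fun ω => ?_
  have := count3 hκ h.cardC h.cardC' (x := fun i => |X i ω|) (e := fun i => |X i ω|) (fun i => abs_nonneg _)
    (fun i => abs_nonneg _)
  refine le_trans (Finset.sum_le_sum fun i _ => ?_) (this.trans (le_of_eq (by ring)))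
  rw [abs_mul]
  have a1 := h.le_sum_C (hF i) ω
  have a2 := h.le_sum_C (hH i) ω
  gcongr

lemma m3' {F H : ι → Finset ι} (hF : ∀ i, F i ⊆ C i) (hH : ∀ i, H i ⊆ C i) (hκ : 0 ≤ κ) :
    ∑ i, (∫ ω, |X i ω * SX X (F i) ω| ∂μ) * ∫ ω, |SX X (H i) ω| ∂μ ≤ κ ^ 2 * bet μ X := by
  set e : ι → ℝ := fun i => ∫ ω, |X i ω| ∂μ with he
  have he0 : ∀ i, 0 ≤ e i := fun i => integral_nonneg fun ω => abs_nonneg _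
  have h1 : ∀ i, ∫ ω, |SX X (H i) ω| ∂μ ≤ ∑ k ∈ C i, e k := fun i => by
    rw [he, ← integral_finsetSum _ fun i _ => (h.xb i).abs.int]
    exact imono (h.sb _).abs (h.ab i) fun ω => h.le_sum_C (hH i) ω
  have h2 : ∑ i, (∫ ω, |X i ω * SX X (F i) ω| ∂μ) * ∫ ω, |SX X (H i) ω| ∂μ ≤
      ∑ i, ∫ ω, |X i ω| * (∑ j ∈ C i, |X j ω|) * ∑ k ∈ C i, e k ∂μ := by
    refine Finset.sum_le_sum fun i _ => ?_
    rw [integral_mul_const]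
    refine mul_le_mul (imono ((h.xb i).mul (h.sb _)).abs ((h.xb i).abs.mul (h.ab i)) fun ω => ?_) (h1 i)
      (integral_nonneg fun ω => abs_nonneg _) (integral_nonneg fun ω => mul_nonneg (abs_nonneg _) (Finset.sum_nonneg fun j _ => abs_nonneg _))
    rw [abs_mul]
    have a1 := h.le_sum_C (hF i) ω
    gcongr
  refine h2.trans ?_
  have hb : ∀ i, BdM (fun ω => |X i ω| * (∑ j ∈ C i, |X j ω|) * ∑ k ∈ C i, e k) := fun i =>
    ((h.xb i).abs.mul (h.ab i)).mul (BdM.const _)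
  rw [← integral_finsetSum _ fun i _ => (hb i).int]
  have hs : BdM (fun ω => ∑ i, |X i ω| ^ 3) := BdM.sum _ fun i _ => (h.xb i).abs.pow 3
  calc ∫ ω, ∑ i, |X i ω| * (∑ j ∈ C i, |X j ω|) * ∑ k ∈ C i, e k ∂μ
      ≤ ∫ ω, κ ^ 2 / 3 * (2 * ∑ i, |X i ω| ^ 3) + κ ^ 2 / 3 * ∑ i, e i ^ 3 ∂μ := by
        refine imono (BdM.sum _ fun i _ => hb i)
          (((BdM.const _).mul ((BdM.const _).mul hs)).add (BdM.const _)) fun ω => ?_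
        refine (count3 hκ h.cardC h.cardC' (x := fun i => |X i ω|) (e := e) (fun i => abs_nonneg _) he0).trans
          (le_of_eq (by ring))
    _ = κ ^ 2 / 3 * (2 * bet μ X) + κ ^ 2 / 3 * ∑ i, e i ^ 3 := by
        rw [integral_add ((BdM.const _).mul ((BdM.const _).mul hs)).int (BdM.const _).int, integral_const_mul,
          integral_const_mul, integral_finsetSum _ fun i _ => ((h.xb i).abs.pow 3).int]
        simp [bet]
    _ ≤ κ ^ 2 / 3 * (2 * bet μ X) + κ ^ 2 / 3 * bet μ X := by
        gcongr
        exact Finset.sum_le_sum fun i _ => jensen3 (h.xb i)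
    _ = _ := by ring

lemma m2 {F : ι → Finset ι} (hF : ∀ i, F i ⊆ C i) :
    ∑ i, ∫ ω, X i ω ^ 2 * |SX X (F i) ω| ∂μ ≤ κ * bet μ X := by
  have hb : ∀ i, BdM (fun ω => X i ω ^ 2 * |SX X (F i) ω|) := fun i => ((h.xb i).pow 2).mul (h.sb _).abs
  rw [← integral_finsetSum _ fun i _ => (hb i).int]
  unfold bet
  rw [← integral_finsetSum _ fun i _ => ((h.xb i).abs.pow 3).int, ← integral_const_mul]
  refine imono (BdM.sum _ fun i _ => hb i) ((BdM.const _).mul (BdM.sum _ fun i _ => (h.xb i).abs.pow 3)) fun ω => ?_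
  have := count2 h.cardC h.cardC' (x := fun i => |X i ω|) (fun i => abs_nonneg _)
  refine le_trans (Finset.sum_le_sum fun i _ => ?_) this
  rw [sq_abs]
  have a1 := h.le_sum_C (hF i) ω
  gcongr

end LD
end

set_option linter.unusedVariables false
set_option linter.unusedSectionVars false

section
variable {Ω ι : Type} [MeasurableSpace Ω] [Fintype ι] [DecidableEq ι] {μ : Measure Ω} [IsProbabilityMeasure μ]
    {X : ι → Ω → ℝ} {A B C : ι → Finset ι} {κ τ : ℝ}

/-- admissible weight pair for index i -/
structure Adm (X : ι → Ω → ℝ) (B : ι → Finset ι) (i : ι) (ξ : Ω → ℝ) : Prop where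
  m : Measurable[sgm X {j | j ∈ B i}] ξ
  b : BdM ξ

lemma Adm.const {i : ι} (c : ℝ) : Adm X B i (fun _ => c) := ⟨measurable_const, BdM.const c⟩
lemma Adm.mul {i : ι} {f g : Ω → ℝ} (hf : Adm X B i f) (hg : Adm X B i g) : Adm X B i (fun ω => f ω * g ω) :=
  ⟨hf.m.mul hg.m, hf.b.mul hg.b⟩
lemma Adm.add {i : ι} {f g : Ω → ℝ} (hf : Adm X B i f) (hg : Adm X B i g) : Adm X B i (fun ω => f ω + g ω) :=
  ⟨hf.m.add hg.m, hf.b.add hg.b⟩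
lemma Adm.sub {i : ι} {f g : Ω → ℝ} (hf : Adm X B i f) (hg : Adm X B i g) : Adm X B i (fun ω => f ω - g ω) :=
  ⟨hf.m.sub hg.m, hf.b.sub hg.b⟩
lemma Adm.abs {i : ι} {f : Ω → ℝ} (hf : Adm X B i f) : Adm X B i (fun ω => |f ω|) :=
  ⟨continuous_abs.measurable.comp hf.m, hf.b.abs⟩

lemma abs_int_le {f : Ω → ℝ} : |∫ ω, f ω ∂μ| ≤ ∫ ω, |f ω| ∂μ := abs_integral_le_integral_abs

namespace LD
variable (h : LD μ X A B C κ τ)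
include h

lemma adm_SX {i : ι} {F : Finset ι} (hF : F ⊆ B i) : Adm X B i (SX X F) :=
  ⟨SX_sgm fun j hj => hF hj, h.sb F⟩
lemma adm_X {i j : ι} (hj : j ∈ B i) : Adm X B i (X j) :=
  ⟨sgm_meas hj, h.xb j⟩

lemma stein {f φ : ℝ → ℝ} (hφ : Continuous φ) (hf : ∀ w, HasDerivAt f (φ w) w) {K : ℝ} (hκ : 0 ≤ κ) (hK : 0 ≤ K)
    (H : ∀ i, ∀ ξ v1 v2 : Ω → ℝ, Adm X B i ξ → Adm X B i v1 → Adm X B i v2 → (∀ ω, 0 ≤ ξ ω) →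
      (∀ ω, |v1 ω| ≤ κ * τ) → (∀ ω, |v2 ω| ≤ κ * τ) →
      ∫ ω, ξ ω * |φ (SX X Finset.univ ω - v1 ω) - φ (SX X Finset.univ ω - v2 ω)| ∂μ ≤
        K * ∫ ω, ξ ω * |v1 ω - v2 ω| ∂μ) :
    |∫ ω, SX X Finset.univ ω * f (SX X Finset.univ ω) ∂μ -
      (∫ ω, SX X Finset.univ ω ^ 2 ∂μ) * ∫ ω, φ (SX X Finset.univ ω) ∂μ| ≤ 3 * K * (κ ^ 2 * bet μ X) := by
  set W := SX X Finset.univ with hW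
  have hfc : Continuous f := continuous_iff_continuousAt.2 fun w => (hf w).continuousAt
  have hWb : BdM W := h.sb _
  -- per-index quantities
  have e1 : ∀ i, ∫ ω, X i ω * f (W ω) ∂μ = ∫ ω, X i ω * (f (W ω) - f (W ω - SX X (A i) ω)) ∂μ := by
    intro i
    have : ∫ ω, X i ω * f (W ω - SX X (A i) ω) ∂μ = 0 := by
      apply h.XA_zero i
      simp only [hW, SX_compl]
      exact hfc.measurable.comp (SX_sgm (by simp))
    simp only [mul_sub]
    rw [integral_sub ((h.xb i).mul (hWb.comp_cont hfc)).int ((h.xb i).mul ((hWb.sub (h.sb _)).comp_cont hfc)).int,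
      this, sub_zero]
  have e2 : ∀ i ω, f (W ω) - f (W ω - SX X (A i) ω) = SX X (A i) ω * ∫ s in (0:ℝ)..1, φ (W ω - SX X (A i) ω * s) := by
    intro i ω
    rw [intervalIntegral.mul_integral_comp_sub_mul, intervalIntegral.integral_eq_sub_of_hasDerivAt (fun x _ => hf x)
      (hφ.intervalIntegrable _ _)]
    simp
  have e3 : ∫ ω, W ω * f (W ω) ∂μ = ∑ i, ∫ ω, X i ω * f (W ω) ∂μ := by
    rw [← integral_finsetSum _ fun i _ => ((h.xb i).mul (hWb.comp_cont hfc)).int]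
    simp only [← Finset.sum_mul]; rfl
  rw [e3, ← h.sig, Finset.sum_mul, ← Finset.sum_sub_distrib]
  have key : ∀ i, |∫ ω, X i ω * f (W ω) ∂μ - (∫ ω, X i ω * SX X (A i) ω ∂μ) * ∫ ω, φ (W ω) ∂μ| ≤
      K * (∫ ω, |X i ω * SX X (A i) ω| * |SX X (A i) ω| ∂μ) + K * (∫ ω, |X i ω * SX X (A i) ω| * |SX X (B i) ω| ∂μ)
      + K * ((∫ ω, |X i ω * SX X (A i) ω| ∂μ) * ∫ ω, |SX X (B i) ω| ∂μ) := by
    intro i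
    set Y := SX X (A i) with hY
    set V := SX X (B i) with hV
    have hYb : BdM Y := h.sb _
    have hVb : BdM V := h.sb _
    have hXY : BdM (fun ω => X i ω * Y ω) := (h.xb i).mul hYb
    have hYA : Adm X B i Y := h.adm_SX (h.AB i)
    have hXA : Adm X B i (X i) := h.adm_X (h.AB i (h.memA i))
    have hτ := h.τ0 i
    have hξ : Adm X B i (fun ω => |X i ω * Y ω|) := (hXA.mul hYA).abs
    -- independence
    have i1 : ∫ ω, (X i ω * Y ω) * φ (W ω - V ω) ∂μ = (∫ ω, X i ω * Y ω ∂μ) * ∫ ω, φ (W ω - V ω) ∂μ := by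
      refine indep_mul (h.J2 i) (sgm_le h.meas) (sgm_le h.meas)
        ((sgm_meas (h.memA i)).mul (SX_sgm fun j hj => hj)) ?_
      simp only [hW, hV, SX_compl]
      exact hφ.measurable.comp (SX_sgm fun j hj => ⟨j, by simpa using hj, h.memA j⟩)
    have i2 : |(∫ ω, X i ω * Y ω ∂μ) * (∫ ω, φ (W ω - V ω) ∂μ) - (∫ ω, X i ω * Y ω ∂μ) * ∫ ω, φ (W ω) ∂μ| ≤
        K * ((∫ ω, |X i ω * Y ω| ∂μ) * ∫ ω, |V ω| ∂μ) := by
      rw [← mul_sub, abs_mul, ← integral_sub ((hWb.sub hVb).comp_cont hφ).int (hWb.comp_cont hφ).int]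
      have a1 := H i (fun _ => 1) V (fun _ => 0) ⟨measurable_const, BdM.const _⟩ (h.adm_SX subset_rfl)
        ⟨measurable_const, BdM.const _⟩ (fun _ => zero_le_one) (fun ω => h.SX_le (h.BC i) ω)
        (fun ω => by simpa using mul_nonneg hκ hτ)
      simp only [one_mul, sub_zero] at a1
      have a2 : |∫ ω, φ (W ω - V ω) - φ (W ω) ∂μ| ≤ K * ∫ ω, |V ω| ∂μ := abs_int_le.trans a1
      have a3 : |∫ ω, X i ω * Y ω ∂μ| ≤ ∫ ω, |X i ω * Y ω| ∂μ := abs_int_le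
      calc _ ≤ (∫ ω, |X i ω * Y ω| ∂μ) * (K * ∫ ω, |V ω| ∂μ) :=
            mul_le_mul a3 a2 (abs_nonneg _) ((abs_nonneg _).trans a3)
        _ = _ := by ring
    obtain ⟨L, hL⟩ := hYb.2
    obtain ⟨M, hM⟩ := hWb.2
    obtain ⟨N, hN⟩ := hVb.2
    obtain ⟨P, hP⟩ := hXY.2
    obtain ⟨Q, hQ⟩ := (isCompact_Icc (a := -(M + L)) (b := M + L)).exists_bound_of_continuousOn hφ.continuousOn
    obtain ⟨R, hR⟩ := ((hWb.sub hVb).comp_cont hφ).2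
    have i3 : ∫ ω, X i ω * f (W ω) ∂μ - ∫ ω, (X i ω * Y ω) * φ (W ω - V ω) ∂μ =
        ∫ ω, (∫ s in (0:ℝ)..1, (X i ω * Y ω) * (φ (W ω - Y ω * max 0 (min s 1)) - φ (W ω - V ω))) ∂μ := by
      rw [e1, ← integral_sub ((h.xb i).mul ((hWb.comp_cont hfc).sub ((hWb.sub hYb).comp_cont hfc))).int
        (hXY.mul ((hWb.sub hVb).comp_cont hφ)).int]
      congr 1; ext ω
      rw [e2, intervalIntegral.integral_const_mul, intervalIntegral.integral_sub, intervalIntegral.integral_const]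
      · have : ∫ s in (0:ℝ)..1, φ (W ω - Y ω * max 0 (min s 1)) = ∫ s in (0:ℝ)..1, φ (W ω - Y ω * s) := by
          refine intervalIntegral.integral_congr fun s hs => ?_
          rw [Set.uIcc_of_le zero_le_one] at hs
          simp only [min_eq_left hs.2, max_eq_right hs.1]
        rw [this]
        simp only [sub_zero, one_smul]; ring
      · exact Continuous.intervalIntegrable (by fun_prop) _ _
      · exact intervalIntegrable_const
    have hq : ∀ s ω, |Y ω * max 0 (min s 1)| ≤ |Y ω| := by
      intro s ω
      have c1 : 0 ≤ max 0 (min s 1) := le_max_left _ _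
      have c2 : max 0 (min s 1) ≤ 1 := max_le zero_le_one (min_le_right _ _)
      rw [abs_mul, abs_of_nonneg c1]
      exact mul_le_of_le_one_right (abs_nonneg _) c2
    have i4 : |∫ ω, X i ω * f (W ω) ∂μ - ∫ ω, (X i ω * Y ω) * φ (W ω - V ω) ∂μ| ≤
        K * (∫ ω, |X i ω * Y ω| * |Y ω| ∂μ) + K * (∫ ω, |X i ω * Y ω| * |V ω| ∂μ) := by
      rw [i3, fub zero_le_one (K := P * (Q + R))]
      · have : ∀ s ∈ Set.uIoc (0:ℝ) 1, ‖∫ ω, (X i ω * Y ω) * (φ (W ω - Y ω * max 0 (min s 1)) - φ (W ω - V ω)) ∂μ‖ ≤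
          K * (∫ ω, |X i ω * Y ω| * |Y ω| ∂μ) + K * (∫ ω, |X i ω * Y ω| * |V ω| ∂μ) := by
          intro s hs
          rw [Real.norm_eq_abs]
          refine abs_int_le.trans ?_
          simp only [abs_mul (X i _ * Y _)]
          have a1 := H i _ (fun ω => Y ω * max 0 (min s 1)) V hξ ⟨hYA.m.mul measurable_const, hYb.mul (BdM.const _)⟩
            (h.adm_SX subset_rfl) (fun _ => abs_nonneg _)
            (fun ω => (hq s ω).trans (h.SX_le (h.AC i) ω)) (fun ω => h.SX_le (h.BC i) ω)
          refine a1.trans ?_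
          rw [← mul_add, ← integral_add (hXY.abs.mul hYb.abs).int (hXY.abs.mul hVb.abs).int]
          refine mul_le_mul_of_nonneg_left (imono (hXY.abs.mul ((hYb.mul (BdM.const _)).sub hVb).abs)
            ((hXY.abs.mul hYb.abs).add (hXY.abs.mul hVb.abs)) fun ω => ?_) hK
          rw [← mul_add]
          refine mul_le_mul_of_nonneg_left ?_ (abs_nonneg _)
          exact (abs_sub _ _).trans (by have := hq s ω; linarith)
        have := intervalIntegral.norm_integral_le_of_norm_le_const this
        simpa using this
      · have := hφ.measurable
        have := hXY.1
        have := hYb.1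
        have := hWb.1
        have := hVb.1
        have hxm := h.meas i
        have hc : Measurable (fun s : ℝ => max 0 (min s 1)) := by fun_prop
        have hY2 : Measurable (fun q : ℝ × Ω => Y q.2) := by fun_prop
        have hW2 : Measurable (fun q : ℝ × Ω => W q.2) := by fun_prop
        have hV2 : Measurable (fun q : ℝ × Ω => V q.2) := by fun_prop
        have hc2 : Measurable (fun q : ℝ × Ω => max 0 (min q.1 1)) := by fun_prop
        exact ((hxm.comp measurable_snd).mul hY2).mul
          ((hφ.measurable.comp (hW2.sub (hY2.mul hc2))).sub (hφ.measurable.comp (hW2.sub hV2)))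
      · intro s ω
        rw [abs_mul]
        refine mul_le_mul (hP ω) ((abs_sub _ _).trans (add_le_add (hQ _ ?_) (hR ω))) (abs_nonneg _) ((abs_nonneg _).trans (hP ω))
        have b1 := abs_le.1 ((hq s ω).trans (hL ω))
        have b2 := abs_le.1 (hM ω)
        constructor <;> linarith [b1.1, b1.2, b2.1, b2.2]
    rw [← i1] at i2
    calc _ ≤ _ := abs_sub_le _ (∫ ω, (X i ω * Y ω) * φ (W ω - V ω) ∂μ) _
      _ ≤ _ := add_le_add i4 i2
  refine (Finset.abs_sum_le_sum_abs _ _).trans ((Finset.sum_le_sum fun i _ => key i).trans ?_)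
  rw [Finset.sum_add_distrib, Finset.sum_add_distrib, ← Finset.mul_sum, ← Finset.mul_sum, ← Finset.mul_sum]
  have c1 := h.m3 h.AC h.AC hκ
  have c2 := h.m3 h.AC h.BC hκ
  have c3 := h.m3' h.AC h.BC hκ
  have := mul_le_mul_of_nonneg_left (add_le_add (add_le_add c1 c2) c3) hK
  linarith
end LD
end

set_option linter.unusedVariables false
set_option linter.unusedSectionVars false

noncomputable def tent (y w : ℝ) : ℝ := max 0 (min (w - y / 2) (y - w))
lemma tent_cont (y : ℝ) : Continuous (tent y) := by unfold tent; fun_prop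
lemma tent_nonneg (y w : ℝ) : 0 ≤ tent y w := le_max_left _ _
lemma tent_lip (y v w : ℝ) : |tent y v - tent y w| ≤ |v - w| := by
  unfold tent
  have h1 : |max 0 (min (v - y / 2) (y - v)) - max 0 (min (w - y / 2) (y - w))| ≤
      |min (v - y / 2) (y - v) - min (w - y / 2) (y - w)| := by
    rw [max_comm 0, max_comm 0]; exact abs_max_sub_max_le_abs _ _ _
  refine h1.trans ?_
  · refine (abs_min_sub_min_le_max _ _ _ _).trans (max_le (le_of_eq ?_) (le_of_eq ?_))
    · congr 1; ring
    · rw [abs_sub_comm]; congr 1; ring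
lemma tent_le {y : ℝ} (hy : 0 < y) (w : ℝ) : tent y w ≤ y / 4 * indI (y / 2) w := by
  unfold tent
  by_cases h : y / 2 ≤ w
  · rw [indI_of_le h]
    refine max_le (by positivity) ?_
    rcases le_total w (3 * y / 4) with h | h
    · exact (min_le_left _ _).trans (by linarith)
    · exact (min_le_right _ _).trans (by linarith)
  · rw [indI_of_lt (not_le.1 h)]
    refine max_le (by simp) ((min_le_left _ _).trans (by linarith))

noncomputable def tentI (y w : ℝ) : ℝ := ∫ t in (0:ℝ)..w, tent y t
lemma tentI_deriv (y w : ℝ) : HasDerivAt (tentI y) (tent y w) w :=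
  intervalIntegral.integral_hasDerivAt_right ((tent_cont y).intervalIntegrable _ _)
    ((tent_cont y).stronglyMeasurableAtFilter _ _) (tent_cont y).continuousAt
lemma tentI_mono (y : ℝ) : Monotone (tentI y) :=
  monotone_of_deriv_nonneg (fun w => (tentI_deriv y w).differentiableAt)
    fun w => by rw [(tentI_deriv y w).deriv]; exact tent_nonneg _ _
lemma tentI_left {y w : ℝ} (hy : 0 < y) (hw : w ≤ y / 2) : tentI y w = 0 := by
  unfold tentI
  rw [intervalIntegral.integral_congr (g := fun _ => (0:ℝ))]
  · simp
  · intro t ht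
    have : t ≤ y / 2 := by
      rcases Set.mem_uIcc.1 ht with h | h
      · linarith [h.2]
      · linarith [h.2]
    exact max_eq_left ((min_le_left _ _).trans (by linarith))
lemma tentI_y {y : ℝ} (hy : 0 < y) : y ^ 2 / 32 ≤ tentI y y := by
  have h1 : tentI y y = tentI y (5 * y / 8) + (∫ t in (5 * y / 8)..(7 * y / 8), tent y t) + ∫ t in (7 * y / 8)..y, tent y t := by
    unfold tentI
    rw [intervalIntegral.integral_add_adjacent_intervals, intervalIntegral.integral_add_adjacent_intervals] <;>
    exact (tent_cont y).intervalIntegrable _ _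
  have h2 : 0 ≤ tentI y (5 * y / 8) := by
    unfold tentI; exact intervalIntegral.integral_nonneg (by linarith) fun t _ => tent_nonneg _ _
  have h3 : 0 ≤ ∫ t in (7 * y / 8)..y, tent y t := intervalIntegral.integral_nonneg (by linarith) fun t _ => tent_nonneg _ _
  have h4 : ∫ t in (5 * y / 8)..(7 * y / 8), y / 8 ≤ ∫ t in (5 * y / 8)..(7 * y / 8), tent y t := by
    refine intervalIntegral.integral_mono_on (by linarith) (by simp) ((tent_cont y).intervalIntegrable _ _) fun t ht => ?_
    exact le_max_of_le_right (le_min (by linarith [ht.1]) (by linarith [ht.2]))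
  rw [intervalIntegral.integral_const, smul_eq_mul] at h4
  nlinarith

section
variable {Ω ι : Type} [MeasurableSpace Ω] [Fintype ι] [DecidableEq ι] {μ : Measure Ω} [IsProbabilityMeasure μ]
    {X : ι → Ω → ℝ} {A B C : ι → Finset ι} {κ τ : ℝ}

namespace LD
variable (h : LD μ X A B C κ τ)
include h

lemma tail1 (hκ : 0 ≤ κ) {y : ℝ} (hy : 0 < y) : ∫ ω, indI y (SX X Finset.univ ω) ∂μ ≤
    8 / y ^ 2 * (∫ ω, SX X Finset.univ ω ^ 2 ∂μ) * (∫ ω, indI (y / 2) (SX X Finset.univ ω) ∂μ) +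
      96 * (κ ^ 2 * bet μ X) / y ^ 3 := by
  have hs := h.stein (tent_cont y) (tentI_deriv y) (K := 1) hκ zero_le_one (by
    intro i ξ v1 v2 hξ h1 h2 hξ0 _ _
    have hW := h.sb Finset.univ
    rw [one_mul]
    refine imono (hξ.b.mul (((hW.sub h1.b).comp_cont (tent_cont y)).sub ((hW.sub h2.b).comp_cont (tent_cont y))).abs)
      (hξ.b.mul (h1.b.sub h2.b).abs) fun ω => mul_le_mul_of_nonneg_left ?_ (hξ0 ω)
    refine (tent_lip _ _ _).trans (le_of_eq ?_)
    rw [abs_sub_comm]; congr 1; ring)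
  set W := SX X Finset.univ with hW
  have hWb : BdM W := h.sb _
  have hfc : Continuous (tentI y) := continuous_iff_continuousAt.2 fun w => (tentI_deriv y w).continuousAt
  set G := κ ^ 2 * bet μ X
  have a1 := (abs_le.1 hs).2
  have a2 : y ^ 3 / 32 * ∫ ω, indI y (W ω) ∂μ ≤ ∫ ω, W ω * tentI y (W ω) ∂μ := by
    rw [← integral_const_mul]
    refine imono ((BdM.const _).mul (BdM.indI hWb.1 _)) (hWb.mul (hWb.comp_cont hfc)) fun ω => ?_
    have ty := tentI_y hy
    by_cases hc : y ≤ W ω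
    · rw [indI_of_le hc]
      have := tentI_mono y hc
      nlinarith
    · rw [indI_of_lt (not_le.1 hc), mul_zero]
      rcases le_total (W ω) (y / 2) with h1 | h1
      · rw [tentI_left hy h1, mul_zero]
      · have := tentI_mono y h1
        rw [tentI_left hy le_rfl] at this
        exact mul_nonneg (by linarith) this
  have a3 : ∫ ω, tent y (W ω) ∂μ ≤ y / 4 * ∫ ω, indI (y / 2) (W ω) ∂μ := by
    rw [← integral_const_mul]
    exact imono (hWb.comp_cont (tent_cont y)) ((BdM.const _).mul (BdM.indI hWb.1 _)) fun ω => tent_le hy _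
  have s0 : 0 ≤ ∫ ω, W ω ^ 2 ∂μ := integral_nonneg fun ω => sq_nonneg _
  have a4 := mul_le_mul_of_nonneg_left a3 s0
  set P := ∫ ω, indI y (W ω) ∂μ
  set Q := ∫ ω, indI (y / 2) (W ω) ∂μ
  set s := ∫ ω, W ω ^ 2 ∂μ
  have a5 : y ^ 3 / 32 * P ≤ s * (y / 4 * Q) + 3 * G := by linarith
  have : 8 / y ^ 2 * s * Q + 96 * G / y ^ 3 = (s * (y / 4 * Q) + 3 * G) * (32 / y ^ 3) := by
    field_simp; ring
  rw [this]
  calc P = (y ^ 3 / 32 * P) * (32 / y ^ 3) := by field_simp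
    _ ≤ _ := by gcongr

lemma tail (hκ : 0 ≤ κ) {Z η : ℝ} (hZ : 1 ≤ Z) (hs : ∫ ω, SX X Finset.univ ω ^ 2 ∂μ ≤ 2)
    (hG : κ ^ 2 * bet μ X ≤ η * Z ^ 3) (hη : 0 ≤ η) {y : ℝ} (hy : Z / 16 ≤ y) :
    ∫ ω, indI y (SX X Finset.univ ω) ∂μ ≤ 10 ^ 16 * ((Z ^ 6)⁻¹ + η) := by
  have hWb : BdM (SX X Finset.univ) := h.sb _
  have h0 : ∫ ω, indI y (SX X Finset.univ ω) ∂μ ≤ ∫ ω, indI (Z / 16) (SX X Finset.univ ω) ∂μ :=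
    imono (BdM.indI hWb.1 _) (BdM.indI hWb.1 _) fun ω => indI_mono fun hh => by linarith
  refine h0.trans ?_
  set s := ∫ ω, SX X Finset.univ ω ^ 2 ∂μ
  set G := κ ^ 2 * bet μ X
  have t1 := h.tail1 hκ (y := Z / 16) (by positivity)
  have t2 := h.tail1 hκ (y := Z / 16 / 2) (by positivity)
  have t3 := h.tail1 hκ (y := Z / 16 / 2 / 2) (by positivity)
  have t4 : ∫ ω, indI (Z / 16 / 2 / 2 / 2) (SX X Finset.univ ω) ∂μ ≤ 1 := by
    have : ∫ ω, indI (Z / 16 / 2 / 2 / 2) (SX X Finset.univ ω) ∂μ ≤ ∫ ω, (1:ℝ) ∂μ :=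
      imono (BdM.indI hWb.1 _) (BdM.const _) fun ω => indI_le_one _ _
    simpa using this
  have n1 : 0 ≤ ∫ ω, indI (Z / 16 / 2) (SX X Finset.univ ω) ∂μ := integral_nonneg fun ω => indI_nonneg _ _
  have n2 : 0 ≤ ∫ ω, indI (Z / 16 / 2 / 2) (SX X Finset.univ ω) ∂μ := integral_nonneg fun ω => indI_nonneg _ _
  have n3 : 0 ≤ ∫ ω, indI (Z / 16 / 2 / 2 / 2) (SX X Finset.univ ω) ∂μ := integral_nonneg fun ω => indI_nonneg _ _
  set P1 := ∫ ω, indI (Z / 16) (SX X Finset.univ ω) ∂μ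
  set P2 := ∫ ω, indI (Z / 16 / 2) (SX X Finset.univ ω) ∂μ
  set P3 := ∫ ω, indI (Z / 16 / 2 / 2) (SX X Finset.univ ω) ∂μ
  set P4 := ∫ ω, indI (Z / 16 / 2 / 2 / 2) (SX X Finset.univ ω) ∂μ
  set q := (Z ^ 2)⁻¹ with hq
  have hq0 : 0 < q := by positivity
  have hq1 : q ≤ 1 := inv_le_one_of_one_le₀ (one_le_pow₀ hZ)
  have gen : ∀ c : ℝ, 0 < c → ∀ P Q : ℝ, 0 ≤ Q → P ≤ 8 / (Z / c) ^ 2 * s * Q + 96 * G / (Z / c) ^ 3 →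
      P ≤ 16 * c ^ 2 * q * Q + 96 * c ^ 3 * η := by
    intro c hc P Q hQ hP
    refine hP.trans ?_
    have e1 : 8 / (Z / c) ^ 2 * s * Q ≤ 8 / (Z / c) ^ 2 * 2 * Q := by gcongr
    have e2 : 96 * G / (Z / c) ^ 3 ≤ 96 * (η * Z ^ 3) / (Z / c) ^ 3 := by gcongr
    have e3 : 8 / (Z / c) ^ 2 * 2 * Q = 16 * c ^ 2 * q * Q := by rw [hq]; field_simp; ring
    have e4 : 96 * (η * Z ^ 3) / (Z / c) ^ 3 = 96 * c ^ 3 * η := by field_simp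
    linarith
  have r1 := gen 16 (by norm_num) _ _ n1 t1
  have r2 := gen 32 (by norm_num) P2 P3 n2 (by rw [show Z / 32 = Z / 16 / 2 by ring]; exact t2)
  have r3 := gen 64 (by norm_num) P3 P4 n3 (by rw [show Z / 64 = Z / 16 / 2 / 2 by ring]; exact t3)
  have z6 : (Z ^ 6)⁻¹ = q * (q * q) := by rw [hq]; field_simp
  rw [z6]
  have u3 : P3 ≤ 65536 * q + 96 * 64 ^ 3 * η := by
    have := mul_le_mul_of_nonneg_left t4 hq0.le
    nlinarith
  have u2 : P2 ≤ 16384 * 65536 * (q * q) + (16384 * 96 * 64 ^ 3 + 96 * 32 ^ 3) * η := by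
    have := mul_le_mul_of_nonneg_left u3 hq0.le
    have := mul_le_mul_of_nonneg_right hq1 hη
    nlinarith
  have u1 := mul_le_mul_of_nonneg_left u2 hq0.le
  have v := mul_le_mul_of_nonneg_right hq1 hη
  have : 0 < q * (q * q) := by positivity
  nlinarith
end LD
end

set_option linter.unusedVariables false
set_option linter.unusedSectionVars false

/-- signed indicator of the interval between `-y` and `0` -/
noncomputable def sK (y t : ℝ) : ℝ := if -y < t ∧ t ≤ 0 then 1 else if 0 < t ∧ t ≤ -y then -1 else 0

lemma sK_abs (y t : ℝ) : |sK y t| ≤ 1 := by unfold sK; split_ifs <;> norm_num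
lemma sK_sq_abs (y t : ℝ) : |sK y t| = sK y t ^ 2 := by unfold sK; split_ifs <;> norm_num
lemma sK_t (y t : ℝ) : |t| * |sK y t| ≤ |y| * sK y t ^ 2 := by
  rw [← sK_sq_abs]
  by_cases h : sK y t = 0
  · simp [h]
  refine mul_le_mul_of_nonneg_right ?_ (abs_nonneg _)
  unfold sK at h
  split_ifs at h with h1 h2
  · rw [abs_of_nonpos h1.2]; exact le_trans (by linarith [h1.1]) (le_abs_self y)
  · rw [abs_of_pos h2.1]; exact le_trans (by linarith [h2.2]) (neg_le_abs y)
  · simp at h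
lemma sK_meas : Measurable (fun q : ℝ × ℝ => sK q.1 q.2) := by
  unfold sK
  refine Measurable.ite ?_ measurable_const (Measurable.ite ?_ measurable_const measurable_const)
  · exact (measurableSet_lt measurable_fst.neg measurable_snd).inter (measurableSet_le measurable_snd measurable_const)
  · exact (measurableSet_lt measurable_const measurable_snd).inter (measurableSet_le measurable_snd measurable_fst.neg)

lemma sK_int {y R : ℝ} (hy : |y| ≤ R) (g : ℝ → ℝ) :
    ∫ t in (-R)..R, g t * sK y t = ∫ t in (-y)..0, g t := by
  have hR : 0 ≤ R := (abs_nonneg _).trans hy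
  have hy' := abs_le.1 hy
  rw [intervalIntegral.integral_of_le (by linarith)]
  rcases le_total 0 y with h0 | h0
  · have e : (fun t => g t * sK y t) = (Set.Ioc (-y) 0).indicator g := by
      ext t
      simp only [Set.indicator, Set.mem_Ioc, sK]
      by_cases h : -y < t ∧ t ≤ 0
      · simp [h]
      · have : ¬ (0 < t ∧ t ≤ -y) := fun hh => by linarith [hh.1, hh.2]
        simp [h, this]
    rw [e, setIntegral_indicator measurableSet_Ioc, Set.inter_eq_self_of_subset_right
      (Set.Ioc_subset_Ioc (by linarith) (by linarith)), intervalIntegral.integral_of_le (by linarith)]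
  · have e : (fun t => g t * sK y t) = fun t => -(Set.Ioc 0 (-y)).indicator g t := by
      ext t
      simp only [Set.indicator, Set.mem_Ioc, sK]
      have : ¬ (-y < t ∧ t ≤ 0) := fun hh => by linarith [hh.1, hh.2]
      by_cases h : 0 < t ∧ t ≤ -y
      · simp [h, this]
      · simp [h, this]
    rw [e, integral_neg, setIntegral_indicator measurableSet_Ioc, Set.inter_eq_self_of_subset_right
      (Set.Ioc_subset_Ioc (by linarith) (by linarith)), intervalIntegral.integral_of_ge (by linarith)]

lemma sK_int_sq {y R : ℝ} (hy : |y| ≤ R) : ∫ t in (-R)..R, sK y t ^ 2 = |y| := by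
  rcases le_total 0 y with h0 | h0
  · have : ∀ t, sK y t ^ 2 = 1 * sK y t := fun t => by
      unfold sK
      have : ¬ (0 < t ∧ t ≤ -y) := fun hh => by linarith [hh.1, hh.2]
      simp [this]
    simp only [this]
    rw [sK_int hy (fun _ => 1)]
    simp [abs_of_nonneg h0]
  · have : ∀ t, sK y t ^ 2 = (-1) * sK y t := fun t => by
      unfold sK
      have : ¬ (-y < t ∧ t ≤ 0) := fun hh => by linarith [hh.1, hh.2]
      rw [if_neg this]
      split_ifs <;> norm_num
    simp only [this]
    rw [sK_int hy (fun _ => -1)]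
    simp [abs_of_nonpos h0]

lemma indIcc_of {a b w : ℝ} (h : a ≤ w ∧ w ≤ b) : indIcc a b w = 1 := by
  unfold indIcc; simp [Set.indicator, h]
lemma indIcc_not {a b w : ℝ} (h : ¬ (a ≤ w ∧ w ≤ b)) : indIcc a b w = 0 := by
  unfold indIcc; simp only [Set.indicator, Set.mem_Icc, h, if_false]

lemma indIcc_int_le {c d : ℝ} (hcd : c ≤ d) {u v : ℝ} (huv : u ≤ v) : ∫ t in u..v, indIcc c d t ≤ d - c := by
  rw [intervalIntegral.integral_of_le huv]
  unfold indIcc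
  rw [setIntegral_indicator measurableSet_Icc, setIntegral_const, smul_eq_mul, mul_one]
  have h1 : volume.real (Set.Ioc u v ∩ Set.Icc c d) ≤ volume.real (Set.Icc c d) :=
    measureReal_mono Set.inter_subset_right (by simp)
  rwa [Real.volume_real_Icc_of_le hcd] at h1

lemma indIcc_shift (c d t w : ℝ) : indIcc c d (w + t) = indIcc (c - t) (d - t) w := by
  by_cases h : c ≤ w + t ∧ w + t ≤ d
  · rw [indIcc_of h, indIcc_of ⟨by linarith [h.1], by linarith [h.2]⟩]
  · rw [indIcc_not h, indIcc_not fun h' => h ⟨by linarith [h'.1], by linarith [h'.2]⟩]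

noncomputable def trap (x α w : ℝ) : ℝ := max 0 (min 1 (min ((w - (x - α)) / α) ((x + 2 * α - w) / α)))
section trap
variable {x α : ℝ} (hα : 0 < α)
lemma trap_cont (x α : ℝ) : Continuous (trap x α) := by unfold trap; fun_prop
lemma trap_nonneg (x α w : ℝ) : 0 ≤ trap x α w := le_max_left _ _
lemma trap_le_one (x α w : ℝ) : trap x α w ≤ 1 := max_le zero_le_one (min_le_left _ _)
include hα
lemma trap_lip (v w : ℝ) : |trap x α v - trap x α w| ≤ |v - w| / α := by
  unfold trap
  rw [max_comm 0, max_comm 0]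
  refine (abs_max_sub_max_le_abs _ _ _).trans ?_
  refine (abs_min_sub_min_le_max _ _ _ _).trans (max_le (by simp; positivity) ?_)
  refine (abs_min_sub_min_le_max _ _ _ _).trans (max_le (le_of_eq ?_) (le_of_eq ?_))
  · rw [← sub_div, abs_div, abs_of_pos hα]; congr 2; ring
  · rw [← sub_div, abs_div, abs_of_pos hα, abs_sub_comm]; congr 2; ring
lemma trap_le_ind (w : ℝ) : trap x α w ≤ indIcc (x - α) (x + 2 * α) w := by
  by_cases h : x - α ≤ w ∧ w ≤ x + 2 * α
  · rw [indIcc_of h]; exact trap_le_one _ _ _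
  · rw [indIcc_not h]
    refine max_le le_rfl ((min_le_right _ _).trans ?_)
    rcases not_and_or.1 h with h | h
    · exact (min_le_left _ _).trans (div_nonpos_of_nonpos_of_nonneg (by linarith) hα.le)
    · exact (min_le_right _ _).trans (div_nonpos_of_nonpos_of_nonneg (by linarith) hα.le)
lemma trap_ge (w : ℝ) : indIcc x (x + α) w ≤ trap x α w := by
  by_cases h : x ≤ w ∧ w ≤ x + α
  · rw [indIcc_of h]
    refine le_max_of_le_right (le_min le_rfl (le_min ?_ ?_)) <;> rw [le_div_iff₀ hα] <;> linarith [h.1, h.2]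
  · rw [indIcc_not h]; exact trap_nonneg _ _ _
lemma trap_diff (v w : ℝ) : |trap x α v - trap x α w| ≤
    |v - w| / α * (indIcc (x - α) (x + 2 * α) v + indIcc (x - α) (x + 2 * α) w) := by
  by_cases h1 : x - α ≤ v ∧ v ≤ x + 2 * α
  · rw [indIcc_of h1]
    exact (trap_lip hα v w).trans (le_mul_of_one_le_right (by positivity) (by linarith [indIcc_nonneg (x - α) (x + 2 * α) w]))
  by_cases h2 : x - α ≤ w ∧ w ≤ x + 2 * α
  · rw [indIcc_of h2]
    exact (trap_lip hα v w).trans (le_mul_of_one_le_right (by positivity) (by linarith [indIcc_nonneg (x - α) (x + 2 * α) v]))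
  have e1 := trap_le_ind (x := x) hα v
  have e2 := trap_le_ind (x := x) hα w
  rw [indIcc_not h1] at e1 ⊢
  rw [indIcc_not h2] at e2 ⊢
  rw [le_antisymm e1 (trap_nonneg _ _ _), le_antisymm e2 (trap_nonneg _ _ _)]
  simp
lemma ind3 (w : ℝ) : indIcc (x - α) (x + 2 * α) w ≤
    indIcc (x - α) (x - α + α) w + indIcc x (x + α) w + indIcc (x + α) (x + α + α) w := by
  have n1 := indIcc_nonneg (x - α) (x - α + α) w
  have n2 := indIcc_nonneg x (x + α) w
  have n3 := indIcc_nonneg (x + α) (x + α + α) w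
  by_cases h : x - α ≤ w ∧ w ≤ x + 2 * α
  · rw [indIcc_of h]
    rcases le_total w x with h1 | h1
    · rw [indIcc_of (a := x - α) ⟨h.1, by linarith⟩]; linarith
    rcases le_total w (x + α) with h2 | h2
    · rw [indIcc_of (a := x) ⟨h1, h2⟩]; linarith
    · rw [indIcc_of (a := x + α) ⟨h2, by linarith [h.2]⟩]; linarith
  · rw [indIcc_not h]; linarith
lemma trap_int_sq (T R : ℝ) (hR : 0 ≤ R) : ∫ t in (-R)..R, trap x α (T + t) ^ 2 ≤ 3 * α * indI (x - α - R) T := by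
  by_cases h : x - α - R ≤ T
  · rw [indI_of_le h]
    have h1 : ∫ t in (-R)..R, trap x α (T + t) ^ 2 ≤ ∫ t in (-R)..R, indIcc (x - α) (x + 2 * α) (T + t) := by
      refine intervalIntegral.integral_mono_on (by linarith) ?_ ?_ fun t _ => ?_
      · have := trap_cont x α
        exact Continuous.intervalIntegrable (by fun_prop) _ _
      · have := (indIcc_ii (x - α) (x + 2 * α) (T + -R) (T + R)).comp_add_left T
        simpa using this
      · have := trap_le_ind (x := x) hα (T + t)
        nlinarith [trap_nonneg x α (T + t), trap_le_one x α (T + t)]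
    rw [intervalIntegral.integral_comp_add_left (fun t => indIcc (x - α) (x + 2 * α) t) T] at h1
    have := indIcc_int_le (c := x - α) (d := x + 2 * α) (by linarith) (u := T + -R) (v := T + R) (by linarith)
    linarith
  · rw [indI_of_lt (not_le.1 h), mul_zero]
    rw [intervalIntegral.integral_congr (g := fun _ => (0:ℝ))]
    · simp
    · intro t ht
      rw [Set.uIcc_of_le (by linarith)] at ht
      have e1 := trap_le_ind (x := x) hα (T + t)
      rw [indIcc_not fun hh => h (by linarith [hh.1, ht.2])] at e1
      simp [le_antisymm e1 (trap_nonneg _ _ _)]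
end trap

noncomputable def trapI (x α w : ℝ) : ℝ := ∫ t in (x - α)..w, trap x α t
lemma trapI_deriv (x α w : ℝ) : HasDerivAt (trapI x α) (trap x α w) w :=
  intervalIntegral.integral_hasDerivAt_right ((trap_cont x α).intervalIntegrable _ _)
    ((trap_cont x α).stronglyMeasurableAtFilter _ _) (trap_cont x α).continuousAt
lemma trapI_cont (x α : ℝ) : Continuous (trapI x α) :=
  continuous_iff_continuousAt.2 fun w => (trapI_deriv x α w).continuousAt
lemma trapI_abs {x α : ℝ} (hα : 0 < α) (w : ℝ) : |trapI x α w| ≤ 3 * α * indI (x - α) w := by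
  unfold trapI
  by_cases h : x - α ≤ w
  · rw [indI_of_le h, abs_of_nonneg (intervalIntegral.integral_nonneg h fun t _ => trap_nonneg _ _ _)]
    have h1 : ∫ t in (x - α)..w, trap x α t ≤ ∫ t in (x - α)..w, indIcc (x - α) (x + 2 * α) t :=
      intervalIntegral.integral_mono_on h ((trap_cont x α).intervalIntegrable _ _) (indIcc_ii _ _ _ _)
        fun t _ => trap_le_ind hα t
    have := indIcc_int_le (c := x - α) (d := x + 2 * α) (by linarith) h
    linarith
  · rw [indI_of_lt (not_le.1 h), mul_zero, intervalIntegral.integral_congr (g := fun _ => (0:ℝ))]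
    · simp
    · intro t ht
      rw [Set.uIcc_of_ge (by linarith)] at ht
      refine max_eq_left ((min_le_right _ _).trans ((min_le_left _ _).trans ?_))
      exact div_nonpos_of_nonpos_of_nonneg (by linarith [ht.2]) hα.le

section
variable {Ω ι : Type} [MeasurableSpace Ω] [Fintype ι] [DecidableEq ι] {μ : Measure Ω} [IsProbabilityMeasure μ]
    {X : ι → Ω → ℝ} {A B C : ι → Finset ι} {κ τ : ℝ}

lemma ii_of_bdd {F : ℝ → Ω → ℝ} {a b : ℝ} (hF : Measurable (fun q : ℝ × Ω => F q.1 q.2)) {K : ℝ} (hK : ∀ t ω, |F t ω| ≤ K) :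
    IntervalIntegrable (fun t => ∫ ω, F t ω ∂μ) volume a b := by
  refine (intervalIntegrable_const (c := K)).mono_fun ?_ (Filter.Eventually.of_forall fun t => ?_)
  · exact (hF.stronglyMeasurable.integral_prod_right (ν := μ)).aestronglyMeasurable
  · have h1 : |∫ ω, F t ω ∂μ| ≤ ∫ ω, |F t ω| ∂μ := abs_int_le
    have hb : BdM (F t) := ⟨hF.comp (by fun_prop : Measurable fun ω : Ω => (t, ω)), K, hK t⟩
    have h2 : ∫ ω, |F t ω| ∂μ ≤ ∫ ω, K ∂μ := imono hb.abs (BdM.const _) fun ω => hK t ω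
    simp only [integral_const, probReal_univ, one_smul] at h2
    simp only [Real.norm_eq_abs]
    exact (h1.trans h2).trans (le_abs_self _)

namespace LD
variable (h : LD μ X A B C κ τ)
include h

lemma var {ζ : ι → Ω → ℝ} (hm : ∀ l, Measurable[sgm X {j | j ∈ A l}] (ζ l)) (hb : ∀ l, BdM (ζ l)) :
    ∫ ω, (∑ l, ζ l ω - ∫ ω', ∑ l, ζ l ω' ∂μ) ^ 2 ∂μ ≤ κ * ∑ l, ∫ ω, ζ l ω ^ 2 ∂μ := by
  set e : ι → ℝ := fun l => ∫ ω, ζ l ω ∂μ with he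
  set c : ι → Ω → ℝ := fun l ω => ζ l ω - e l with hc
  have hcb : ∀ l, BdM (c l) := fun l => (hb l).sub (BdM.const _)
  have h1 : ∀ ω, (∑ l, ζ l ω - ∫ ω', ∑ l, ζ l ω' ∂μ) ^ 2 = ∑ l, ∑ m, c l ω * c m ω := by
    intro ω
    rw [integral_finsetSum _ fun l _ => (hb l).int, ← Finset.sum_sub_distrib, sq, Finset.sum_mul_sum]
  simp only [h1]
  rw [integral_finsetSum _ fun l _ => (BdM.sum _ fun m _ => (hcb l).mul (hcb m)).int]
  have z : ∀ l, ∫ ω, c l ω ∂μ = 0 := fun l => by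
    rw [hc]; simp only []; rw [integral_sub (hb l).int (BdM.const _).int]; simp [he]
  have sqle : ∀ l, ∫ ω, c l ω ^ 2 ∂μ ≤ ∫ ω, ζ l ω ^ 2 ∂μ := fun l => by
    have : ∀ ω, c l ω ^ 2 = ζ l ω ^ 2 - 2 * e l * ζ l ω + e l ^ 2 := fun ω => by rw [hc]; ring
    simp only [this]
    rw [integral_add (((hb l).pow 2).sub ((BdM.const _).mul (hb l))).int (BdM.const _).int,
      integral_sub ((hb l).pow 2).int ((BdM.const _).mul (hb l)).int, integral_const_mul]
    simp only [integral_const, probReal_univ, one_smul]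
    have : ∫ ω, ζ l ω ∂μ = e l := rfl
    rw [this]
    nlinarith [sq_nonneg (e l)]
  have cov : ∀ l m, m ∉ C l → ∫ ω, c l ω * c m ω ∂μ = 0 := by
    intro l m hm'
    rw [indep_mul (f := c l) (g := c m) (h.J2 l) (sgm_le h.meas) (sgm_le h.meas) ((hm l).sub measurable_const)
      (((hm m).mono (sgm_mono ?_) le_rfl).sub measurable_const), z, zero_mul]
    intro j hj
    exact ⟨m, fun hh => hm' (h.BC l hh), hj⟩
  set y : ι → ℝ := fun l => ∫ ω, c l ω ^ 2 ∂μ with hy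
  have y0 : ∀ l, 0 ≤ y l := fun l => integral_nonneg fun ω => sq_nonneg _
  have h2 : ∀ l, ∫ ω, ∑ m, c l ω * c m ω ∂μ ≤ ∑ m ∈ C l, (y l + y m) / 2 := by
    intro l
    rw [integral_finsetSum _ fun m _ => ((hcb l).mul (hcb m)).int,
      ← Finset.sum_subset (Finset.subset_univ (C l)) fun m _ hm' => cov l m hm']
    refine Finset.sum_le_sum fun m _ => ?_
    rw [hy, ← integral_add ((hcb l).pow 2).int ((hcb m).pow 2).int, ← integral_div]
    refine imono ((hcb l).mul (hcb m)) ?_ fun ω => ?_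
    · have := (((hcb l).pow 2).add ((hcb m).pow 2)).mul (BdM.const (1/2))
      simpa [div_eq_mul_inv] using this
    · nlinarith [sq_nonneg (c l ω - c m ω)]
  refine (Finset.sum_le_sum fun l _ => h2 l).trans ?_
  simp only [← Finset.sum_div, Finset.sum_add_distrib]
  have a1 := count_fwd h.cardC y0
  have a2 := count_bwd h.cardC' y0
  have a3 : κ * ∑ l, y l ≤ κ * ∑ l, ∫ ω, ζ l ω ^ 2 ∂μ := by
    rcases isEmpty_or_nonempty ι with hi | ⟨⟨i⟩⟩
    · simp
    · exact mul_le_mul_of_nonneg_left (Finset.sum_le_sum fun l _ => sqle l) (by linarith [h.κ1 i])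
  linarith
end LD
end

set_option linter.unusedVariables false
set_option linter.unusedSectionVars false

section
variable {Ω ι : Type} [MeasurableSpace Ω] [Fintype ι] [DecidableEq ι] {μ : Measure Ω} [IsProbabilityMeasure μ]
    {X : ι → Ω → ℝ} {A B C : ι → Finset ι} {κ τ : ℝ}

lemma ii_sum {F : ι → ℝ → ℝ} {a b : ℝ} (hF : ∀ l, IntervalIntegrable (F l) volume a b) :
    IntervalIntegrable (fun t => ∑ l, F l t) volume a b := by
  have : (fun t => ∑ l, F l t) = ∑ l, F l := by ext t; simp
  rw [this]
  exact IntervalIntegrable.sum _ fun l _ => hF l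

namespace LD
variable (h : LD μ X A B C κ τ)
include h

/-- integrating `sK` against a weight -/
lemma sK_swap {H : Ω → ℝ} (hH : BdM H) (l : ι) {R : ℝ} (hR : κ * τ ≤ R) :
    ∫ t in (-R)..R, ∫ ω, H ω * sK (SX X (A l) ω) t ^ 2 ∂μ = ∫ ω, H ω * |SX X (A l) ω| ∂μ := by
  obtain ⟨K, hK⟩ := hH.2
  have hR0 : 0 ≤ R := le_trans (mul_nonneg (by linarith [h.κ1 l]) (h.τ0 l)) hR
  rw [← fub (K := K) (by linarith)]
  · congr 1; ext ω
    rw [intervalIntegral.integral_const_mul, sK_int_sq ((h.SX_le (h.AC l) ω).trans hR)]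
  · exact (hH.1.comp measurable_snd).mul ((sK_meas.comp (((h.sb (A l)).1.comp measurable_snd).prodMk measurable_fst)).pow_const 2)
  · intro t ω
    rw [abs_mul, ← sK_sq_abs, abs_abs]
    exact (mul_le_of_le_one_right (abs_nonneg _) (sK_abs _ _)).trans (hK ω)

lemma sK_ii {H : Ω → ℝ} (hH : BdM H) (l : ι) {a b : ℝ} :
    IntervalIntegrable (fun t => ∫ ω, H ω * sK (SX X (A l) ω) t ^ 2 ∂μ) volume a b := by
  obtain ⟨K, hK⟩ := hH.2
  refine ii_of_bdd (K := K) ?_ ?_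
  · exact (hH.1.comp measurable_snd).mul ((sK_meas.comp (((h.sb (A l)).1.comp measurable_snd).prodMk measurable_fst)).pow_const 2)
  · intro t ω
    rw [abs_mul, ← sK_sq_abs, abs_abs]
    exact (mul_le_of_le_one_right (abs_nonneg _) (sK_abs _ _)).trans (hK ω)

set_option maxHeartbeats 1000000 in
lemma conc0 {i : ι} {ξ v : Ω → ℝ} (hξ : Adm X B i ξ) (hξ0 : ∀ ω, 0 ≤ ξ ω) (hv : Adm X B i v)
    {α δ : ℝ} (hα : 0 < α)
    (hδ : ∀ x, ∫ ω, ξ ω * indIcc x (x + α) (SX X Finset.univ ω - v ω) ∂μ ≤ δ)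
    (hM : 1 / 2 ≤ ∫ ω, SX X Finset.univ ω ^ 2 ∂μ - ∑ l ∈ C i, ∫ ω, X l ω * SX X (A l) ω ∂μ) (x : ℝ) :
    ∫ ω, ξ ω * indIcc x (x + α) (SX X Finset.univ ω - v ω) ∂μ ≤
      6 * α * (∫ ω, ξ ω * (|SX X (C i)ᶜ ω| * indI (x - α) (SX X Finset.univ ω - v ω)) ∂μ) +
      3 * α * (∫ ω, ξ ω * indI (x - α - κ * τ) (SX X Finset.univ ω - v ω) ∂μ) +
      κ ^ 2 * bet μ X * (∫ ω, ξ ω ∂μ) + 12 * δ * (κ ^ 2 * bet μ X) / α := by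
  set W := SX X Finset.univ with hW
  set U := SX X (C i)ᶜ with hU
  set T : Ω → ℝ := fun ω => W ω - v ω with hT
  set R := κ * τ with hR
  set φ := trap x α with hφ
  set f := trapI x α with hf
  set G := κ ^ 2 * bet μ X with hG
  have hκ : 0 ≤ κ := by linarith [h.κ1 i]
  have hR0 : 0 ≤ R := mul_nonneg hκ (h.τ0 i)
  have hWb : BdM W := h.sb _
  have hUb : BdM U := h.sb _
  have hTb : BdM T := hWb.sub hv.b
  have hφc : Continuous φ := trap_cont x α
  have hfc : Continuous f := trapI_cont x α
  have hδ0 : 0 ≤ δ := (integral_nonneg fun ω => mul_nonneg (hξ0 ω) (indIcc_nonneg _ _ _)).trans (hδ 0)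
  obtain ⟨Kξ, hKξ⟩ := hξ.b.2
  set c : ι → ℝ := fun l => if l ∈ C i then 0 else 1 with hc
  have hc1 : ∀ l, |c l| ≤ 1 := fun l => by simp only [hc]; split_ifs <;> simp
  set Y : ι → Ω → ℝ := fun l => SX X (A l) with hY
  have hYb : ∀ l, BdM (Y l) := fun l => h.sb _
  set k : ι → ℝ → Ω → ℝ := fun l t ω => c l * X l ω * sK (Y l ω) t with hk
  have hsm : ∀ l, Measurable (fun q : ℝ × Ω => sK (Y l q.2) q.1) := fun l =>
    sK_meas.comp (((hYb l).1.comp measurable_snd).prodMk measurable_fst)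
  have hst : ∀ l t, Measurable (fun ω => sK (Y l ω) t) := fun l t =>
    sK_meas.comp ((hYb l).1.prodMk measurable_const)
  have hsb : ∀ l t, BdM (fun ω => sK (Y l ω) t) := fun l t => ⟨hst l t, 1, fun ω => sK_abs _ _⟩
  have hkm : ∀ l, Measurable (fun q : ℝ × Ω => k l q.1 q.2) := fun l =>
    ((measurable_const.mul ((h.meas l).comp measurable_snd))).mul (hsm l)
  have hkb : ∀ l t ω, |k l t ω| ≤ τ := fun l t ω => by
    simp only [hk]
    rw [abs_mul, abs_mul]
    have a1 := hc1 l
    have a2 := h.bdd l ω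
    have a3 := sK_abs (Y l ω) t
    calc |c l| * |X l ω| * |sK (Y l ω) t| ≤ 1 * τ * 1 := by
          have := h.τ0 l
          gcongr
      _ = τ := by ring
  have hkB : ∀ l t, BdM (k l t) := fun l t => (((BdM.const _).mul (h.xb l)).mul (hsb l t))
  have hφT : ∀ t, BdM (fun ω => φ (T ω + t)) := fun t => (hTb.add (BdM.const t)).comp_cont hφc
  have hφm : Measurable (fun q : ℝ × Ω => φ (T q.2 + q.1)) :=
    hφc.measurable.comp ((hTb.1.comp measurable_snd).add measurable_fst)
  have hφ1 : ∀ w, |φ w| ≤ 1 := fun w => by rw [abs_of_nonneg (trap_nonneg _ _ _)]; exact trap_le_one _ _ _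
  -- joint function
  set J : ι → ℝ → Ω → ℝ := fun l t ω => ξ ω * φ (T ω + t) * k l t ω with hJ
  have hJm : ∀ l, Measurable (fun q : ℝ × Ω => J l q.1 q.2) := fun l =>
    ((hξ.b.1.comp measurable_snd).mul hφm).mul (hkm l)
  have hJK : ∀ l t ω, |J l t ω| ≤ Kξ * 1 * τ := fun l t ω => by
    simp only [hJ]
    rw [abs_mul, abs_mul]
    have a1 := hKξ ω
    have a2 := hφ1 (T ω + t)
    have a3 := hkb l t ω
    have : 0 ≤ Kξ := (abs_nonneg _).trans a1
    gcongr
  have hJB : ∀ l t, BdM (J l t) := fun l t => (hξ.b.mul (hφT t)).mul (hkB l t)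
  have c1l : ∀ l, c l * ∫ ω, ξ ω * X l ω * f (T ω) ∂μ = ∫ t in (-R)..R, ∫ ω, J l t ω ∂μ := by
    intro l
    rw [← fub (by linarith) (hJm l) (hJK l)]
    by_cases hl : l ∈ C i
    · simp [hJ, hk, hc, hl]
    · have cl : c l = 1 := by simp [hc, hl]
      rw [cl, one_mul]
      have z : ∫ ω, X l ω * (ξ ω * f (T ω - Y l ω)) ∂μ = 0 := by
        have e : ∀ ω, T ω - Y l ω = SX X (A l)ᶜ ω - v ω := fun ω => by
          rw [← SX_compl]; simp only [hT, hY]; ring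
        simp only [e]
        have mB : sgm X {j | j ∈ B i} ≤ sgm X {j | j ∉ A l ∨ j ∈ B i} := sgm_mono fun j hj => Or.inr hj
        rw [indep_mul (f := X l) (g := fun ω => ξ ω * f (SX X (A l)ᶜ ω - v ω)) (h.J4 i l hl) (sgm_le h.meas) (sgm_le h.meas)
          (sgm_meas (by simp)), h.mean l, zero_mul]
        refine (hξ.m.mono mB le_rfl).mul (hfc.measurable.comp (Measurable.sub (SX_sgm fun j hj => Or.inl (by simpa using hj))
          (hv.m.mono mB le_rfl)))
      have e1 : ∫ ω, ξ ω * X l ω * f (T ω) ∂μ = ∫ ω, ξ ω * X l ω * (f (T ω) - f (T ω - Y l ω)) ∂μ := by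
        have : ∀ ω, ξ ω * X l ω * (f (T ω) - f (T ω - Y l ω)) = ξ ω * X l ω * f (T ω) - X l ω * (ξ ω * f (T ω - Y l ω)) :=
          fun ω => by ring
        simp only [this]
        rw [integral_sub ((hξ.b.mul (h.xb l)).mul (hTb.comp_cont hfc)).int
          ((h.xb l).mul (hξ.b.mul ((hTb.sub (hYb l)).comp_cont hfc))).int, z, sub_zero]
      rw [e1]
      congr 1; ext ω
      have e2 : ∫ t in (-(Y l ω))..0, φ (T ω + t) = f (T ω) - f (T ω - Y l ω) := by
        rw [intervalIntegral.integral_comp_add_left (fun t => φ t) (T ω),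
          intervalIntegral.integral_eq_sub_of_hasDerivAt (fun t _ => trapI_deriv x α t) (hφc.intervalIntegrable _ _)]
        simp only [add_zero, hf, sub_eq_add_neg]
      rw [← e2, ← sK_int (R := R) (h.SX_le (h.AC l) ω) (fun t => φ (T ω + t)), ← intervalIntegral.integral_const_mul]
      refine intervalIntegral.integral_congr fun t _ => ?_
      simp only [hJ, hk, cl]; ring
  set Mh : ℝ → Ω → ℝ := fun t ω => ∑ l, k l t ω with hMh
  set M : ℝ → ℝ := fun t => ∫ ω, Mh t ω ∂μ with hMdef
  have hMhB : ∀ t, BdM (Mh t) := fun t => BdM.sum _ fun l _ => hkB l t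
  set Q : ℝ → ℝ := fun t => ∫ ω, ξ ω * φ (T ω + t) * Mh t ω ∂μ with hQ
  have hQe : ∀ t, Q t = ∑ l, ∫ ω, J l t ω ∂μ := fun t => by
    simp only [hQ, hMh, Finset.mul_sum]
    rw [integral_finsetSum _ fun l _ => (hJB l t).int]
  have hJii : ∀ l, IntervalIntegrable (fun t => ∫ ω, J l t ω ∂μ) volume (-R) R := fun l => ii_of_bdd (hJm l) (hJK l)
  have hQii : IntervalIntegrable Q volume (-R) R := by
    have : Q = fun t => ∑ l, ∫ ω, J l t ω ∂μ := funext hQe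
    rw [this]
    exact ii_sum hJii
  have c1 : ∫ ω, ξ ω * U ω * f (T ω) ∂μ = ∫ t in (-R)..R, Q t := by
    simp only [hQe]
    rw [intervalIntegral.integral_finsetSum fun l _ => hJii l, ← Finset.sum_congr rfl fun l _ => c1l l]
    have : ∀ ω, ξ ω * U ω * f (T ω) = ∑ l, c l * (ξ ω * X l ω * f (T ω)) := fun ω => by
      have hu : U ω = ∑ l, c l * X l ω := by
        simp only [hc, ite_mul, zero_mul, one_mul, hU]
        rw [Finset.sum_ite, Finset.sum_const_zero, zero_add]
        unfold SX
        refine Finset.sum_congr ?_ fun _ _ => rfl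
        ext j; simp
      rw [hu, Finset.mul_sum, Finset.sum_mul]
      exact Finset.sum_congr rfl fun l _ => by ring
    simp only [this]
    rw [integral_finsetSum _ fun l _ => ((BdM.const _).mul ((hξ.b.mul (h.xb l)).mul (hTb.comp_cont hfc))).int]
    exact Finset.sum_congr rfl fun l _ => by rw [integral_const_mul]
  have hkii : ∀ l, IntervalIntegrable (fun t => ∫ ω, k l t ω ∂μ) volume (-R) R := fun l => ii_of_bdd (hkm l) (hkb l)
  have hMe : ∀ t, M t = ∑ l, ∫ ω, k l t ω ∂μ := fun t => by
    simp only [hMdef, hMh]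
    rw [integral_finsetSum _ fun l _ => (hkB l t).int]
  have hMii : IntervalIntegrable M volume (-R) R := by
    have : M = fun t => ∑ l, ∫ ω, k l t ω ∂μ := funext hMe
    rw [this]
    exact ii_sum hkii
  have c2 : 1 / 2 ≤ ∫ t in (-R)..R, M t := by
    refine hM.trans (le_of_eq ?_)
    simp only [hMe]
    rw [intervalIntegral.integral_finsetSum fun l _ => hkii l, hW, ← h.sig, sub_eq_iff_eq_add, ← Finset.sum_compl_add_sum (C i)]
    congr 1
    have e : ∀ l, ∫ t in (-R)..R, ∫ ω, k l t ω ∂μ = c l * ∫ ω, X l ω * SX X (A l) ω ∂μ := by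
      intro l
      rw [← fub (by linarith) (hkm l) (hkb l), ← integral_const_mul]
      congr 1; ext ω
      have := sK_int (R := R) (h.SX_le (h.AC l) ω) (fun t => c l * X l ω)
      simp only [hk, hY]
      rw [this, intervalIntegral.integral_const, smul_eq_mul]; ring
    simp only [e, hc, ite_mul, zero_mul, one_mul]
    rw [Finset.sum_ite, Finset.sum_const_zero, zero_add]
    refine Finset.sum_congr ?_ fun _ _ => rfl
    ext j; simp
  set E0 := ∫ ω, ξ ω * φ (T ω) ∂μ with hE0
  have hE00 : 0 ≤ E0 := integral_nonneg fun ω => mul_nonneg (hξ0 ω) (trap_nonneg _ _ _)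
  set eξ := ∫ ω, ξ ω ∂μ with heξ
  have heξ0 : 0 ≤ eξ := integral_nonneg hξ0
  set d : ℝ → ℝ := fun t => ∑ l, ∫ ω, X l ω ^ 2 * sK (Y l ω) t ^ 2 ∂μ with hd
  set b : ℝ → ℝ := fun t => ∑ l, ∫ ω, |X l ω * Y l ω| * sK (Y l ω) t ^ 2 ∂μ with hb
  set S : ℝ → ℝ := fun t => ∫ ω, ξ ω * φ (T ω + t) ^ 2 ∂μ with hS
  -- variance
  have hvar : ∀ t, ∫ ω, (Mh t ω - M t) ^ 2 ∂μ ≤ κ * d t := by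
    intro t
    refine (h.var (ζ := fun l => k l t) (fun l => ?_) fun l => hkB l t).trans ?_
    · refine (measurable_const.mul (sgm_meas (h.memA l))).mul ?_
      exact sK_meas.comp (Measurable.prodMk (SX_sgm fun j hj => hj) measurable_const)
    · refine mul_le_mul_of_nonneg_left (Finset.sum_le_sum fun l _ => ?_) hκ
      refine imono ((hkB l t).pow 2) (((h.xb l).pow 2).mul ((hsb l t).pow 2)) fun ω => ?_
      simp only [hk, mul_pow]
      have : c l ^ 2 ≤ 1 := by rw [sq_le_one_iff_abs_le_one]; exact hc1 l
      have p : 0 ≤ X l ω ^ 2 * sK (Y l ω) t ^ 2 := by positivity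
      nlinarith
  have hMb : ∀ t, |t| * |M t| ≤ b t := by
    intro t
    have e1 : |M t| ≤ ∑ l, ∫ ω, |X l ω| * |sK (Y l ω) t| ∂μ := by
      rw [hMe]
      refine (Finset.abs_sum_le_sum_abs _ _).trans (Finset.sum_le_sum fun l _ => abs_int_le.trans ?_)
      refine imono (hkB l t).abs ((h.xb l).abs.mul (hsb l t).abs) fun ω => ?_
      simp only [hk]
      rw [abs_mul, abs_mul]
      refine mul_le_mul_of_nonneg_right ?_ (abs_nonneg _)
      exact mul_le_of_le_one_left (abs_nonneg _) (hc1 l)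
    refine (mul_le_mul_of_nonneg_left e1 (abs_nonneg t)).trans ?_
    rw [Finset.mul_sum]
    refine Finset.sum_le_sum fun l _ => ?_
    rw [← integral_const_mul]
    refine imono ((BdM.const _).mul ((h.xb l).abs.mul (hsb l t).abs)) (((h.xb l).mul (hYb l)).abs.mul ((hsb l t).pow 2)) fun ω => ?_
    rw [abs_mul]
    have := mul_le_mul_of_nonneg_left (sK_t (Y l ω) t) (abs_nonneg (X l ω))
    linarith
  have hI3 : ∀ t, ∫ ω, ξ ω * indIcc (x - α) (x + 2 * α) (T ω + t) ∂μ ≤ 3 * δ := by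
    intro t
    have hTt : Measurable (fun ω => T ω + t) := hTb.1.add measurable_const
    have b0 : ∀ a b, BdM (fun ω => ξ ω * indIcc a b (T ω + t)) := fun a b => hξ.b.mul (BdM.indIcc hTt a b)
    have g : ∀ a, ∫ ω, ξ ω * indIcc a (a + α) (T ω + t) ∂μ ≤ δ := fun a => by
      have := hδ (a - t)
      simp only [indIcc_shift]
      rwa [show a - t + α = a + α - t by ring] at this
    have : ∫ ω, ξ ω * indIcc (x - α) (x + 2 * α) (T ω + t) ∂μ ≤
        ∫ ω, (ξ ω * indIcc (x - α) (x - α + α) (T ω + t) + ξ ω * indIcc x (x + α) (T ω + t)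
          + ξ ω * indIcc (x + α) (x + α + α) (T ω + t)) ∂μ := by
      refine imono (b0 _ _) (((b0 _ _).add (b0 _ _)).add (b0 _ _)) fun ω => ?_
      have := mul_le_mul_of_nonneg_left (ind3 (x := x) hα (T ω + t)) (hξ0 ω)
      linarith
    rw [integral_add ((b0 _ _).add (b0 _ _)).int (b0 _ _).int, integral_add (b0 _ _).int (b0 _ _).int] at this
    linarith [g (x - α), g x, g (x + α)]
  have hdiff : ∀ t, ∫ ω, ξ ω * |φ (T ω + t) - φ (T ω)| ∂μ ≤ |t| / α * (6 * δ) := by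
    intro t
    have hTt : Measurable (fun ω => T ω + t) := hTb.1.add measurable_const
    have b0 : ∀ a b, BdM (fun ω => ξ ω * indIcc a b (T ω + t)) := fun a b => hξ.b.mul (BdM.indIcc hTt a b)
    have b1 : ∀ a b, BdM (fun ω => ξ ω * indIcc a b (T ω)) := fun a b => hξ.b.mul (BdM.indIcc hTb.1 a b)
    have e : ∫ ω, ξ ω * |φ (T ω + t) - φ (T ω)| ∂μ ≤ ∫ ω, |t| / α * (ξ ω * indIcc (x - α) (x + 2 * α) (T ω + t)
        + ξ ω * indIcc (x - α) (x + 2 * α) (T ω)) ∂μ := by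
      refine imono (hξ.b.mul ((hφT t).sub (hTb.comp_cont hφc)).abs) ((BdM.const _).mul ((b0 _ _).add (b1 _ _))) fun ω => ?_
      have := mul_le_mul_of_nonneg_left (trap_diff (x := x) hα (T ω + t) (T ω)) (hξ0 ω)
      rw [add_sub_cancel_left] at this
      refine this.trans (le_of_eq (by ring))
    rw [integral_const_mul, integral_add (b0 _ _).int (b1 _ _).int] at e
    refine e.trans (mul_le_mul_of_nonneg_left ?_ (by positivity))
    have a1 := hI3 t
    have a2 := hI3 0
    simp only [add_zero] at a2
    linarith
  have c3 : ∀ t, M t * E0 ≤ Q t + (1 / 2 * S t + eξ / 2 * κ * d t + 6 * δ / α * b t) := by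
    intro t
    have hD : BdM (fun ω => Mh t ω - M t) := (hMhB t).sub (BdM.const _)
    have i1 : ∫ ω, ξ ω * (Mh t ω - M t) ^ 2 ∂μ = eξ * ∫ ω, (Mh t ω - M t) ^ 2 ∂μ := by
      refine indep_mul (h.J3 i) (sgm_le h.meas) (sgm_le h.meas) hξ.m ?_
      refine Measurable.pow_const (Measurable.sub (Finset.measurable_sum _ fun l _ => ?_) measurable_const) 2
      by_cases hl : l ∈ C i
      · have : k l t = fun _ => 0 := by ext ω; simp [hk, hc, hl]
        rw [this]; exact measurable_const
      · refine (measurable_const.mul (sgm_meas (S := {j | ∃ l, l ∉ C i ∧ j ∈ A l}) ⟨l, hl, h.memA l⟩)).mul ?_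
        exact sK_meas.comp (Measurable.prodMk (SX_sgm (S := {j | ∃ l, l ∉ C i ∧ j ∈ A l}) fun j hj => ⟨l, hl, hj⟩) measurable_const)
    have i2 : - ∫ ω, ξ ω * φ (T ω + t) * (Mh t ω - M t) ∂μ ≤ 1 / 2 * S t + 1 / 2 * (eξ * ∫ ω, (Mh t ω - M t) ^ 2 ∂μ) := by
      rw [← i1, hS, ← integral_const_mul, ← integral_const_mul, ← integral_neg,
        ← integral_add ((BdM.const _).mul (hξ.b.mul ((hφT t).pow 2))).int ((BdM.const _).mul (hξ.b.mul (hD.pow 2))).int]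
      refine imono ((hξ.b.mul (hφT t)).mul hD).neg
        (((BdM.const _).mul (hξ.b.mul ((hφT t).pow 2))).add ((BdM.const _).mul (hξ.b.mul (hD.pow 2)))) fun ω => ?_
      have := mul_nonneg (hξ0 ω) (sq_nonneg (φ (T ω + t) + (Mh t ω - M t)))
      nlinarith
    have i3 : -(M t * ∫ ω, ξ ω * (φ (T ω + t) - φ (T ω)) ∂μ) ≤ 6 * δ / α * b t := by
      have e1 : |∫ ω, ξ ω * (φ (T ω + t) - φ (T ω)) ∂μ| ≤ |t| / α * (6 * δ) := by
        refine abs_int_le.trans (le_trans (le_of_eq ?_) (hdiff t))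
        congr 1; ext ω; rw [abs_mul, abs_of_nonneg (hξ0 ω)]
      refine (neg_le_abs _).trans ?_
      rw [abs_mul]
      calc |M t| * |∫ ω, ξ ω * (φ (T ω + t) - φ (T ω)) ∂μ| ≤ |M t| * (|t| / α * (6 * δ)) := by gcongr
        _ = 6 * δ / α * (|t| * |M t|) := by ring
        _ ≤ _ := mul_le_mul_of_nonneg_left (hMb t) (by positivity)
    have i4 : M t * E0 - Q t = -(∫ ω, ξ ω * φ (T ω + t) * (Mh t ω - M t) ∂μ) - M t * ∫ ω, ξ ω * (φ (T ω + t) - φ (T ω)) ∂μ := by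
      have a1 : ∫ ω, ξ ω * φ (T ω + t) * (Mh t ω - M t) ∂μ = Q t - M t * ∫ ω, ξ ω * φ (T ω + t) ∂μ := by
        simp only [mul_sub]
        rw [integral_sub ((hξ.b.mul (hφT t)).mul (hMhB t)).int ((hξ.b.mul (hφT t)).mul (BdM.const _)).int, integral_mul_const]
        ring
      have a2 : ∫ ω, ξ ω * (φ (T ω + t) - φ (T ω)) ∂μ = ∫ ω, ξ ω * φ (T ω + t) ∂μ - E0 := by
        simp only [mul_sub]
        rw [integral_sub (hξ.b.mul (hφT t)).int (hξ.b.mul (hTb.comp_cont hφc)).int]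
      rw [a1, a2]; ring
    have i5 := mul_le_mul_of_nonneg_left (hvar t) heξ0
    nlinarith
  -- integrate
  have hSm : Measurable (fun q : ℝ × Ω => ξ q.2 * φ (T q.2 + q.1) ^ 2) := (hξ.b.1.comp measurable_snd).mul (hφm.pow_const 2)
  have hSK : ∀ t ω, |ξ ω * φ (T ω + t) ^ 2| ≤ Kξ := fun t ω => by
    rw [abs_mul, abs_pow]
    exact (mul_le_of_le_one_right (abs_nonneg _) (pow_le_one₀ (abs_nonneg _) (hφ1 _))).trans (hKξ ω)
  have hSii : IntervalIntegrable S volume (-R) R := ii_of_bdd hSm hSK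
  have hdii : IntervalIntegrable d volume (-R) R := ii_sum fun l => h.sK_ii ((h.xb l).pow 2) l (a := -R) (b := R)
  have hbii : IntervalIntegrable b volume (-R) R := ii_sum fun l => h.sK_ii ((h.xb l).mul (hYb l)).abs l (a := -R) (b := R)
  have hint := intervalIntegral.integral_mono_on (by linarith : -R ≤ R) (hMii.mul_const E0)
    (hQii.add (((hSii.const_mul (1/2)).add (hdii.const_mul (eξ / 2 * κ))).add (hbii.const_mul (6 * δ / α)))) fun t _ => c3 t
  rw [intervalIntegral.integral_mul_const] at hint
  have hsplit : ∫ t in (-R)..R, (Q t + (1 / 2 * S t + eξ / 2 * κ * d t + 6 * δ / α * b t)) =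
      (∫ t in (-R)..R, Q t) + (1 / 2 * (∫ t in (-R)..R, S t) + eξ / 2 * κ * (∫ t in (-R)..R, d t) + 6 * δ / α * ∫ t in (-R)..R, b t) := by
    rw [intervalIntegral.integral_add hQii (((hSii.const_mul (1/2)).add (hdii.const_mul (eξ / 2 * κ))).add (hbii.const_mul (6 * δ / α))),
      intervalIntegral.integral_add ((hSii.const_mul (1/2)).add (hdii.const_mul (eξ / 2 * κ))) (hbii.const_mul (6 * δ / α)),
      intervalIntegral.integral_add (hSii.const_mul (1/2)) (hdii.const_mul (eξ / 2 * κ)),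
      intervalIntegral.integral_const_mul, intervalIntegral.integral_const_mul, intervalIntegral.integral_const_mul]
  have hint2 : (∫ t in (-R)..R, M t) * E0 ≤ (∫ t in (-R)..R, Q t) + (1 / 2 * (∫ t in (-R)..R, S t) + eξ / 2 * κ * (∫ t in (-R)..R, d t) + 6 * δ / α * ∫ t in (-R)..R, b t) := by
    rw [← hsplit]; exact hint
  have f1 : ∫ t in (-R)..R, S t ≤ 3 * α * ∫ ω, ξ ω * indI (x - α - R) (T ω) ∂μ := by
    rw [hS, ← fub (by linarith) hSm hSK, ← integral_const_mul]
    have hSI : BdM (fun ω => ∫ t in (-R)..R, ξ ω * φ (T ω + t) ^ 2) := by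
      refine ⟨?_, Kξ * |R - -R|, fun ω => ?_⟩
      · simp only [intervalIntegral.integral_of_le (by linarith : -R ≤ R)]
        have := hSm.stronglyMeasurable.integral_prod_left' (μ := volume.restrict (Set.Ioc (-R) R))
        exact this.measurable
      · have hh : ∀ t ∈ Set.uIoc (-R) R, ‖ξ ω * φ (T ω + t) ^ 2‖ ≤ Kξ := fun t _ => hSK t ω
        exact intervalIntegral.norm_integral_le_of_norm_le_const hh
    refine imono hSI ((BdM.const _).mul (hξ.b.mul (BdM.indI hTb.1 _))) fun ω => ?_
    rw [intervalIntegral.integral_const_mul]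
    have := mul_le_mul_of_nonneg_left (trap_int_sq (x := x) hα (T ω) R hR0) (hξ0 ω)
    refine this.trans (le_of_eq (by ring))
  have f2 : ∫ t in (-R)..R, d t ≤ κ * bet μ X := by
    rw [hd, intervalIntegral.integral_finsetSum fun l _ => h.sK_ii ((h.xb l).pow 2) l]
    simp only [hY, h.sK_swap ((h.xb _).pow 2) _ (le_refl R)]
    exact h.m2 h.AC
  have f3 : ∫ t in (-R)..R, b t ≤ G := by
    rw [hb, intervalIntegral.integral_finsetSum fun l _ => h.sK_ii ((h.xb l).mul (hYb l)).abs l]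
    simp only [hY, h.sK_swap ((h.xb _).mul (h.sb _)).abs _ (le_refl R)]
    exact h.m3 h.AC h.AC hκ
  have f4 : ∫ t in (-R)..R, Q t ≤ 3 * α * ∫ ω, ξ ω * (|U ω| * indI (x - α) (T ω)) ∂μ := by
    rw [← c1, ← integral_const_mul]
    refine imono ((hξ.b.mul hUb).mul (hTb.comp_cont hfc)) ((BdM.const _).mul (hξ.b.mul (hUb.abs.mul (BdM.indI hTb.1 _)))) fun ω => ?_
    refine (le_abs_self _).trans ?_
    rw [abs_mul, abs_mul, abs_of_nonneg (hξ0 ω)]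
    have := mul_le_mul_of_nonneg_left (trapI_abs (x := x) hα (T ω)) (mul_nonneg (hξ0 ω) (abs_nonneg (U ω)))
    refine this.trans (le_of_eq (by ring))
  have f5 : ∫ ω, ξ ω * indIcc x (x + α) (T ω) ∂μ ≤ E0 :=
    imono (hξ.b.mul (BdM.indIcc hTb.1 _ _)) (hξ.b.mul (hTb.comp_cont hφc)) fun ω =>
      mul_le_mul_of_nonneg_left (trap_ge hα _) (hξ0 ω)
  have f6 : 1 / 2 * E0 ≤ (∫ t in (-R)..R, M t) * E0 := mul_le_mul_of_nonneg_right c2 hE00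
  have f7 : eξ / 2 * κ * (∫ t in (-R)..R, d t) ≤ eξ / 2 * κ * (κ * bet μ X) := by gcongr
  have f8 : 6 * δ / α * (∫ t in (-R)..R, b t) ≤ 6 * δ / α * G := by gcongr
  have f9 : 12 * δ * G / α = 2 * (6 * δ / α * G) := by ring
  have f10 : eξ / 2 * κ * (κ * bet μ X) = G * eξ / 2 := by rw [hG]; ring
  rw [f9]
  linarith
end LD
end

set_option linter.unusedVariables false
set_option linter.unusedSectionVars false

section
variable {Ω ι : Type} [MeasurableSpace Ω] [Fintype ι] [DecidableEq ι] {μ : Measure Ω} [IsProbabilityMeasure μ]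
    {X : ι → Ω → ℝ} {A B C : ι → Finset ι} {κ τ η Z : ℝ}

structure Reg (μ : Measure Ω) (X : ι → Ω → ℝ) (A B C : ι → Finset ι) (κ τ η Z : ℝ) : Prop where
  ld : LD μ X A B C κ τ
  hZ : 1 ≤ Z
  hη : 0 < η
  hη6 : η * Z ^ 6 ≤ 1 / 48
  hR : κ * τ ≤ Z / 16
  h3 : κ ^ 3 * bet μ X ≤ η * Z ^ 3
  hs : |∫ ω, SX X Finset.univ ω ^ 2 ∂μ - 1| ≤ η * Z ^ 2

lemma sq_le_cube {x ε : ℝ} (hε : 0 < ε) : x ^ 2 ≤ ε ^ 2 + |x| ^ 3 / ε := by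
  rw [← sq_abs x]
  have h := abs_nonneg x
  rcases le_total |x| ε with h1 | h1
  · have : |x| ^ 2 ≤ ε ^ 2 := by gcongr
    have : 0 ≤ |x| ^ 3 / ε := by positivity
    linarith
  · have : |x| ^ 2 ≤ |x| ^ 3 / ε := by
      rw [le_div_iff₀ hε]; nlinarith [sq_nonneg |x|]
    nlinarith [sq_nonneg ε]

lemma bet_nonneg : 0 ≤ bet μ X := Finset.sum_nonneg fun i _ => integral_nonneg fun ω => by positivity

namespace LD
variable (h : LD μ X A B C κ τ)
include h

lemma C2 (i : ι) {ε : ℝ} (hε : 0 < ε) : ∑ l ∈ C i, ∫ ω, X l ω ^ 2 ∂μ ≤ κ * ε ^ 2 + bet μ X / ε := by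
  have h1 : ∀ l, ∫ ω, X l ω ^ 2 ∂μ ≤ ε ^ 2 + (∫ ω, |X l ω| ^ 3 ∂μ) / ε := fun l => by
    have : ∫ ω, X l ω ^ 2 ∂μ ≤ ∫ ω, (ε ^ 2 + |X l ω| ^ 3 / ε) ∂μ :=
      integral_mono ((h.xb l).pow 2).int ((BdM.const _).int.add (((h.xb l).abs.pow 3).int.div_const _)) fun ω => sq_le_cube hε
    rw [integral_add (BdM.const _).int (((h.xb l).abs.pow 3).int.div_const _), integral_div] at this
    simpa using this
  refine (Finset.sum_le_sum fun l _ => h1 l).trans ?_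
  rw [Finset.sum_add_distrib, Finset.sum_const, nsmul_eq_mul, ← Finset.sum_div]
  refine add_le_add (mul_le_mul_of_nonneg_right (h.cardC i) (sq_nonneg _)) ?_
  refine div_le_div_of_nonneg_right ?_ hε.le
  exact Finset.sum_le_sum_of_subset_of_nonneg (Finset.subset_univ _) fun _ _ _ => integral_nonneg fun ω => by positivity

lemma EV (i : ι) : ∫ ω, SX X (C i) ω ^ 2 ∂μ ≤ 1 + κ ^ 2 * bet μ X := by
  have k1 := h.κ1 i
  have : ∫ ω, SX X (C i) ω ^ 2 ∂μ ≤ ∫ ω, κ * ∑ l ∈ C i, X l ω ^ 2 ∂μ := by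
    refine imono ((h.sb _).pow 2) ((BdM.const _).mul (BdM.sum _ fun l _ => (h.xb l).pow 2)) fun ω => ?_
    refine (sq_sum_le_card_mul_sum_sq (s := C i) (f := fun l => X l ω)).trans ?_
    exact mul_le_mul_of_nonneg_right (h.cardC i) (Finset.sum_nonneg fun l _ => sq_nonneg _)
  rw [integral_const_mul, integral_finsetSum _ fun l _ => ((h.xb l).pow 2).int] at this
  have h2 := h.C2 i (ε := 1 / κ) (by positivity)
  refine this.trans ((mul_le_mul_of_nonneg_left h2 (by linarith)).trans (le_of_eq ?_))
  field_simp

lemma hM0 (i : ι) : ∑ l ∈ C i, ∫ ω, X l ω * SX X (A l) ω ∂μ ≤ 1 / 16 + 4 * (κ ^ 2 * bet μ X) := by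
  have k1 := h.κ1 i
  have k0 : 0 < κ := by linarith
  set ε := 1 / (4 * κ) with hε
  have e0 : 0 < ε := by positivity
  have s1 : ∀ l ω, X l ω * SX X (A l) ω ≤ ∑ j ∈ C l, (ε ^ 2 + |X l ω| ^ 3 / (2 * ε) + |X j ω| ^ 3 / (2 * ε)) := by
    intro l ω
    refine (le_abs_self _).trans ?_
    rw [abs_mul]
    refine (mul_le_mul_of_nonneg_left (h.le_sum_C (h.AC l) ω) (abs_nonneg _)).trans ?_
    rw [Finset.mul_sum]
    refine Finset.sum_le_sum fun j _ => ?_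
    have a1 := sq_le_cube (x := X l ω) e0
    have a2 := sq_le_cube (x := X j ω) e0
    have a3 : ∀ y : ℝ, y / (2 * ε) = (y / ε) / 2 := fun y => by field_simp
    rw [a3, a3]
    rw [← sq_abs] at a1 a2
    nlinarith [sq_nonneg (|X l ω| - |X j ω|)]
  have c3 : ∀ l, BdM (fun ω => |X l ω| ^ 3) := fun l => (h.xb l).abs.pow 3
  have hb : ∀ l, BdM (fun ω => κ * ε ^ 2 + κ / (2 * ε) * |X l ω| ^ 3 + 1 / (2 * ε) * ∑ j ∈ C l, |X j ω| ^ 3) := fun l =>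
    ((BdM.const _).add ((BdM.const _).mul (c3 l))).add ((BdM.const _).mul (BdM.sum _ fun j _ => c3 j))
  have s2 : ∀ l ω, X l ω * SX X (A l) ω ≤ κ * ε ^ 2 + κ / (2 * ε) * |X l ω| ^ 3 + 1 / (2 * ε) * ∑ j ∈ C l, |X j ω| ^ 3 := by
    intro l ω
    refine (s1 l ω).trans ?_
    rw [Finset.sum_add_distrib, Finset.sum_const, nsmul_eq_mul, ← Finset.sum_div]
    have := mul_le_mul_of_nonneg_right (h.cardC l) (by positivity : 0 ≤ ε ^ 2 + |X l ω| ^ 3 / (2 * ε))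
    refine (add_le_add_left this _).trans (le_of_eq (by ring))
  set e : ι → ℝ := fun l => ∫ ω, |X l ω| ^ 3 ∂μ with he
  have e00 : ∀ l, 0 ≤ e l := fun l => integral_nonneg fun ω => by positivity
  have s3 : ∀ l, ∫ ω, X l ω * SX X (A l) ω ∂μ ≤ κ * ε ^ 2 + κ / (2 * ε) * e l + 1 / (2 * ε) * ∑ j ∈ C l, e j := by
    intro l
    refine (imono ((h.xb l).mul (h.sb _)) (hb l) (s2 l)).trans (le_of_eq ?_)
    rw [integral_add ((BdM.const _).add ((BdM.const _).mul (c3 l))).int ((BdM.const _).mul (BdM.sum _ fun j _ => c3 j)).int,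
      integral_add (BdM.const _).int ((BdM.const _).mul (c3 l)).int, integral_const_mul, integral_const_mul, integral_const_mul,
      integral_finsetSum _ fun j _ => (c3 j).int]
    simp [he]
  refine (Finset.sum_le_sum fun l _ => s3 l).trans ?_
  rw [Finset.sum_add_distrib, Finset.sum_add_distrib, Finset.sum_const, nsmul_eq_mul, ← Finset.mul_sum, ← Finset.mul_sum]
  have b1 : ∑ l ∈ C i, e l ≤ bet μ X := Finset.sum_le_sum_of_subset_of_nonneg (Finset.subset_univ _) fun _ _ _ => e00 _
  have b2 : ∑ l ∈ C i, ∑ j ∈ C l, e j ≤ κ * bet μ X := by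
    refine le_trans ?_ (count_bwd h.cardC' e00)
    exact Finset.sum_le_sum_of_subset_of_nonneg (Finset.subset_univ _) fun _ _ _ => Finset.sum_nonneg fun j _ => e00 _
  have b3 := mul_le_mul_of_nonneg_right (h.cardC i) (by positivity : 0 ≤ κ * ε ^ 2)
  have b4 := mul_le_mul_of_nonneg_left b1 (by positivity : 0 ≤ κ / (2 * ε))
  have b5 := mul_le_mul_of_nonneg_left b2 (by positivity : 0 ≤ 1 / (2 * ε))
  refine (add_le_add (add_le_add b3 b4) b5).trans (le_of_eq ?_)
  rw [hε]; field_simp; ring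
end LD

namespace Reg
variable (r : Reg μ X A B C κ τ η Z)
include r

lemma ηs : η * Z ^ 2 ≤ 1 / 48 ∧ η * Z ^ 3 ≤ 1 / 48 ∧ η ≤ 1 / 48 := by
  have h1 := r.hZ
  have h2 := r.hη
  have a : ∀ n ≤ 6, η * Z ^ n ≤ 1 / 48 := fun n hn =>
    (mul_le_mul_of_nonneg_left (pow_le_pow_right₀ h1 hn) h2.le).trans r.hη6
  exact ⟨a 2 (by norm_num), a 3 (by norm_num), by simpa using a 0 (by norm_num)⟩

lemma nonemp : Nonempty ι := by
  by_contra hn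
  rw [not_nonempty_iff] at hn
  have h1 := r.hs
  simp [SX] at h1
  linarith [r.ηs.1]

lemma k1 : 1 ≤ κ := by
  obtain ⟨i⟩ := r.nonemp
  exact r.ld.κ1 i

lemma G_le : κ ^ 2 * bet μ X ≤ η * Z ^ 3 := by
  refine le_trans ?_ r.h3
  have : 0 ≤ bet μ X := bet_nonneg
  have := r.k1
  gcongr
  · norm_num

lemma EW : ∫ ω, SX X Finset.univ ω ^ 2 ∂μ ≤ 2 := by
  have := (abs_le.1 r.hs).2
  linarith [r.ηs.1]

lemma hM (i : ι) : 1 / 2 ≤ ∫ ω, SX X Finset.univ ω ^ 2 ∂μ - ∑ l ∈ C i, ∫ ω, X l ω * SX X (A l) ω ∂μ := by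
  have := (abs_le.1 r.hs).1
  linarith [r.ηs.1, r.ηs.2.1, r.G_le, r.ld.hM0 i]

lemma EU (i : ι) : ∫ ω, SX X (C i)ᶜ ω ^ 2 ∂μ ≤ 8 := by
  have h := r.ld
  have : ∫ ω, SX X (C i)ᶜ ω ^ 2 ∂μ ≤ ∫ ω, (2 * SX X Finset.univ ω ^ 2 + 2 * SX X (C i) ω ^ 2) ∂μ := by
    refine imono ((h.sb _).pow 2) (((BdM.const _).mul ((h.sb _).pow 2)).add ((BdM.const _).mul ((h.sb _).pow 2))) fun ω => ?_
    rw [← SX_compl]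
    nlinarith [sq_nonneg (SX X Finset.univ ω + SX X (C i) ω)]
  rw [integral_add ((BdM.const _).mul ((h.sb _).pow 2)).int ((BdM.const _).mul ((h.sb _).pow 2)).int, integral_const_mul,
    integral_const_mul] at this
  linarith [h.EV i, r.EW, r.G_le, r.ηs.2.1]

lemma tl {y : ℝ} (hy : Z / 16 ≤ y) : ∫ ω, indI y (SX X Finset.univ ω) ∂μ ≤ 2 * 10 ^ 16 * (Z ^ 6)⁻¹ := by
  have h1 := r.ld.tail (by linarith [r.k1]) r.hZ r.EW r.G_le r.hη.le hy
  have hz := r.hZ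
  have : η ≤ (Z ^ 6)⁻¹ := by
    rw [← one_div, le_div_iff₀ (by positivity)]
    linarith [r.hη6]
  linarith

lemma sgU (i : ι) : Measurable[sgm X {j | ∃ l, l ∉ C i ∧ j ∈ A l}] (SX X (C i)ᶜ) :=
  SX_sgm (S := {j | ∃ l, l ∉ C i ∧ j ∈ A l}) fun j hj => ⟨j, by simpa using hj, r.ld.memA j⟩

lemma KT {i : ι} {ξ : Ω → ℝ} (hξ : Adm X B i ξ) (hξ0 : ∀ ω, 0 ≤ ξ ω) :
    ∫ ω, ξ ω * ((1 + |SX X Finset.univ ω| + |SX X (C i)ᶜ ω|) * indI (Z / 4 - 4) (SX X Finset.univ ω)) ∂μ ≤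
      10 ^ 17 * (Z ^ 3)⁻¹ * ∫ ω, ξ ω ∂μ := by
  have h := r.ld
  have hZ := r.hZ
  set W := SX X Finset.univ with hW
  set U := SX X (C i)ᶜ with hU
  set V := SX X (C i) with hV
  have hVb : ∀ ω, |V ω| ≤ Z / 16 := fun ω => (h.SX_le subset_rfl ω).trans r.hR
  have hWU : ∀ ω, W ω = U ω + V ω := fun ω => by rw [hU, ← SX_compl]; ring
  have hWb : BdM W := h.sb _
  have hUb : BdM U := h.sb _
  set H : Ω → ℝ := fun ω => 64 ^ 3 * (Z ^ 3)⁻¹ * (11 + 2 * U ω ^ 2) + 2 * Z ^ 3 * indI (Z / 8) (U ω) with hH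
  have Z3 : 0 < Z ^ 3 := by positivity
  have b1 : BdM (fun ω => 64 ^ 3 * (Z ^ 3)⁻¹ * (11 + 2 * U ω ^ 2)) :=
    (BdM.const _).mul ((BdM.const _).add ((BdM.const _).mul (hUb.pow 2)))
  have b2 : BdM (fun ω => 2 * Z ^ 3 * indI (Z / 8) (U ω)) := (BdM.const _).mul (BdM.indI hUb.1 _)
  have hHb : BdM H := b1.add b2
  have pw : ∀ ω, (1 + |W ω| + |U ω|) * indI (Z / 4 - 4) (W ω) ≤ H ω := by
    intro ω
    have i0 := indI_nonneg (Z / 4 - 4) (W ω)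
    have i1 := indI_le_one (Z / 4 - 4) (W ω)
    have u0 := indI_nonneg (Z / 8) (U ω)
    have w1 : |W ω| ≤ |U ω| + Z / 16 := by
      rw [hWU]; exact (abs_add_le _ _).trans (by linarith [hVb ω])
    have su := sq_abs (U ω)
    have au := abs_nonneg (U ω)
    have aw := abs_nonneg (W ω)
    rcases lt_or_ge Z 64 with hz | hz
    · have t1 : 1 ≤ 64 ^ 3 * (Z ^ 3)⁻¹ := by
        rw [← div_eq_mul_inv, le_div_iff₀ Z3, one_mul]; gcongr
      have t2 : (1 + |W ω| + |U ω|) * indI (Z / 4 - 4) (W ω) ≤ 11 + 2 * U ω ^ 2 := by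
        refine (mul_le_of_le_one_right (by positivity) i1).trans ?_
        nlinarith [sq_nonneg (|U ω| - 1)]
      have t3 : 11 + 2 * U ω ^ 2 ≤ 64 ^ 3 * (Z ^ 3)⁻¹ * (11 + 2 * U ω ^ 2) := le_mul_of_one_le_left (by positivity) t1
      have t4 : 0 ≤ 2 * Z ^ 3 * indI (Z / 8) (U ω) := by positivity
      simp only [hH]; linarith
    · have z3 : 0 ≤ (Z ^ 3)⁻¹ := by positivity
      rcases lt_or_ge (W ω) (Z / 4 - 4) with hw | hw
      · rw [indI_of_lt hw, mul_zero]
        simp only [hH]; positivity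
      · have hu : Z / 8 ≤ U ω := by
          have := (abs_le.1 (hVb ω)).2
          have := hWU ω
          linarith
        simp only [hH]
        rw [indI_of_le hw, indI_of_le hu]
        have p1 : |U ω| = U ω := abs_of_nonneg (by linarith)
        have p2 : 1 + |W ω| + |U ω| ≤ 4 * U ω := by rw [p1] at w1 ⊢; linarith
        have p3 : 4 * U ω ≤ 2 * (Z ^ 3)⁻¹ * U ω ^ 2 + 2 * Z ^ 3 := by
          have : 0 ≤ 2 * (Z ^ 3)⁻¹ * (U ω - Z ^ 3) ^ 2 := by positivity
          have e : 2 * (Z ^ 3)⁻¹ * (U ω - Z ^ 3) ^ 2 = 2 * (Z ^ 3)⁻¹ * U ω ^ 2 + 2 * Z ^ 3 - 4 * U ω := by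
            field_simp; ring
          linarith
        have p4 : 2 * (Z ^ 3)⁻¹ * U ω ^ 2 ≤ 64 ^ 3 * (Z ^ 3)⁻¹ * (11 + 2 * U ω ^ 2) := by
          have : 0 ≤ (Z ^ 3)⁻¹ * U ω ^ 2 := by positivity
          nlinarith
        linarith
  have e1 : ∫ ω, ξ ω * ((1 + |W ω| + |U ω|) * indI (Z / 4 - 4) (W ω)) ∂μ ≤ ∫ ω, ξ ω * H ω ∂μ :=
    imono (hξ.b.mul ((((BdM.const _).add hWb.abs).add hUb.abs).mul (BdM.indI hWb.1 _))) (hξ.b.mul hHb)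
      fun ω => mul_le_mul_of_nonneg_left (pw ω) (hξ0 ω)
  have e2 : ∫ ω, ξ ω * H ω ∂μ = (∫ ω, ξ ω ∂μ) * ∫ ω, H ω ∂μ := by
    refine indep_mul (h.J3 i) (sgm_le h.meas) (sgm_le h.meas) hξ.m ?_
    have hu := r.sgU i
    exact (measurable_const.mul (measurable_const.add (measurable_const.mul (hu.pow_const 2)))).add
      (measurable_const.mul ((indI_meas _).comp hu))
  have e3 : ∫ ω, indI (Z / 8) (U ω) ∂μ ≤ 2 * 10 ^ 16 * (Z ^ 6)⁻¹ := by
    refine le_trans (imono (BdM.indI hUb.1 _) (BdM.indI hWb.1 (Z / 16)) fun ω => ?_) (r.tl le_rfl)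
    rcases lt_or_ge (U ω) (Z / 8) with hu | hu
    · rw [indI_of_lt hu]; exact indI_nonneg _ _
    · rw [indI_of_le hu, indI_of_le]
      have := (abs_le.1 (hVb ω)).1
      have := hWU ω
      linarith
  have e4 : ∫ ω, H ω ∂μ ≤ 10 ^ 17 * (Z ^ 3)⁻¹ := by
    rw [hH, integral_add b1.int b2.int, integral_const_mul, integral_const_mul,
      integral_add (BdM.const _).int ((BdM.const _).mul (hUb.pow 2)).int, integral_const_mul]
    have a1 := r.EU i
    simp only [integral_const, probReal_univ, smul_eq_mul, one_mul]
    have a2 := mul_le_mul_of_nonneg_left e3 (by positivity : 0 ≤ 2 * Z ^ 3)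
    have a3 : 2 * Z ^ 3 * (2 * 10 ^ 16 * (Z ^ 6)⁻¹) = 4 * 10 ^ 16 * (Z ^ 3)⁻¹ := by field_simp; norm_num
    have a4 := mul_le_mul_of_nonneg_left (by linarith : 11 + 2 * ∫ ω, U ω ^ 2 ∂μ ≤ 27) (by positivity : 0 ≤ 64 ^ 3 * (Z ^ 3)⁻¹)
    have a5 : 0 ≤ (Z ^ 3)⁻¹ := by positivity
    linarith
  calc _ ≤ _ := e1
    _ = _ := e2
    _ ≤ (∫ ω, ξ ω ∂μ) * (10 ^ 17 * (Z ^ 3)⁻¹) := mul_le_mul_of_nonneg_left e4 (integral_nonneg hξ0)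
    _ = _ := by ring

lemma U1 {i : ι} {ξ : Ω → ℝ} (hξ : Adm X B i ξ) (hξ0 : ∀ ω, 0 ≤ ξ ω) :
    ∫ ω, ξ ω * |SX X (C i)ᶜ ω| ∂μ ≤ 9 / 2 * ∫ ω, ξ ω ∂μ := by
  have h := r.ld
  set U := SX X (C i)ᶜ with hU
  have hUb : BdM U := h.sb _
  have hm : Measurable[sgm X {j | ∃ l, l ∉ C i ∧ j ∈ A l}] (fun ω => |U ω|) := continuous_abs.measurable.comp (r.sgU i)
  rw [indep_mul (g := fun ω => |U ω|) (h.J3 i) (sgm_le h.meas) (sgm_le h.meas) hξ.m hm, mul_comm]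
  refine mul_le_mul_of_nonneg_right ?_ (integral_nonneg hξ0)
  have : ∫ ω, |U ω| ∂μ ≤ ∫ ω, (1 / 2 + 1 / 2 * U ω ^ 2) ∂μ :=
    imono hUb.abs ((BdM.const _).add ((BdM.const _).mul (hUb.pow 2))) fun ω => by
      nlinarith [sq_nonneg (|U ω| - 1), sq_abs (U ω)]
  rw [integral_add (BdM.const _).int ((BdM.const _).mul (hUb.pow 2)).int, integral_const_mul] at this
  simp only [integral_const, probReal_univ, smul_eq_mul, one_mul] at this
  linarith [r.EU i]

lemma conc {i : ι} {ξ v : Ω → ℝ} (hξ : Adm X B i ξ) (hξ0 : ∀ ω, 0 ≤ ξ ω) (hv : Adm X B i v)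
    (hvb : ∀ ω, |v ω| ≤ 2 * (κ * τ)) {α : ℝ} (hα : α = 24 * η * Z ^ 6) {x : ℝ} (hx : Z - 2 ≤ x) :
    ∫ ω, ξ ω * indIcc x (x + α) (SX X Finset.univ ω - v ω) ∂μ ≤ 10 ^ 19 * α * (Z ^ 3)⁻¹ * ∫ ω, ξ ω ∂μ := by
  have h := r.ld
  have hZ := r.hZ
  have hη := r.hη
  have hα0 : 0 < α := by rw [hα]; positivity
  have hα1 : α ≤ 1 / 2 := by linarith [r.hη6]
  have hR := r.hR
  set W := SX X Finset.univ with hW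
  set U := SX X (C i)ᶜ with hU
  set G := κ ^ 2 * bet μ X with hG
  have hWb : BdM W := h.sb _
  have hUb : BdM U := h.sb _
  have hTb : BdM (fun ω => W ω - v ω) := hWb.sub hv.b
  have hG0 : 0 ≤ G := mul_nonneg (sq_nonneg _) bet_nonneg
  have Z3 : 0 < (Z ^ 3)⁻¹ := by positivity
  have hGα : G ≤ α / 24 * (Z ^ 3)⁻¹ := by
    refine r.G_le.trans (le_of_eq ?_)
    rw [hα]; field_simp
  have Z31 : (Z ^ 3)⁻¹ ≤ 1 := inv_le_one_of_one_le₀ (one_le_pow₀ hZ)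
  have hGα' : G ≤ α / 24 := hGα.trans (mul_le_of_le_one_right (by positivity) Z31)
  set eξ := ∫ ω, ξ ω ∂μ with heξ
  have eξ0 : 0 ≤ eξ := integral_nonneg hξ0
  set q : ℝ → ℝ := fun x => ∫ ω, ξ ω * indIcc x (x + α) (W ω - v ω) ∂μ with hq
  have qb : ∀ x, BdM (fun ω => ξ ω * indIcc x (x + α) (W ω - v ω)) := fun x => hξ.b.mul (BdM.indIcc hTb.1 _ _)
  have q1 : ∀ x, q x ≤ eξ := fun x => imono (qb x) hξ.b fun ω => mul_le_of_le_one_right (hξ0 ω) (indIcc_le_one _ _ _)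
  have qbd : BddAbove (Set.range q) := ⟨eξ, by rintro _ ⟨x, rfl⟩; exact q1 x⟩
  set δ := ⨆ x, q x with hδ
  have qδ : ∀ x, q x ≤ δ := fun x => le_ciSup qbd x
  have δ0 : 0 ≤ δ := le_trans (integral_nonneg fun ω => mul_nonneg (hξ0 ω) (indIcc_nonneg _ _ _)) (qδ 0)
  have main := fun x => h.conc0 hξ hξ0 hv hα0 qδ (r.hM i) x
  have i1 : ∀ x, BdM (fun ω => ξ ω * (|U ω| * indI x (W ω - v ω))) := fun x => hξ.b.mul (hUb.abs.mul (BdM.indI hTb.1 _))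
  have i2 : ∀ x, BdM (fun ω => ξ ω * indI x (W ω - v ω)) := fun x => hξ.b.mul (BdM.indI hTb.1 _)
  have hGd : 12 * δ * G / α ≤ δ / 2 := by
    rw [div_le_iff₀ hα0]
    nlinarith
  -- uniform bound
  have u1 : ∫ ω, ξ ω * |U ω| ∂μ ≤ 9 / 2 * eξ := r.U1 hξ hξ0
  have u2 : ∀ x, q x ≤ 31 * α * eξ + δ / 2 := by
    intro x
    have a1 : ∫ ω, ξ ω * (|U ω| * indI (x - α) (W ω - v ω)) ∂μ ≤ 9 / 2 * eξ :=
      (imono (i1 _) (hξ.b.mul hUb.abs) fun ω => mul_le_mul_of_nonneg_left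
        (mul_le_of_le_one_right (abs_nonneg _) (indI_le_one _ _)) (hξ0 ω)).trans u1
    have a2 : ∫ ω, ξ ω * indI (x - α - κ * τ) (W ω - v ω) ∂μ ≤ eξ :=
      imono (i2 _) hξ.b fun ω => mul_le_of_le_one_right (hξ0 ω) (indI_le_one _ _)
    have a3 := main x
    have a4 := mul_le_mul_of_nonneg_left a1 (by positivity : 0 ≤ 6 * α)
    have a5 := mul_le_mul_of_nonneg_left a2 (by positivity : 0 ≤ 3 * α)
    have a6 := mul_le_mul_of_nonneg_right hGα' eξ0
    have a7 : 0 ≤ α * eξ := by positivity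
    simp only [hq]
    linarith
  have u3 : δ ≤ 62 * α * eξ := by
    have : δ ≤ 31 * α * eξ + δ / 2 := ciSup_le u2
    linarith
  -- local bound
  have kt := r.KT hξ hξ0
  have kb : BdM (fun ω => ξ ω * ((1 + |W ω| + |U ω|) * indI (Z / 4 - 4) (W ω))) :=
    hξ.b.mul ((((BdM.const _).add hWb.abs).add hUb.abs).mul (BdM.indI hWb.1 _))
  have ind : ∀ y ω, Z - 5 / 2 - Z / 16 ≤ y → indI y (W ω - v ω) ≤ indI (Z / 4 - 4) (W ω) := by
    intro y ω hy
    rcases lt_or_ge (W ω - v ω) y with hu | hu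
    · rw [indI_of_lt hu]; exact indI_nonneg _ _
    · rw [indI_of_le hu, indI_of_le]
      have := (abs_le.1 (hvb ω)).1
      linarith
  have a1 : ∫ ω, ξ ω * (|U ω| * indI (x - α) (W ω - v ω)) ∂μ ≤ 10 ^ 17 * (Z ^ 3)⁻¹ * eξ := by
    refine le_trans (imono (i1 _) kb fun ω => mul_le_mul_of_nonneg_left ?_ (hξ0 ω)) kt
    refine mul_le_mul ?_ (ind _ _ (by linarith)) (indI_nonneg _ _) (by positivity)
    linarith [abs_nonneg (W ω)]
  have a2 : ∫ ω, ξ ω * indI (x - α - κ * τ) (W ω - v ω) ∂μ ≤ 10 ^ 17 * (Z ^ 3)⁻¹ * eξ := by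
    refine le_trans (imono (i2 _) kb fun ω => mul_le_mul_of_nonneg_left ?_ (hξ0 ω)) kt
    refine (ind _ _ (by linarith)).trans (le_mul_of_one_le_left (indI_nonneg _ _) ?_)
    linarith [abs_nonneg (W ω), abs_nonneg (U ω)]
  have a3 := main x
  have a4 := mul_le_mul_of_nonneg_left a1 (by positivity : 0 ≤ 6 * α)
  have a5 := mul_le_mul_of_nonneg_left a2 (by positivity : 0 ≤ 3 * α)
  have a6 := mul_le_mul_of_nonneg_right hGα eξ0
  have a7 : 0 ≤ α * (Z ^ 3)⁻¹ * eξ := by positivity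
  have a8 : 12 * δ * G / α ≤ 31 * (α * (Z ^ 3)⁻¹ * eξ) := by
    rw [div_le_iff₀ hα0]
    calc 12 * δ * G ≤ 12 * (62 * α * eξ) * (α / 24 * (Z ^ 3)⁻¹) := by gcongr
      _ = _ := by ring
  have a9 : ∫ ω, ξ ω * indIcc x (x + α) (W ω - v ω) ∂μ = q x := rfl
  linarith
end Reg
end

set_option linter.unusedVariables false
set_option linter.unusedSectionVars false

section
variable {Ω ι : Type} [MeasurableSpace Ω] [Fintype ι] [DecidableEq ι] {μ : Measure Ω} [IsProbabilityMeasure μ]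
    {X : ι → Ω → ℝ} {A B C : ι → Finset ι} {κ τ η Z : ℝ}

namespace Reg
variable (r : Reg μ X A B C κ τ η Z)
include r

lemma H0 {i : ι} {ξ : Ω → ℝ} (hξ : Adm X B i ξ) (hξ0 : ∀ ω, 0 ≤ ξ ω) :
    ∫ ω, ξ ω * (2 * (Z ^ 4)⁻¹ * (1 + Z + |SX X Finset.univ ω|) +
      2 * ((1 + |SX X Finset.univ ω| + |SX X (C i)ᶜ ω|) * indI (Z / 4 - 4) (SX X Finset.univ ω))) ∂μ ≤
      10 ^ 18 * (Z ^ 3)⁻¹ * ∫ ω, ξ ω ∂μ := by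
  have h := r.ld
  have hZ := r.hZ
  have kt := r.KT hξ hξ0
  have u1 := r.U1 hξ hξ0
  set W := SX X Finset.univ with hW
  set U := SX X (C i)ᶜ with hU
  have hWb : BdM W := h.sb _
  have hUb : BdM U := h.sb _
  set e := ∫ ω, ξ ω ∂μ with he
  have e0 : 0 ≤ e := integral_nonneg hξ0
  have w1 : ∀ ω, |W ω| ≤ |U ω| + Z := fun ω => by
    have hWU : W ω = U ω + SX X (C i) ω := by rw [hU, ← SX_compl]; ring
    rw [hWU]
    refine (abs_add_le _ _).trans ?_
    have := (h.SX_le (subset_refl (C i)) ω).trans r.hR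
    linarith
  have kb : BdM (fun ω => ξ ω * ((1 + |W ω| + |U ω|) * indI (Z / 4 - 4) (W ω))) :=
    hξ.b.mul ((((BdM.const _).add hWb.abs).add hUb.abs).mul (BdM.indI hWb.1 _))
  have kb2 : BdM (fun ω => ξ ω * |U ω|) := hξ.b.mul hUb.abs
  have z4 : 0 < (Z ^ 4)⁻¹ := by positivity
  have : ∫ ω, ξ ω * (2 * (Z ^ 4)⁻¹ * (1 + Z + |W ω|) + 2 * ((1 + |W ω| + |U ω|) * indI (Z / 4 - 4) (W ω))) ∂μ ≤
      ∫ ω, (2 * (Z ^ 4)⁻¹ * (3 * Z) * ξ ω + 2 * (Z ^ 4)⁻¹ * (ξ ω * |U ω|) + 2 * (ξ ω * ((1 + |W ω| + |U ω|) * indI (Z / 4 - 4) (W ω)))) ∂μ := by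
    refine imono (hξ.b.mul (((BdM.const _).mul ((BdM.const _).add hWb.abs)).add
      ((BdM.const _).mul ((((BdM.const _).add hWb.abs).add hUb.abs).mul (BdM.indI hWb.1 _)))))
      ((((BdM.const _).mul hξ.b).add ((BdM.const _).mul kb2)).add ((BdM.const _).mul kb)) fun ω => ?_
    have a1 := mul_le_mul_of_nonneg_left (by linarith [w1 ω] : 1 + Z + |W ω| ≤ 3 * Z + |U ω|) (mul_nonneg (hξ0 ω) z4.le)
    linarith
  rw [integral_add (((BdM.const _).mul hξ.b).add ((BdM.const _).mul kb2)).int ((BdM.const _).mul kb).int,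
    integral_add ((BdM.const _).mul hξ.b).int ((BdM.const _).mul kb2).int, integral_const_mul, integral_const_mul,
    integral_const_mul] at this
  have z1 : (Z ^ 4)⁻¹ * Z = (Z ^ 3)⁻¹ := by field_simp
  have z2 : (Z ^ 4)⁻¹ ≤ (Z ^ 3)⁻¹ := by rw [← z1]; exact le_mul_of_one_le_right z4.le hZ
  have a1 : 2 * (Z ^ 4)⁻¹ * (∫ ω, ξ ω * |U ω| ∂μ) ≤ 2 * (Z ^ 3)⁻¹ * (9 / 2 * e) := by
    have : 0 ≤ ∫ ω, ξ ω * |U ω| ∂μ := integral_nonneg fun ω => mul_nonneg (hξ0 ω) (abs_nonneg _)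
    gcongr
  have a2 : 2 * (Z ^ 4)⁻¹ * (3 * Z) * e = 6 * ((Z ^ 3)⁻¹ * e) := by rw [← z1]; ring
  have a3 : 0 ≤ (Z ^ 3)⁻¹ * e := by positivity
  rw [a2] at this
  linarith

lemma H {c a b : ℝ} (hc0 : 0 ≤ c) (hc : ∀ w, |stg a b w| ≤ c * (1 + |w|) * ((Z ^ 4)⁻¹ + indI (Z / 2 - 3) w))
    (ha : Z - 2 ≤ a) (hb : b = a + 24 * η * Z ^ 6) (i : ι) (ξ v1 v2 : Ω → ℝ) (hξ : Adm X B i ξ) (hv1 : Adm X B i v1)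
    (hv2 : Adm X B i v2) (hξ0 : ∀ ω, 0 ≤ ξ ω) (b1 : ∀ ω, |v1 ω| ≤ κ * τ) (b2 : ∀ ω, |v2 ω| ≤ κ * τ) :
    ∫ ω, ξ ω * |stphi a b (SX X Finset.univ ω - v1 ω) - stphi a b (SX X Finset.univ ω - v2 ω)| ∂μ ≤
      ((10 ^ 18 * c + 10 ^ 19) * (Z ^ 3)⁻¹) * ∫ ω, ξ ω * |v1 ω - v2 ω| ∂μ := by
  have h := r.ld
  have hZ := r.hZ
  have hη := r.hη
  have hR := r.hR
  set α := 24 * η * Z ^ 6 with hα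
  have α0 : 0 < α := by positivity
  have hab : a < b := by linarith
  set ζ : Ω → ℝ := fun ω => ξ ω * |v1 ω - v2 ω| with hζ
  have hζA : Adm X B i ζ := hξ.mul (hv1.sub hv2).abs
  have ζ0 : ∀ ω, 0 ≤ ζ ω := fun ω => mul_nonneg (hξ0 ω) (abs_nonneg _)
  have k0 := r.H0 hζA ζ0
  set W := SX X Finset.univ with hW
  set U := SX X (C i)ᶜ with hU
  have hWb : BdM W := h.sb _
  have hUb : BdM U := h.sb _
  set e := ∫ ω, ζ ω ∂μ with he
  have e0 : 0 ≤ e := integral_nonneg ζ0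
  set Hf : Ω → ℝ := fun ω => 2 * (Z ^ 4)⁻¹ * (1 + Z + |W ω|) + 2 * ((1 + |W ω| + |U ω|) * indI (Z / 4 - 4) (W ω)) with hHf
  have hHfb : BdM Hf := ((BdM.const _).mul ((BdM.const _).add hWb.abs)).add
      ((BdM.const _).mul ((((BdM.const _).add hWb.abs).add hUb.abs).mul (BdM.indI hWb.1 _)))
  have z4 : 0 < (Z ^ 4)⁻¹ := by positivity
  have gb : ∀ ω w, |w - W ω| ≤ Z / 16 → |stg a b w| ≤ c * Hf ω := by
    intro ω w hw
    have w1 := abs_le.1 hw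
    have aw : |w| ≤ |W ω| + Z / 16 := by
      have : w = (w - W ω) + W ω := by ring
      rw [this]; exact (abs_add_le _ _).trans (by linarith)
    refine (hc w).trans ?_
    rw [mul_assoc]
    refine mul_le_mul_of_nonneg_left ?_ hc0
    have i0 := indI_nonneg (Z / 4 - 4) (W ω)
    have aW := abs_nonneg (W ω)
    have aU := abs_nonneg (U ω)
    have aw0 := abs_nonneg w
    have p1 : (1 + |w|) * (Z ^ 4)⁻¹ ≤ 2 * (Z ^ 4)⁻¹ * (1 + Z + |W ω|) := by nlinarith
    have p2 : (1 + |w|) * indI (Z / 2 - 3) w ≤ 2 * ((1 + |W ω| + |U ω|) * indI (Z / 4 - 4) (W ω)) := by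
      rcases lt_or_ge w (Z / 2 - 3) with hl | hl
      · rw [indI_of_lt hl, mul_zero]; positivity
      · rw [indI_of_le hl, indI_of_le (by linarith)]
        have := le_abs_self (W ω)
        linarith
    simp only [hHf]
    rw [mul_add]; exact add_le_add p1 p2
  have F : ∀ ω, |(W ω - v1 ω) * stf a b (W ω - v1 ω) - (W ω - v2 ω) * stf a b (W ω - v2 ω)| ≤ c * Hf ω * |v1 ω - v2 ω| := by
    intro ω
    have hs : Convex ℝ (Set.Icc (W ω - Z / 16) (W ω + Z / 16)) := convex_Icc _ _
    have m : ∀ v : ℝ, |v| ≤ κ * τ → W ω - v ∈ Set.Icc (W ω - Z / 16) (W ω + Z / 16) := fun v hv => by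
      have := abs_le.1 (hv.trans hR)
      constructor <;> linarith
    have := hs.norm_image_sub_le_of_norm_hasDerivWithin_le (f := fun w => w * stf a b w) (f' := stg a b) (C := c * Hf ω)
      (fun x _ => (stf_mul_hasDeriv a b x).hasDerivWithinAt)
      (fun x hx => gb ω x (abs_le.2 ⟨by linarith [hx.1], by linarith [hx.2]⟩)) (m _ (b2 ω)) (m _ (b1 ω))
    rw [Real.norm_eq_abs, Real.norm_eq_abs] at this
    rw [show W ω - v1 ω - (W ω - v2 ω) = -(v1 ω - v2 ω) by ring, abs_neg] at this
    exact this
  -- ramp part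
  set vt : ℝ → Ω → ℝ := fun t ω => v2 ω + (v1 ω - v2 ω) * t with hvt
  have hvtA : ∀ t, Adm X B i (vt t) := fun t => hv2.add ((hv1.sub hv2).mul (Adm.const t))
  set R : Ω → ℝ := fun ω => ∫ t in (0:ℝ)..1, α⁻¹ * indIcc a b (W ω - vt t ω) with hRdef
  have Rm : Measurable (fun q : ℝ × Ω => indIcc a b (W q.2 - vt q.1 q.2)) :=
    (indIcc_meas a b).comp ((hWb.1.comp measurable_snd).sub ((hv2.b.1.comp measurable_snd).add
      (((hv1.b.1.sub hv2.b.1).comp measurable_snd).mul measurable_fst)))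
  have R0 : ∀ ω, 0 ≤ R ω := fun ω => intervalIntegral.integral_nonneg (by norm_num) fun t _ =>
    mul_nonneg (by positivity) (indIcc_nonneg _ _ _)
  have rs : ∀ ω, |ramp a b (W ω - v1 ω) - ramp a b (W ω - v2 ω)| = |v1 ω - v2 ω| * R ω := by
    intro ω
    rw [ramp_sub hab, abs_mul, show W ω - v1 ω - (W ω - v2 ω) = -(v1 ω - v2 ω) by ring, abs_neg]
    congr 1
    rw [show b - a = α by linarith]
    rw [← abs_of_nonneg (R0 ω)]
    congr 1
    refine intervalIntegral.integral_congr fun t _ => ?_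
    simp only [hvt]
    congr 2; ring
  have RB : BdM R := by
    refine ⟨?_, α⁻¹ * |1 - 0|, fun ω => ?_⟩
    · simp only [hRdef, intervalIntegral.integral_of_le zero_le_one]
      have := (Rm.const_mul α⁻¹).stronglyMeasurable.integral_prod_left' (μ := volume.restrict (Set.Ioc (0:ℝ) 1))
      exact this.measurable
    · have hh : ∀ t ∈ Set.uIoc (0:ℝ) 1, ‖α⁻¹ * indIcc a b (W ω - vt t ω)‖ ≤ α⁻¹ := fun t _ => by
        rw [Real.norm_eq_abs, abs_of_nonneg (mul_nonneg (by positivity) (indIcc_nonneg _ _ _))]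
        exact mul_le_of_le_one_right (by positivity) (indIcc_le_one _ _ _)
      exact intervalIntegral.norm_integral_le_of_norm_le_const hh
  obtain ⟨Kζ, hKζ⟩ := hζA.b.2
  have RE : ∫ ω, ζ ω * R ω ∂μ ≤ 10 ^ 19 * (Z ^ 3)⁻¹ * e := by
    have e1 : ∀ ω, ζ ω * R ω = ∫ t in (0:ℝ)..1, α⁻¹ * (ζ ω * indIcc a b (W ω - vt t ω)) := fun ω => by
      simp only [hRdef]
      rw [← intervalIntegral.integral_const_mul]
      refine intervalIntegral.integral_congr fun t _ => ?_
      ring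
    simp only [e1]
    have jm : Measurable (fun q : ℝ × Ω => α⁻¹ * (ζ q.2 * indIcc a b (W q.2 - vt q.1 q.2))) :=
      ((hζA.b.1.comp measurable_snd).mul Rm).const_mul _
    have jk : ∀ t ω, |α⁻¹ * (ζ ω * indIcc a b (W ω - vt t ω))| ≤ α⁻¹ * Kζ := fun t ω => by
      rw [abs_mul, abs_mul, abs_of_nonneg (by positivity : 0 ≤ α⁻¹), abs_of_nonneg (indIcc_nonneg _ _ _)]
      refine mul_le_mul_of_nonneg_left ?_ (by positivity)
      exact (mul_le_of_le_one_right (abs_nonneg _) (indIcc_le_one _ _ _)).trans (hKζ ω)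
    rw [fub (F := fun t ω => α⁻¹ * (ζ ω * indIcc a b (W ω - vt t ω))) zero_le_one jm jk]
    have : ∫ t in (0:ℝ)..1, ∫ ω, α⁻¹ * (ζ ω * indIcc a b (W ω - vt t ω)) ∂μ ≤ ∫ t in (0:ℝ)..1, 10 ^ 19 * (Z ^ 3)⁻¹ * e := by
      refine intervalIntegral.integral_mono_on zero_le_one (ii_of_bdd jm jk) intervalIntegrable_const fun t ht => ?_
      rw [integral_const_mul]
      have := r.conc hζA ζ0 (hvtA t) (fun ω => ?_) hα ha
      · rw [← hb] at this
        refine (mul_le_mul_of_nonneg_left this (by positivity)).trans (le_of_eq ?_)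
        field_simp
        rfl
      · simp only [hvt]
        rw [show v2 ω + (v1 ω - v2 ω) * t = (1 - t) * v2 ω + t * v1 ω by ring]
        refine (abs_add_le _ _).trans ?_
        rw [abs_mul, abs_mul, abs_of_nonneg ht.1, abs_of_nonneg (sub_nonneg.2 ht.2)]
        have q1 := abs_nonneg (v1 ω)
        have q2 := abs_nonneg (v2 ω)
        have q3 := b1 ω
        have q4 := b2 ω
        have q5 := mul_le_of_le_one_left q1 ht.2
        have q6 := mul_le_of_le_one_left q2 (by linarith [ht.1] : 1 - t ≤ 1)
        linarith
    simpa using this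
  have fin : ∫ ω, ξ ω * |stphi a b (W ω - v1 ω) - stphi a b (W ω - v2 ω)| ∂μ ≤ ∫ ω, (c * (ζ ω * Hf ω) + ζ ω * R ω) ∂μ := by
    have sc := stphi_cont a b
    refine imono (hξ.b.mul (((hWb.sub hv1.b).comp_cont sc).sub ((hWb.sub hv2.b).comp_cont sc)).abs)
      (((BdM.const _).mul (hζA.b.mul hHfb)).add (hζA.b.mul RB)) fun ω => ?_
    have t1 : |stphi a b (W ω - v1 ω) - stphi a b (W ω - v2 ω)| ≤ c * Hf ω * |v1 ω - v2 ω| + |v1 ω - v2 ω| * R ω := by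
      refine le_trans ?_ (add_le_add (F ω) (rs ω).le)
      refine le_trans (le_of_eq ?_) (abs_add_le _ _)
      unfold stphi
      congr 1; ring
    refine (mul_le_mul_of_nonneg_left t1 (hξ0 ω)).trans (le_of_eq ?_)
    simp only [hζ]; ring
  rw [integral_add ((BdM.const _).mul (hζA.b.mul hHfb)).int (hζA.b.mul RB).int, integral_const_mul] at fin
  have := mul_le_mul_of_nonneg_left k0 hc0
  linarith

lemma rampE {c a b : ℝ} (hc0 : 0 ≤ c) (hc : ∀ w, |stphi a b w| ≤ c * ((Z ^ 4)⁻¹ + indI (Z / 2 - 3) w) ∧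
      |stg a b w| ≤ c * (1 + |w|) * ((Z ^ 4)⁻¹ + indI (Z / 2 - 3) w))
    (ha : Z - 2 ≤ a) (hb : b = a + 24 * η * Z ^ 6) :
    |∫ ω, ramp a b (SX X Finset.univ ω) ∂μ - Nr a b| ≤ 10 ^ 20 * (c + 1) * η := by
  have h := r.ld
  have hZ := r.hZ
  have hη := r.hη
  have hab : a < b := by rw [hb]; have : 0 < 24 * η * Z ^ 6 := by positivity
                         linarith
  have st := h.stein (f := stf a b) (φ := stphi a b) (stphi_cont a b) (fun w => stf_hasDeriv a b w)
    (K := (10 ^ 18 * c + 10 ^ 19) * (Z ^ 3)⁻¹) (by linarith [r.k1]) (by positivity)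
    (r.H hc0 (fun w => (hc w).2) ha hb)
  set W := SX X Finset.univ with hW
  have hWb : BdM W := h.sb _
  have fc : Continuous (stf a b) := continuous_iff_continuousAt.2 fun w => (stf_hasDeriv a b w).continuousAt
  have pb : BdM (fun ω => stphi a b (W ω)) := hWb.comp_cont (stphi_cont a b)
  have rb : BdM (fun ω => ramp a b (W ω)) := hWb.comp_cont (ramp_cont a b)
  have fb : BdM (fun ω => W ω * stf a b (W ω)) := hWb.mul (hWb.comp_cont fc)
  have e1 : ∫ ω, stphi a b (W ω) ∂μ = ∫ ω, W ω * stf a b (W ω) ∂μ + (∫ ω, ramp a b (W ω) ∂μ - Nr a b) := by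
    unfold stphi
    rw [integral_add fb.int (rb.sub (BdM.const _)).int, integral_sub rb.int (BdM.const _).int]
    simp
  have z2 : 0 < (Z ^ 2)⁻¹ := by positivity
  have e2 : ∫ ω, indI (Z / 2 - 3) (W ω) ∂μ ≤ 3 * 10 ^ 16 * (Z ^ 2)⁻¹ := by
    rcases lt_or_ge Z 7 with hz | hz
    · have : ∫ ω, indI (Z / 2 - 3) (W ω) ∂μ ≤ ∫ ω, (1:ℝ) ∂μ := imono (BdM.indI hWb.1 _) (BdM.const _) fun ω => indI_le_one _ _
      simp at this
      have z : (49:ℝ)⁻¹ ≤ (Z ^ 2)⁻¹ := by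
        apply inv_anti₀ (by positivity); nlinarith
      linarith
    · refine (r.tl (by linarith)).trans ?_
      have : (Z ^ 6)⁻¹ ≤ (Z ^ 2)⁻¹ := by
        apply inv_anti₀ (by positivity); exact pow_le_pow_right₀ hZ (by norm_num)
      linarith
  have e3 : |∫ ω, stphi a b (W ω) ∂μ| ≤ c * (4 * 10 ^ 16 * (Z ^ 2)⁻¹) := by
    refine abs_int_le.trans ?_
    have : ∫ ω, |stphi a b (W ω)| ∂μ ≤ ∫ ω, c * ((Z ^ 4)⁻¹ + indI (Z / 2 - 3) (W ω)) ∂μ :=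
      imono pb.abs ((BdM.const _).mul ((BdM.const _).add (BdM.indI hWb.1 _))) fun ω => (hc _).1
    rw [integral_const_mul, integral_add (BdM.const _).int (BdM.indI hWb.1 _).int] at this
    refine this.trans (mul_le_mul_of_nonneg_left ?_ hc0)
    have : (Z ^ 4)⁻¹ ≤ (Z ^ 2)⁻¹ := by
      apply inv_anti₀ (by positivity); exact pow_le_pow_right₀ hZ (by norm_num)
    simp
    linarith
  have e4 : |(1 - ∫ ω, W ω ^ 2 ∂μ) * ∫ ω, stphi a b (W ω) ∂μ| ≤ 4 * 10 ^ 16 * c * η := by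
    rw [abs_mul, abs_sub_comm]
    calc _ ≤ η * Z ^ 2 * (c * (4 * 10 ^ 16 * (Z ^ 2)⁻¹)) := mul_le_mul r.hs e3 (abs_nonneg _) (by positivity)
      _ = _ := by field_simp
  have e5 : 3 * ((10 ^ 18 * c + 10 ^ 19) * (Z ^ 3)⁻¹) * (κ ^ 2 * bet μ X) ≤ 3 * (10 ^ 18 * c + 10 ^ 19) * η := by
    refine (mul_le_mul_of_nonneg_left r.G_le (by positivity)).trans (le_of_eq ?_)
    field_simp
  have e6 : ∫ ω, ramp a b (W ω) ∂μ - Nr a b = (1 - ∫ ω, W ω ^ 2 ∂μ) * (∫ ω, stphi a b (W ω) ∂μ) -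
      (∫ ω, W ω * stf a b (W ω) ∂μ - (∫ ω, W ω ^ 2 ∂μ) * ∫ ω, stphi a b (W ω) ∂μ) := by
    linarith
  rw [e6]
  refine (abs_sub _ _).trans ?_
  have : 0 ≤ c * η := by positivity
  linarith
end Reg
end

set_option linter.unusedVariables false
set_option linter.unusedSectionVars false

lemma dens : ∃ D : ℝ, 0 < D ∧ ∀ Z t : ℝ, 1 ≤ Z → Z - 3 ≤ t → Z ^ 6 * Real.exp (-t ^ 2 / 2) ≤ D := by
  obtain ⟨C, hC, h⟩ := pow_exp_bound 6
  refine ⟨C + 729, by positivity, fun Z t hZ ht => ?_⟩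
  rcases le_total 0 t with h0 | h0
  · have h1 := h t h0 Z (by linarith) (by linarith)
    have h2 : Real.exp (-t ^ 2 / 2) ≤ Real.exp (-(3 * t ^ 2 / 8)) := Real.exp_le_exp.2 (by nlinarith [sq_nonneg t])
    have h3 := mul_le_mul_of_nonneg_left h2 (by positivity : 0 ≤ Z ^ 6)
    linarith
  · have h1 : Z ^ 6 ≤ 3 ^ 6 := by
      have : Z ≤ 3 := by linarith
      gcongr
    have h2 : Real.exp (-t ^ 2 / 2) ≤ 1 := Real.exp_le_one_iff.2 (by nlinarith [sq_nonneg t])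
    have h3 := mul_le_of_le_one_right (by positivity : 0 ≤ Z ^ 6) h2
    norm_num at h1
    linarith

section
variable {Ω : Type} [MeasurableSpace Ω] {μ : Measure Ω} [IsProbabilityMeasure μ]

lemma int_indI {W : Ω → ℝ} (hW : Measurable W) (y : ℝ) : ∫ ω, indI y (W ω) ∂μ = μ.real {ω | y ≤ W ω} := by
  have : (fun ω => indI y (W ω)) = Set.indicator {ω | y ≤ W ω} 1 := by
    ext ω; simp [indI, Set.indicator]
  rw [this, integral_indicator_one (measurableSet_le measurable_const hW)]

lemma real_Ioi_eq {W : Ω → ℝ} (hW : Measurable W) (y : ℝ) :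
    ∫ ω, Set.indicator {ω | y < W ω} (1 : Ω → ℝ) ω ∂μ = μ.real {ω | y < W ω} :=
  integral_indicator_one (measurableSet_lt measurable_const hW)
end

theorem core : ∃ K : ℝ, 0 < K ∧ ∀ (Ω : Type) [MeasurableSpace Ω] (μ : Measure Ω) [IsProbabilityMeasure μ]
    (ι : Type) [Fintype ι] [DecidableEq ι] (X : ι → Ω → ℝ) (A B C : ι → Finset ι) (κ τ η Z : ℝ),
    LD μ X A B C κ τ → 1 ≤ κ → 1 ≤ Z → 0 < η → κ * τ ≤ Z / 16 → κ ^ 3 * bet μ X ≤ η * Z ^ 3 →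
    |∫ ω, SX X Finset.univ ω ^ 2 ∂μ - 1| ≤ η * Z ^ 2 → η * Z ^ 2 ≤ 1 → ∀ y : ℝ, |y - (Z - 1)| ≤ 1 / 2 →
    μ.real {ω | y ≤ SX X Finset.univ ω} ≤ 1 - stdGaussianCDF y + K * η ∧
      1 - stdGaussianCDF y - K * η ≤ μ.real {ω | y < SX X Finset.univ ω} := by
  obtain ⟨c, hc0, hc⟩ := stf_main
  obtain ⟨D, hD0, hD⟩ := dens
  refine ⟨10 ^ 20 * (c + 1) + 10 ^ 18 + 1000 * D, by positivity, ?_⟩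
  intro Ω _ μ _ ι _ _ X A B C κ τ η Z h hκ hZ hη hR h3 hs hη2 y hy
  have hy' := abs_le.1 hy
  set W := SX X Finset.univ with hW
  have hWb : BdM W := h.sb _
  have hI : BdM (Set.indicator {ω | y < W ω} (1 : Ω → ℝ)) := by
    refine ⟨measurable_one.indicator (measurableSet_lt measurable_const hWb.1), 1, fun ω => ?_⟩
    simp only [Set.indicator]; split_ifs <;> simp
  rw [← int_indI hWb.1, ← real_Ioi_eq hWb.1]
  have I0 : 0 ≤ ∫ ω, Set.indicator {ω | y < W ω} (1 : Ω → ℝ) ω ∂μ :=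
    integral_nonneg fun ω => Set.indicator_nonneg (fun _ _ => zero_le_one) _
  have I1 : ∫ ω, indI y (W ω) ∂μ ≤ 1 := by
    have : ∫ ω, indI y (W ω) ∂μ ≤ ∫ ω, (1:ℝ) ∂μ := imono (BdM.indI hWb.1 _) (BdM.const _) fun ω => indI_le_one _ _
    simpa using this
  have P1 := cdf_nonneg y
  have P2 := cdf_le_one y
  have cη : 0 ≤ c * η := by positivity
  have Dη : 0 ≤ D * η := by positivity
  rcases lt_or_ge (1 / 48) (η * Z ^ 6) with hreg | hreg
  · have z6 : (Z ^ 6)⁻¹ ≤ 48 * η := by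
      rw [inv_le_iff_one_le_mul₀ (by positivity)]; linarith
    rcases lt_or_ge Z 2 with hz | hz
    · have : Z ^ 6 ≤ 2 ^ 6 := by gcongr
      have : 1 ≤ 48 * 64 * η := by nlinarith
      constructor <;> linarith
    · have G_le : κ ^ 2 * bet μ X ≤ η * Z ^ 3 := by
        refine le_trans ?_ h3
        have : 0 ≤ bet μ X := bet_nonneg
        gcongr
        · norm_num
      have hs2 : ∫ ω, W ω ^ 2 ∂μ ≤ 2 := by linarith [(abs_le.1 hs).2]
      have t1 := h.tail (y := y) (by linarith) hZ hs2 G_le hη.le (by linarith)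
      have t2 := cdf_tail (a := y) (by linarith)
      have t3 := hD Z y hZ (by linarith)
      have t4 : Real.exp (-y ^ 2 / 2) ≤ 48 * η * D := by
        calc Real.exp (-y ^ 2 / 2) = (Z ^ 6)⁻¹ * (Z ^ 6 * Real.exp (-y ^ 2 / 2)) := by field_simp
          _ ≤ 48 * η * D := by gcongr
      constructor <;> linarith
  · have r : Reg μ X A B C κ τ η Z := ⟨h, hZ, hη, hreg, hR, h3, hs⟩
    set α := 24 * η * Z ^ 6 with hα
    have α0 : 0 < α := by positivity
    have α1 : α ≤ 1 / 2 := by linarith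
    have dd : ∀ t, y - α ≤ t → α * Real.exp (-t ^ 2 / 2) ≤ 24 * D * η := fun t ht => by
      have := mul_le_mul_of_nonneg_left (hD Z t hZ (by linarith)) (by positivity : 0 ≤ 24 * η)
      rw [hα]; linarith
    have dd2 : ∀ t, y - α ≤ t → Real.exp (-t ^ 2 / 2) ≤ 24 * D * η / α := fun t ht => by
      rw [le_div_iff₀ α0, mul_comm]; exact dd t ht
    have ad : α * (24 * D * η / α) = 24 * D * η := by field_simp
    constructor
    · have r1 := r.rampE (c := c) (a := y - α) (b := y) hc0.le (hc Z _ _ hZ (by linarith) (by linarith)) (by linarith) (by rw [← hα]; ring)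
      have r2 := (abs_le.1 r1).2
      have r3 := Nr_le (a := y - α) (b := y) (by linarith)
      have r4 := (cdf_incr (x := y - α) (y := y) (D := 24 * D * η / α) (by linarith) fun t ht => dd2 t ht.1.le).2
      rw [show y - (y - α) = α by ring, ad] at r4
      have r5 : ∫ ω, indI y (W ω) ∂μ ≤ ∫ ω, ramp (y - α) y (W ω) ∂μ := by
        refine imono (BdM.indI hWb.1 _) (hWb.comp_cont (ramp_cont _ _)) fun ω => ?_
        rcases lt_or_ge (W ω) y with hw | hw
        · rw [indI_of_lt hw]; exact ramp_nonneg _ _ _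
        · rw [ramp_right (by linarith) hw]; exact indI_le_one _ _
      linarith
    · have r1 := r.rampE (c := c) (a := y) (b := y + α) hc0.le (hc Z _ _ hZ (by linarith) (by linarith)) (by linarith) rfl
      have r2 := (abs_le.1 r1).1
      have r3 := Nr_ge (a := y) (b := y + α) (by linarith)
      have r4 := (cdf_incr (x := y) (y := y + α) (D := 24 * D * η / α) (by linarith) fun t ht => dd2 t (by linarith [ht.1])).2
      rw [show y + α - y = α by ring, ad] at r4
      have r5 : ∫ ω, ramp y (y + α) (W ω) ∂μ ≤ ∫ ω, Set.indicator {ω | y < W ω} (1 : Ω → ℝ) ω ∂μ := by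
        refine imono (hWb.comp_cont (ramp_cont _ _)) hI fun ω => ?_
        rcases le_or_gt (W ω) y with hw | hw
        · rw [ramp_left (by linarith) hw]; exact Set.indicator_nonneg (fun _ _ => zero_le_one) _
        · rw [Set.indicator_of_mem (by exact hw)]; exact ramp_le_one _ _ _
      linarith

set_option linter.unusedVariables false
set_option linter.unusedSectionVars false

/-- hypotheses before truncation -/
structure HY {Ω ι : Type} [MeasurableSpace Ω] [Fintype ι] [DecidableEq ι] (μ : Measure Ω)
    (X : ι → Ω → ℝ) (A B C : ι → Finset ι) (κ p : ℝ) : Prop where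
  p2 : 2 < p
  p3 : p ≤ 3
  meas : ∀ i, Measurable (X i)
  int : ∀ i, Integrable (fun ω => |X i ω| ^ p) μ
  mean : ∀ i, ∫ ω, X i ω ∂μ = 0
  memA : ∀ i, i ∈ A i
  AB : ∀ i, A i ⊆ B i
  BC : ∀ i, B i ⊆ C i
  cardC : ∀ i, ((C i).card : ℝ) ≤ κ
  cardC' : ∀ i, ((Finset.univ.filter fun j => i ∈ C j).card : ℝ) ≤ κ
  J1 : ∀ i, Indep (sgm X {i}) (sgm X {j | j ∉ A i}) μ
  J2 : ∀ i, Indep (sgm X {j | j ∈ A i}) (sgm X {j | ∃ l, l ∉ B i ∧ j ∈ A l}) μ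
  J3 : ∀ i, Indep (sgm X {j | j ∈ B i}) (sgm X {j | ∃ l, l ∉ C i ∧ j ∈ A l}) μ
  var : ∫ ω, SX X Finset.univ ω ^ 2 ∂μ = 1

/-- truncation -/
noncomputable def trn (t x : ℝ) : ℝ := if |x| ≤ t then x else 0
noncomputable def qf (p t x : ℝ) : ℝ := (|x| / t) ^ p

lemma trn_meas (t : ℝ) : Measurable (trn t) := by
  unfold trn
  exact Measurable.ite (measurableSet_le measurable_id.abs measurable_const) measurable_id measurable_const

section qsec
variable {p t x y : ℝ}
lemma qf_nonneg (ht : 0 < t) : 0 ≤ qf p t x := by unfold qf; positivity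

lemma qf_ge (hp : 2 < p) (ht : 0 < t) (hx : t < |x|) {k : ℕ} (hk : k ≤ 2) : (|x| / t) ^ k ≤ qf p t x := by
  unfold qf
  have h1 : 1 ≤ |x| / t := by rw [le_div_iff₀ ht]; linarith
  rw [← Real.rpow_natCast]
  have : (k : ℝ) ≤ 2 := by exact_mod_cast hk
  exact Real.rpow_le_rpow_of_exponent_le h1 (by linarith)

lemma qf1 (hp : 2 < p) (ht : 0 < t) (hx : t < |x|) : 1 ≤ qf p t x := by
  simpa using qf_ge hp ht hx (k := 0) (by norm_num)

lemma qf2 (hp : 2 < p) (ht : 0 < t) (hx : t < |x|) : |x| ≤ t * qf p t x := by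
  have := qf_ge hp ht hx (k := 1) (by norm_num)
  rw [pow_one, div_le_iff₀ ht] at this
  linarith

lemma qf3 (hp : 2 < p) (ht : 0 < t) (hx : t < |x|) : x ^ 2 ≤ t ^ 2 * qf p t x := by
  have := qf_ge hp ht hx (k := 2) (by norm_num)
  rw [div_pow, div_le_iff₀ (by positivity), sq_abs] at this
  linarith

lemma trn_le (ht : 0 < t) : |trn t x| ≤ t := by
  unfold trn; split_ifs with h
  · exact h
  · simpa using ht.le

lemma trn_sub (hp : 2 < p) (ht : 0 < t) : |x - trn t x| ≤ t * qf p t x := by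
  unfold trn; split_ifs with h
  · simpa using mul_nonneg ht.le (qf_nonneg ht)
  · simpa using qf2 hp ht (not_le.1 h)

lemma trn_cube (hp : p ≤ 3) (hp0 : 2 < p) (ht : 0 < t) : |trn t x| ^ 3 ≤ t ^ 3 * qf p t x := by
  unfold trn; split_ifs with h
  · have h1 : |x| / t ≤ 1 := by rw [div_le_one ht]; exact h
    have h2 : (|x| / t) ^ 3 ≤ qf p t x := by
      unfold qf
      rw [← Real.rpow_natCast]
      rcases (div_nonneg (abs_nonneg x) ht.le).eq_or_lt with h0 | h0
      · rw [← h0, Real.zero_rpow (by norm_num), Real.zero_rpow (by linarith)]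
      · exact Real.rpow_le_rpow_of_exponent_ge h0 h1 (by norm_num; exact hp)
    rw [div_pow, div_le_iff₀ (by positivity)] at h2
    linarith
  · simpa using mul_nonneg (by positivity : 0 ≤ t ^ 3) (qf_nonneg (p := p) (x := x) ht)

lemma abs_le_q (hp : 2 < p) (ht : 0 < t) : |x| ≤ t * (1 + qf p t x) := by
  rcases le_or_gt |x| t with h | h
  · nlinarith [mul_nonneg ht.le (qf_nonneg (p := p) (x := x) ht)]
  · nlinarith [qf2 hp ht h]

lemma sq_le_q (hp : 2 < p) (ht : 0 < t) : x ^ 2 ≤ t ^ 2 * (1 + qf p t x) := by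
  rcases le_or_gt |x| t with h | h
  · have : x ^ 2 ≤ t ^ 2 := by rw [← sq_abs]; gcongr
    nlinarith [mul_nonneg (sq_nonneg t) (qf_nonneg (p := p) (x := x) ht)]
  · nlinarith [qf3 hp ht h, sq_nonneg t]

lemma trn_prod (hp : 2 < p) (ht : 0 < t) :
    |x * y - trn t x * trn t y| ≤ t ^ 2 * (qf p t x + qf p t y) := by
  have hx0 := mul_nonneg (sq_nonneg t) (qf_nonneg (p := p) (x := x) ht)
  have hy0 := mul_nonneg (sq_nonneg t) (qf_nonneg (p := p) (x := y) ht)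
  have key : t < |x| ∨ t < |y| → |x * y| ≤ t ^ 2 * (qf p t x + qf p t y) := by
    intro h
    rw [abs_mul]
    rcases le_total |x| |y| with hh | hh
    · have : t < |y| := by rcases h with h | h <;> linarith
      have h3 := qf3 hp ht this
      rw [← sq_abs] at h3
      nlinarith [abs_nonneg x, abs_nonneg y]
    · have : t < |x| := by rcases h with h | h <;> linarith
      have h3 := qf3 hp ht this
      rw [← sq_abs] at h3
      nlinarith [abs_nonneg x, abs_nonneg y]
  unfold trn
  split_ifs with h1 h2 h2
  · simp; nlinarith
  · simpa using key (Or.inr (not_le.1 h2))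
  · simpa using key (Or.inl (not_le.1 h1))
  · simpa using key (Or.inl (not_le.1 h1))
end qsec

section trs
variable {Ω ι : Type} [MeasurableSpace Ω] [Fintype ι] [DecidableEq ι] (μ : Measure Ω) [IsProbabilityMeasure μ]
    (X : ι → Ω → ℝ) (t : ℝ)

noncomputable def mtr (i : ι) : ℝ := ∫ ω, trn t (X i ω) ∂μ
open Classical in
noncomputable def XT (i : ι) (ω : Ω) : ℝ := if X i =ᵐ[μ] 0 then 0 else trn t (X i ω) - mtr μ X t i

variable {μ X t} {A B C : ι → Finset ι} {κ p : ℝ}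

lemma XT_zero {i : ι} (h : X i =ᵐ[μ] 0) : XT μ X t i = fun _ => 0 := by
  ext ω; simp [XT, h]

lemma XT_comp (i : ι) : ∃ G : ℝ → ℝ, Measurable G ∧ XT μ X t i = fun ω => G (X i ω) := by
  by_cases h0 : X i =ᵐ[μ] 0
  · exact ⟨fun _ => 0, measurable_const, XT_zero h0⟩
  · exact ⟨fun x => trn t x - mtr μ X t i, (trn_meas t).sub measurable_const, by ext ω; simp [XT, h0]⟩

lemma XT_sgm {S : Set ι} {i : ι} (h : i ∈ S) : Measurable[sgm X S] (XT μ X t i) := by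
  obtain ⟨G, hG, e⟩ := XT_comp (μ := μ) (X := X) (t := t) i
  rw [e]
  exact hG.comp (sgm_meas h)

lemma XT_meas {i : ι} (h : Measurable (X i)) : Measurable (XT μ X t i) := by
  obtain ⟨G, hG, e⟩ := XT_comp (μ := μ) (X := X) (t := t) i
  rw [e]
  exact hG.comp h

lemma XT_ae (ht : 0 < t) (i : ι) : XT μ X t i =ᵐ[μ] fun ω => trn t (X i ω) - mtr μ X t i := by
  by_cases h0 : X i =ᵐ[μ] 0
  · rw [XT_zero h0]
    have h1 : (fun ω => trn t (X i ω)) =ᵐ[μ] 0 := by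
      filter_upwards [h0] with ω hω
      simp [hω, trn]
    have h2 : mtr μ X t i = 0 := by
      unfold mtr; rw [integral_congr_ae h1]; simp
    filter_upwards [h1] with ω hω
    rw [hω, h2]; simp
  · exact Filter.Eventually.of_forall fun ω => by simp [XT, h0]

lemma sgm_XT (S : Set ι) : sgm (XT μ X t) S ≤ sgm X S :=
  iSup₂_le fun j hj => measurable_iff_comap_le.1 (XT_sgm hj)

lemma trn_bdm (hX : ∀ i, Measurable (X i)) (ht : 0 < t) (i : ι) : BdM (fun ω => trn t (X i ω)) :=
  ⟨(trn_meas t).comp (hX i), t, fun ω => trn_le ht⟩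

lemma mtr_le (hX : ∀ i, Measurable (X i)) (ht : 0 < t) (i : ι) : |mtr μ X t i| ≤ t := by
  unfold mtr
  refine (abs_integral_le_integral_abs).trans ?_
  have := imono (μ := μ) (trn_bdm hX ht i).abs (BdM.const t) fun ω => trn_le ht
  simpa using this

namespace HY
variable (h : HY μ X A B C κ p)
include h

lemma zero_of {i l j : ι} (hl : l ∉ C i) (hj : j ∈ A l) (hjB : j ∈ B i) : X j =ᵐ[μ] 0 := by
  have h1 := indep_mul (h.J3 i) (sgm_le h.meas) (sgm_le h.meas) (f := X j) (g := X j)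
    (sgm_meas hjB) (sgm_meas ⟨l, hl, hj⟩)
  rw [h.mean j, mul_zero] at h1
  have hq : Integrable (fun ω => X j ω * X j ω) μ := by
    refine Integrable.mono' (g := fun ω => 1 + |X j ω| ^ p) ((integrable_const _).add (h.int j)) ((h.meas j).mul (h.meas j)).aestronglyMeasurable ?_
    refine Filter.Eventually.of_forall fun ω => ?_
    have := sq_le_q (x := X j ω) h.p2 zero_lt_one
    simp [qf] at this ⊢
    nlinarith
  have := (integral_eq_zero_iff_of_nonneg (fun ω => mul_self_nonneg _) hq).1 h1
  filter_upwards [this] with ω hω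
  simpa using hω

lemma toLD (ht : 0 < t) : LD μ (XT μ X t) A B C κ (2 * t) where
  meas i := XT_meas (h.meas i)
  bdd i ω := by
    unfold XT
    split_ifs
    · simp; linarith
    · refine (abs_sub _ _).trans ?_
      linarith [trn_le (x := X i ω) ht, mtr_le (μ := μ) h.meas ht i]
  mean i := by
    rw [integral_congr_ae (XT_ae ht i), integral_sub (trn_bdm h.meas ht i).int (integrable_const _)]
    simp [mtr]
  memA := h.memA
  AB := h.AB
  BC := h.BC
  cardC := h.cardC
  cardC' := h.cardC'
  J1 i := indep_of_indep_of_le_left (indep_of_indep_of_le_right (h.J1 i) (sgm_XT _)) (sgm_XT _)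
  J2 i := indep_of_indep_of_le_left (indep_of_indep_of_le_right (h.J2 i) (sgm_XT _)) (sgm_XT _)
  J3 i := indep_of_indep_of_le_left (indep_of_indep_of_le_right (h.J3 i) (sgm_XT _)) (sgm_XT _)
  J4 i l hl := by
    refine indep_of_indep_of_le_left (indep_of_indep_of_le_right (h.J1 l) ?_) (sgm_XT _)
    refine iSup₂_le fun j hj => measurable_iff_comap_le.1 ?_
    by_cases hA : j ∈ A l
    · have hB : j ∈ B i := by
        rcases hj with hj | hj
        · exact absurd hA hj
        · exact hj
      rw [XT_zero (h.zero_of hl hA hB)]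
      exact measurable_const
    · exact XT_sgm hA
end HY
end trs

set_option linter.unusedVariables false
set_option linter.unusedSectionVars false

section trs
variable {Ω ι : Type} [MeasurableSpace Ω] [Fintype ι] [DecidableEq ι] {μ : Measure Ω} [IsProbabilityMeasure μ]
    {X : ι → Ω → ℝ} {t : ℝ} {A B C : ι → Finset ι} {κ p : ℝ}

namespace HY
variable (h : HY μ X A B C κ p) (ht : 0 < t)
include h ht

lemma qint (i : ι) : Integrable (fun ω => qf p t (X i ω)) μ := by
  have : (fun ω => qf p t (X i ω)) = fun ω => |X i ω| ^ p / t ^ p := by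
    ext ω; unfold qf; rw [Real.div_rpow (abs_nonneg _) ht.le]
  rw [this]
  exact (h.int i).div_const _

lemma theta_eq : ∑ i, ∫ ω, qf p t (X i ω) ∂μ = (∑ i, ∫ ω, |X i ω| ^ p ∂μ) / t ^ p := by
  rw [Finset.sum_div]
  refine Finset.sum_congr rfl fun i _ => ?_
  rw [← integral_div]
  congr 1
  ext ω; unfold qf; rw [Real.div_rpow (abs_nonneg _) ht.le]

lemma xint (i : ι) : Integrable (X i) μ := by
  refine Integrable.mono' (((integrable_const (1:ℝ)).add (h.qint ht i)).const_mul t) (h.meas i).aestronglyMeasurable ?_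
  exact Filter.Eventually.of_forall fun ω => abs_le_q h.p2 ht

lemma xxint (i j : ι) : Integrable (fun ω => X i ω * X j ω) μ := by
  refine Integrable.mono' ((((integrable_const (1:ℝ)).add (h.qint ht i)).const_mul (t ^ 2)).add (((integrable_const (1:ℝ)).add (h.qint ht j)).const_mul (t ^ 2)))
    ((h.meas i).mul (h.meas j)).aestronglyMeasurable ?_
  refine Filter.Eventually.of_forall fun ω => ?_
  have h1 := sq_le_q (x := X i ω) h.p2 ht
  have h2 := sq_le_q (x := X j ω) h.p2 ht
  rw [Real.norm_eq_abs, abs_mul]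
  rw [← sq_abs] at h1 h2
  show _ ≤ t ^ 2 * (1 + qf p t (X i ω)) + t ^ 2 * (1 + qf p t (X j ω))
  nlinarith [sq_nonneg (|X i ω| - |X j ω|), sq_nonneg (|X i ω|), sq_nonneg (|X j ω|)]

lemma Q_nonneg (i : ι) : 0 ≤ ∫ ω, qf p t (X i ω) ∂μ := integral_nonneg fun ω => qf_nonneg ht

lemma mtr_Q (i : ι) : |mtr μ X t i| ≤ t * ∫ ω, qf p t (X i ω) ∂μ := by
  have e : mtr μ X t i = - ∫ ω, (X i ω - trn t (X i ω)) ∂μ := by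
    rw [integral_sub (h.xint ht i) (trn_bdm h.meas ht i).int, h.mean i]; unfold mtr; ring
  rw [e, abs_neg, ← integral_const_mul]
  refine abs_integral_le_integral_abs.trans ?_
  exact integral_mono ((h.xint ht i).sub (trn_bdm h.meas ht i).int).abs ((h.qint ht i).const_mul t)
    fun ω => trn_sub h.p2 ht

lemma sum_mtr : |∑ i, mtr μ X t i| ≤ t * ∑ i, ∫ ω, qf p t (X i ω) ∂μ := by
  rw [Finset.mul_sum]
  exact (Finset.abs_sum_le_sum_abs _ _).trans (Finset.sum_le_sum fun i _ => h.mtr_Q ht i)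

lemma betT : bet μ (XT μ X t) ≤ 8 * t ^ 3 * ∑ i, ∫ ω, qf p t (X i ω) ∂μ := by
  unfold bet
  rw [Finset.mul_sum]
  refine Finset.sum_le_sum fun i _ => ?_
  have hb := trn_bdm h.meas ht i
  have e : ∫ ω, |XT μ X t i ω| ^ 3 ∂μ = ∫ ω, |trn t (X i ω) - mtr μ X t i| ^ 3 ∂μ := by
    refine integral_congr_ae ?_
    filter_upwards [XT_ae (μ := μ) (X := X) ht i] with ω hω
    rw [hω]
  rw [e]
  have h1 : ∫ ω, |trn t (X i ω) - mtr μ X t i| ^ 3 ∂μ ≤ ∫ ω, (4 * |trn t (X i ω)| ^ 3 + 4 * |mtr μ X t i| ^ 3) ∂μ := by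
    refine imono ((hb.sub (BdM.const _)).abs.pow 3) (((BdM.const 4).mul (hb.abs.pow 3)).add (BdM.const _)) fun ω => ?_
    have a1 := abs_sub (trn t (X i ω)) (mtr μ X t i)
    have a2 : |trn t (X i ω) - mtr μ X t i| ^ 3 ≤ (|trn t (X i ω)| + |mtr μ X t i|) ^ 3 := by gcongr
    refine a2.trans ?_
    have b1 := abs_nonneg (trn t (X i ω))
    have b2 := abs_nonneg (mtr μ X t i)
    nlinarith [mul_nonneg (add_nonneg b1 b2) (sq_nonneg (|trn t (X i ω)| - |mtr μ X t i|))]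
  rw [integral_add (((BdM.const 4).mul (hb.abs.pow 3)).int) (BdM.const _).int, integral_const_mul] at h1
  have h2 : |mtr μ X t i| ^ 3 ≤ ∫ ω, |trn t (X i ω)| ^ 3 ∂μ := by
    refine le_trans ?_ (jensen3 hb)
    have : |mtr μ X t i| ≤ ∫ ω, |trn t (X i ω)| ∂μ := abs_integral_le_integral_abs
    gcongr
  have h3 : ∫ ω, |trn t (X i ω)| ^ 3 ∂μ ≤ t ^ 3 * ∫ ω, qf p t (X i ω) ∂μ := by
    rw [← integral_const_mul]
    exact integral_mono (hb.abs.pow 3).int ((h.qint ht i).const_mul _) fun ω => trn_cube h.p3 h.p2 ht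
  simp at h1
  linarith

lemma var_eq : ∑ i, ∑ j ∈ A i, ∫ ω, X i ω * X j ω ∂μ = 1 := by
  rw [← h.var]
  have h1 : ∀ ω, SX X Finset.univ ω ^ 2 = ∑ i, ∑ j, X i ω * X j ω := fun ω => by
    rw [← Finset.sum_mul_sum, sq]; rfl
  simp only [h1]
  rw [integral_finsetSum _ fun i _ => integrable_finsetSum _ fun j _ => h.xxint ht i j]
  refine Finset.sum_congr rfl fun i _ => ?_
  rw [integral_finsetSum _ fun j _ => h.xxint ht i j]
  refine Finset.sum_subset (Finset.subset_univ _) fun j _ hj => ?_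
  rw [indep_mul (h.J1 i) (sgm_le h.meas) (sgm_le h.meas) (sgm_meas (by simp)) (sgm_meas (by exact hj)), h.mean i, zero_mul]

lemma varT_term (i j : ι) : |∫ ω, X i ω * X j ω ∂μ - ∫ ω, XT μ X t i ω * XT μ X t j ω ∂μ| ≤
    t ^ 2 * (∫ ω, qf p t (X i ω) ∂μ) + 2 * t ^ 2 * ∫ ω, qf p t (X j ω) ∂μ := by
  have hi := trn_bdm h.meas ht i
  have hj := trn_bdm h.meas ht j
  have e : ∫ ω, XT μ X t i ω * XT μ X t j ω ∂μ = ∫ ω, trn t (X i ω) * trn t (X j ω) ∂μ - mtr μ X t i * mtr μ X t j := by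
    have e1 : ∫ ω, XT μ X t i ω * XT μ X t j ω ∂μ = ∫ ω, (trn t (X i ω) * trn t (X j ω) - mtr μ X t j * trn t (X i ω) - mtr μ X t i * trn t (X j ω) + mtr μ X t i * mtr μ X t j) ∂μ := by
      refine integral_congr_ae ?_
      filter_upwards [XT_ae (μ := μ) (X := X) ht i, XT_ae (μ := μ) (X := X) ht j] with ω h1 h2
      rw [h1, h2]; ring
    have b1 := hi.mul hj
    have b2 := (BdM.const (Ω := Ω) (mtr μ X t j)).mul hi
    have b3 := (BdM.const (Ω := Ω) (mtr μ X t i)).mul hj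
    rw [e1, integral_add ((b1.sub b2).sub b3).int (BdM.const _).int, integral_sub (b1.sub b2).int b3.int, integral_sub b1.int b2.int,
      integral_const_mul, integral_const_mul]
    simp only [integral_const, probReal_univ, one_smul]
    change _ - mtr μ X t j * mtr μ X t i - mtr μ X t i * mtr μ X t j + _ = _
    ring
  have d : |∫ ω, X i ω * X j ω ∂μ - ∫ ω, trn t (X i ω) * trn t (X j ω) ∂μ| ≤ t ^ 2 * (∫ ω, qf p t (X i ω) ∂μ + ∫ ω, qf p t (X j ω) ∂μ) := by
    rw [← integral_sub (h.xxint ht i j) (hi.mul hj).int, ← integral_add (h.qint ht i) (h.qint ht j), ← integral_const_mul]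
    refine abs_integral_le_integral_abs.trans ?_
    exact integral_mono ((h.xxint ht i j).sub (hi.mul hj).int).abs (((h.qint ht i).add (h.qint ht j)).const_mul _)
      fun ω => trn_prod h.p2 ht
  have m1 : |mtr μ X t i * mtr μ X t j| ≤ t * (t * ∫ ω, qf p t (X j ω) ∂μ) := by
    rw [abs_mul]
    exact mul_le_mul (mtr_le h.meas ht i) (h.mtr_Q ht j) (abs_nonneg _) ht.le
  rw [e]
  rw [abs_le] at *
  constructor <;> nlinarith [d.1, d.2, m1.1, m1.2]

lemma varT (hκ : 1 ≤ κ) : |∫ ω, SX (XT μ X t) Finset.univ ω ^ 2 ∂μ - 1| ≤ 3 * κ * t ^ 2 * ∑ i, ∫ ω, qf p t (X i ω) ∂μ := by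
  have L := h.toLD ht
  have e : ∫ ω, SX (XT μ X t) Finset.univ ω ^ 2 ∂μ = ∑ i, ∑ j ∈ A i, ∫ ω, XT μ X t i ω * XT μ X t j ω ∂μ := by
    rw [← L.sig]
    refine Finset.sum_congr rfl fun i _ => ?_
    rw [← integral_finsetSum _ fun j _ => ((L.xb i).mul (L.xb j)).int]
    congr 1; ext ω; unfold SX; rw [Finset.mul_sum]
  rw [e, ← h.var_eq ht, abs_sub_comm, ← Finset.sum_sub_distrib]
  simp only [← Finset.sum_sub_distrib]
  refine (Finset.abs_sum_le_sum_abs _ _).trans ?_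
  have Q0 := h.Q_nonneg ht
  have s1 : ∀ i, A i ⊆ C i := fun i => (h.AB i).trans (h.BC i)
  have step : ∀ i, |∑ j ∈ A i, (∫ ω, X i ω * X j ω ∂μ - ∫ ω, XT μ X t i ω * XT μ X t j ω ∂μ)| ≤
      ∑ j ∈ C i, (t ^ 2 * ∫ ω, qf p t (X i ω) ∂μ) + ∑ j ∈ C i, 2 * t ^ 2 * ∫ ω, qf p t (X j ω) ∂μ := fun i => by
    refine (Finset.abs_sum_le_sum_abs _ _).trans ?_
    rw [← Finset.sum_add_distrib]
    refine (Finset.sum_le_sum fun j _ => h.varT_term ht i j).trans ?_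
    exact Finset.sum_le_sum_of_subset_of_nonneg (s1 i) fun j _ _ => by
      have := Q0 i; have := Q0 j; positivity
  refine (Finset.sum_le_sum fun i _ => step i).trans ?_
  rw [Finset.sum_add_distrib]
  have c1 := count_fwd h.cardC (y := fun i => t ^ 2 * ∫ ω, qf p t (X i ω) ∂μ) fun i => mul_nonneg (sq_nonneg _) (Q0 i)
  have c2 := count_bwd h.cardC' (y := fun i => 2 * t ^ 2 * ∫ ω, qf p t (X i ω) ∂μ) fun i => mul_nonneg (by positivity) (Q0 i)
  rw [← Finset.mul_sum] at c1 c2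
  linarith

lemma theta_pos : 0 < ∑ i, ∫ ω, qf p t (X i ω) ∂μ := by
  have Q0 := h.Q_nonneg ht
  refine lt_of_le_of_ne (Finset.sum_nonneg fun i _ => Q0 i) fun h0 => ?_
  have h1 := (Finset.sum_eq_zero_iff_of_nonneg fun i _ => Q0 i).1 h0.symm
  have h2 : ∀ i, X i =ᵐ[μ] 0 := fun i => by
    have := (integral_eq_zero_iff_of_nonneg (fun ω => qf_nonneg ht) (h.qint ht i)).1 (h1 i (Finset.mem_univ _))
    filter_upwards [this] with ω hω
    by_contra hne
    have : 0 < qf p t (X i ω) := by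
      unfold qf
      have : 0 < |X i ω| := abs_pos.2 hne
      positivity
    simp at hω
    linarith
  have h3 : ∫ ω, SX X Finset.univ ω ^ 2 ∂μ = 0 := by
    have : (fun ω => SX X Finset.univ ω ^ 2) =ᵐ[μ] 0 := by
      filter_upwards [ae_all_iff.2 h2] with ω hω
      unfold SX
      simp [hω]
    rw [integral_congr_ae this]; simp
  rw [h.var] at h3
  exact one_ne_zero h3

/-- probability that truncation matters -/
lemma trP : μ.real {ω | ∃ i, t < |X i ω|} ≤ ∑ i, ∫ ω, qf p t (X i ω) ∂μ := by
  have e : {ω | ∃ i, t < |X i ω|} = ⋃ i, {ω | t < |X i ω|} := by ext; simp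
  rw [e]
  refine (measureReal_iUnion_fintype_le _).trans (Finset.sum_le_sum fun i _ => ?_)
  have hm : MeasurableSet {ω | t < |X i ω|} := measurableSet_lt measurable_const (h.meas i).abs
  rw [← integral_indicator_one hm]
  refine integral_mono ((integrable_const (1:ℝ)).indicator hm) (h.qint ht i) fun ω => ?_
  by_cases hw : t < |X i ω|
  · rw [Set.indicator_of_mem (by exact hw)]; exact qf1 h.p2 ht hw
  · rw [Set.indicator_of_notMem (by exact hw)]; exact qf_nonneg ht

lemma SXT_ae : ∀ᵐ ω ∂μ, (∃ i, t < |X i ω|) ∨ SX (XT μ X t) Finset.univ ω = SX X Finset.univ ω - ∑ i, mtr μ X t i := by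
  filter_upwards [ae_all_iff.2 fun i => XT_ae (μ := μ) (X := X) ht i] with ω hω
  by_cases he : ∃ i, t < |X i ω|
  · exact Or.inl he
  · right
    push Not at he
    unfold SX
    rw [← Finset.sum_sub_distrib]
    refine Finset.sum_congr rfl fun i _ => ?_
    rw [hω i]; simp [trn, he i]

lemma cmp1 (z : ℝ) : μ.real {ω | z ≤ SX X Finset.univ ω} ≤
    μ.real {ω | z - ∑ i, mtr μ X t i ≤ SX (XT μ X t) Finset.univ ω} + ∑ i, ∫ ω, qf p t (X i ω) ∂μ := by
  refine le_trans ?_ (add_le_add_right (h.trP ht) _)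
  refine le_trans ?_ (measureReal_union_le _ _)
  refine ENNReal.toReal_mono (measure_ne_top _ _) (measure_mono_ae ?_)
  filter_upwards [h.SXT_ae ht] with ω hω hz
  have hz : z ≤ SX X Finset.univ ω := hz
  rcases hω with hω | hω
  · exact Or.inr hω
  · left; show z - ∑ i, mtr μ X t i ≤ SX (XT μ X t) Finset.univ ω; rw [hω]; linarith

lemma cmp2 (z : ℝ) : μ.real {ω | z - ∑ i, mtr μ X t i < SX (XT μ X t) Finset.univ ω} ≤
    μ.real {ω | z < SX X Finset.univ ω} + ∑ i, ∫ ω, qf p t (X i ω) ∂μ := by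
  refine le_trans ?_ (add_le_add_right (h.trP ht) _)
  refine le_trans ?_ (measureReal_union_le _ _)
  refine ENNReal.toReal_mono (measure_ne_top _ _) (measure_mono_ae ?_)
  filter_upwards [h.SXT_ae ht] with ω hω hz
  have hz : z - ∑ i, mtr μ X t i < SX (XT μ X t) Finset.univ ω := hz
  rcases hω with hω | hω
  · exact Or.inr hω
  · left; show z < SX X Finset.univ ω; rw [hω] at hz; linarith

end HY
end trs

set_option linter.unusedVariables false
set_option linter.unusedSectionVars false

lemma HY.neg {Ω ι : Type} [MeasurableSpace Ω] [Fintype ι] [DecidableEq ι] {μ : Measure Ω}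
    {X : ι → Ω → ℝ} {A B C : ι → Finset ι} {κ p : ℝ} (h : HY μ X A B C κ p) :
    HY μ (fun i ω => - X i ω) A B C κ p := by
  have hs : ∀ S, sgm (fun i ω => - X i ω) S ≤ sgm X S := fun S =>
    iSup₂_le fun j hj => measurable_iff_comap_le.1 (measurable_neg.comp (sgm_meas hj))
  exact {
    p2 := h.p2
    p3 := h.p3
    meas := fun i => (h.meas i).neg
    int := fun i => by simpa using h.int i
    mean := fun i => by rw [integral_neg, h.mean i, neg_zero]
    memA := h.memA
    AB := h.AB
    BC := h.BC
    cardC := h.cardC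
    cardC' := h.cardC'
    J1 := fun i => indep_of_indep_of_le_left (indep_of_indep_of_le_right (h.J1 i) (hs _)) (hs _)
    J2 := fun i => indep_of_indep_of_le_left (indep_of_indep_of_le_right (h.J2 i) (hs _)) (hs _)
    J3 := fun i => indep_of_indep_of_le_left (indep_of_indep_of_le_right (h.J3 i) (hs _)) (hs _)
    var := by
      rw [← h.var]
      congr 1; ext ω; simp [SX] }

theorem half : ∃ K : ℝ, 0 < K ∧ ∀ (Ω : Type) [MeasurableSpace Ω] (μ : Measure Ω) [IsProbabilityMeasure μ]
    (ι : Type) [Fintype ι] [DecidableEq ι] (X : ι → Ω → ℝ) (A B C : ι → Finset ι) (κ p : ℝ),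
    HY μ X A B C κ p → 1 ≤ κ → ∀ z t : ℝ, 0 ≤ z → t = (1 + z) / (32 * κ) →
    μ.real {ω | z ≤ SX X Finset.univ ω} ≤ 1 - stdGaussianCDF z + K * ∑ i, ∫ ω, qf p t (X i ω) ∂μ ∧
      1 - stdGaussianCDF z - K * ∑ i, ∫ ω, qf p t (X i ω) ∂μ ≤ μ.real {ω | z < SX X Finset.univ ω} := by
  obtain ⟨K, hK, core⟩ := core
  obtain ⟨D, hD, dens⟩ := dens
  refine ⟨K + 1 + 9 * D + 4, by positivity, ?_⟩
  intro Ω _ μ _ ι _ _ X A B C κ p h hκ z t hz ht'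
  have hκ0 : 0 < κ := by linarith
  have ht : 0 < t := by rw [ht']; positivity
  set Z := 1 + z with hZdef
  have hZ : 1 ≤ Z := by linarith
  have hZ0 : 0 < Z := by linarith
  set θ := ∑ i, ∫ ω, qf p t (X i ω) ∂μ with hθ
  have hθ0 : 0 < θ := h.theta_pos ht
  have hκt : κ * t = Z / 32 := by rw [ht']; field_simp
  have hZ6 : Z ^ 2 ≤ Z ^ 6 := pow_le_pow_right₀ hZ (by norm_num)
  rcases le_or_gt (θ * Z ^ 2) 1 with hc | hc
  · have htZ : t ≤ Z / 32 := by rw [← hκt]; nlinarith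
    set m := ∑ i, mtr μ X t i with hm
    have hm1 : |m| ≤ Z / 32 * θ := (h.sum_mtr ht).trans (by gcongr)
    have hZθ : Z * θ ≤ 1 := by nlinarith
    have hm2 : |m| ≤ 1 / 2 := by linarith
    have c1 : κ ^ 3 * bet μ (XT μ X t) ≤ θ * Z ^ 3 := by
      have := mul_le_mul_of_nonneg_left (h.betT ht) (by positivity : 0 ≤ κ ^ 3)
      have e : κ ^ 3 * (8 * t ^ 3 * θ) = 8 * (κ * t) ^ 3 * θ := by ring
      rw [← hθ, e, hκt] at this
      refine this.trans ?_
      have : 0 ≤ Z ^ 3 * θ := by positivity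
      nlinarith
    have c2 : |∫ ω, SX (XT μ X t) Finset.univ ω ^ 2 ∂μ - 1| ≤ θ * Z ^ 2 := by
      refine (h.varT ht hκ).trans ?_
      rw [← hθ]
      have e : 3 * κ * t ^ 2 * θ = 3 * (κ * t) * t * θ := by ring
      rw [e, hκt]
      have : 3 * (Z / 32) * t * θ ≤ 3 * (Z / 32) * (Z / 32) * θ := by gcongr
      have : 0 ≤ Z ^ 2 * θ := by positivity
      nlinarith
    obtain ⟨r1, r2⟩ := core Ω μ ι (XT μ X t) A B C κ (2 * t) θ Z (h.toLD ht) hκ hZ hθ0 (by linarith) c1 c2 hc (z - m)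
      (by rw [show z - m - (Z - 1) = -m by rw [hZdef]; ring, abs_neg]; exact hm2)
    have s1 := h.cmp1 ht z
    have s2 := h.cmp2 ht z
    rw [← hθ, ← hm] at s1 s2
    have hm3 := abs_le.1 hm2
    have dd : ∀ s, Z - 3 ≤ s → Real.exp (-s ^ 2 / 2) ≤ D / Z := fun s hs => by
      rw [le_div_iff₀ hZ0]
      have a := dens Z s hZ hs
      have b : Z ≤ Z ^ 6 := by simpa using pow_le_pow_right₀ hZ (show 1 ≤ 6 by norm_num)
      have := mul_le_mul_of_nonneg_right b (Real.exp_pos (-s ^ 2 / 2)).le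
      linarith
    have md : |m| * (D / Z) ≤ D * θ := by
      have : |m| * (D / Z) ≤ Z / 32 * θ * (D / Z) := by gcongr
      have e : Z / 32 * θ * (D / Z) = D * θ / 32 := by field_simp
      have : 0 ≤ D * θ := by positivity
      linarith
    have cd : |stdGaussianCDF (z - m) - stdGaussianCDF z| ≤ D * θ := by
      rcases le_total 0 m with h0 | h0
      · have := cdf_incr (x := z - m) (y := z) (D := D / Z) (by linarith) fun s hs => dd s (by linarith [hs.1])
        rw [abs_of_nonneg h0] at md
        rw [abs_of_nonpos (by linarith [this.1])]
        have e : z - (z - m) = m := by ring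
        rw [e] at this
        linarith [this.2]
      · have := cdf_incr (x := z) (y := z - m) (D := D / Z) (by linarith) fun s hs => dd s (by linarith [hs.1])
        rw [abs_of_nonpos h0] at md
        rw [abs_of_nonneg (by linarith [this.1])]
        have e : z - m - z = -m := by ring
        rw [e] at this
        linarith [this.2]
    have cd' := abs_le.1 cd
    have : 0 ≤ D * θ := by positivity
    constructor <;> nlinarith
  · have hiZ : 1 / Z ^ 2 ≤ θ := by rw [div_le_iff₀ (by positivity)]; exact hc.le
    have g1 : 1 - stdGaussianCDF z ≤ 9 * D * θ := by
      refine (cdf_tail hz).trans ?_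
      have a := dens Z z hZ (by linarith)
      have : Real.exp (-z ^ 2 / 2) ≤ D / Z ^ 2 := by
        rw [le_div_iff₀ (by positivity)]
        have := mul_le_mul_of_nonneg_right hZ6 (Real.exp_pos (-z ^ 2 / 2)).le
        linarith
      have : D / Z ^ 2 ≤ D * θ := by
        rw [div_eq_mul_one_div]; gcongr
      linarith
    have hW2 : Integrable (fun ω => SX X Finset.univ ω ^ 2) μ := integrable_of_integral_eq_one h.var
    have hWm : Measurable (SX X Finset.univ) := Finset.measurable_sum _ fun i _ => h.meas i
    have g2 : μ.real {ω | z ≤ SX X Finset.univ ω} ≤ 4 * θ := by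
      rcases le_or_gt 1 z with h1 | h1
      · have hms : MeasurableSet {ω | z ≤ SX X Finset.univ ω} := measurableSet_le measurable_const hWm
        have : μ.real {ω | z ≤ SX X Finset.univ ω} ≤ ∫ ω, 4 / Z ^ 2 * SX X Finset.univ ω ^ 2 ∂μ := by
          rw [← integral_indicator_one hms]
          refine integral_mono ((integrable_const (1:ℝ)).indicator hms) (hW2.const_mul _) fun ω => ?_
          by_cases hw : z ≤ SX X Finset.univ ω
          · rw [Set.indicator_of_mem (by exact hw)]
            show (1:ℝ) ≤ 4 / Z ^ 2 * SX X Finset.univ ω ^ 2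
            rw [div_mul_eq_mul_div, le_div_iff₀ (by positivity)]
            nlinarith
          · rw [Set.indicator_of_notMem (by exact hw)]
            show (0:ℝ) ≤ 4 / Z ^ 2 * SX X Finset.univ ω ^ 2
            positivity
        rw [integral_const_mul, h.var] at this
        have e : 4 / Z ^ 2 * 1 = 4 * (1 / Z ^ 2) := by ring
        linarith
      · have : μ.real {ω | z ≤ SX X Finset.univ ω} ≤ 1 := measureReal_le_one
        have : Z ^ 2 ≤ 4 := by nlinarith
        have : θ * Z ^ 2 ≤ θ * 4 := by gcongr
        linarith
    have g3 : (0:ℝ) ≤ μ.real {ω | z < SX X Finset.univ ω} := measureReal_nonneg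
    have := cdf_le_one z
    have q1 : 0 ≤ K * θ := by positivity
    have q2 : 0 ≤ D * θ := by positivity
    constructor <;> nlinarith

lemma theta_le {p t κ z β : ℝ} (hp : 2 < p) (hp3 : p ≤ 3) (hκ : 1 ≤ κ) (hz : 0 ≤ z) (hβ : 0 ≤ β)
    (ht : t = (1 + z) / (32 * κ)) : β / t ^ p ≤ 32 ^ 3 * (κ ^ p * (1 + z) ^ (-p) * β) := by
  have hκ0 : 0 < κ := by linarith
  have hZ : 0 < 1 + z := by linarith
  rw [ht, Real.div_rpow hZ.le (by positivity), Real.mul_rpow (by norm_num) hκ0.le, Real.rpow_neg hZ.le]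
  have h32 : (32:ℝ) ^ p ≤ 32 ^ 3 := by
    rw [← Real.rpow_natCast]
    exact Real.rpow_le_rpow_of_exponent_le (by norm_num) (by exact_mod_cast hp3)
  have hZp : 0 < (1 + z) ^ p := by positivity
  have e : β / ((1 + z) ^ p / (32 ^ p * κ ^ p)) = 32 ^ p * (κ ^ p * ((1 + z) ^ p)⁻¹ * β) := by
    have h1 : (0:ℝ) < 32 ^ p := by positivity
    have h2 : 0 < κ ^ p := by positivity
    field_simp
  rw [e]
  gcongr

theorem main_thm : ∃ K : ℝ, 0 < K ∧ ∀ (Ω : Type) [MeasurableSpace Ω] (μ : Measure Ω) [IsProbabilityMeasure μ]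
    (ι : Type) [Fintype ι] [DecidableEq ι] (X : ι → Ω → ℝ) (A B C : ι → Finset ι) (κ p : ℝ),
    HY μ X A B C κ p → 1 ≤ κ → ∀ z : ℝ,
    |μ.real {ω | SX X Finset.univ ω ≤ z} - stdGaussianCDF z| ≤
      K * κ ^ p * (1 + |z|) ^ (-p) * ∑ i, ∫ ω, |X i ω| ^ p ∂μ := by
  obtain ⟨K, hK, half⟩ := half
  refine ⟨K * 32 ^ 3, by positivity, ?_⟩
  intro Ω _ μ _ ι _ _ X A B C κ p h hκ z
  have hκ0 : 0 < κ := by linarith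
  have hβ : 0 ≤ ∑ i, ∫ ω, |X i ω| ^ p ∂μ := Finset.sum_nonneg fun i _ => integral_nonneg fun ω => by positivity
  have ht : 0 < (1 + |z|) / (32 * κ) := by positivity
  have tl := theta_le h.p2 h.p3 hκ (abs_nonneg z) hβ rfl
  have tl' := mul_le_mul_of_nonneg_left tl hK.le
  have fin : ∀ a : ℝ, |a| ≤ K * ((∑ i, ∫ ω, |X i ω| ^ p ∂μ) / ((1 + |z|) / (32 * κ)) ^ p) →
      |a| ≤ K * 32 ^ 3 * κ ^ p * (1 + |z|) ^ (-p) * ∑ i, ∫ ω, |X i ω| ^ p ∂μ := fun a ha => by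
    refine ha.trans (tl'.trans (le_of_eq (by ring)))
  apply fin
  have hWm : Measurable (SX X Finset.univ) := Finset.measurable_sum _ fun i _ => h.meas i
  rcases le_total 0 z with hz | hz
  · rw [abs_of_nonneg hz] at *
    obtain ⟨r1, r2⟩ := half Ω μ ι X A B C κ p h hκ z _ hz rfl
    rw [h.theta_eq ht] at r1 r2
    have e : μ.real {ω | SX X Finset.univ ω ≤ z} = 1 - μ.real {ω | z < SX X Finset.univ ω} := by
      rw [← probReal_compl_eq_one_sub (measurableSet_lt measurable_const hWm)]
      congr 1; ext ω; simp
    have mo : μ.real {ω | z < SX X Finset.univ ω} ≤ μ.real {ω | z ≤ SX X Finset.univ ω} :=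
      measureReal_mono (fun ω (hω : z < _) => hω.le)
    rw [e, abs_le]
    constructor <;> linarith
  · rw [abs_of_nonpos hz] at *
    have hn := h.neg
    obtain ⟨r1, r2⟩ := half Ω μ ι _ A B C κ p hn hκ (-z) _ (by linarith) rfl
    rw [hn.theta_eq ht] at r1 r2
    simp only [abs_neg] at r1 r2
    have e0 : ∀ ω, SX (fun i ω => - X i ω) Finset.univ ω = - SX X Finset.univ ω := fun ω => by simp [SX]
    simp only [e0, neg_le_neg_iff, neg_lt_neg_iff] at r1 r2
    rw [cdf_neg] at r1 r2
    have mo : μ.real {ω | SX X Finset.univ ω < z} ≤ μ.real {ω | SX X Finset.univ ω ≤ z} :=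
      measureReal_mono (fun ω (hω : _ < z) => hω.le)
    rw [abs_le]
    constructor <;> linarith

lemma sgm_le_comap {Ω ι β : Type} [mβ : MeasurableSpace β] {X : ι → Ω → ℝ} {S : Set ι} {f : Ω → β}
    (h : ∀ j ∈ S, ∃ g : β → ℝ, Measurable g ∧ ∀ ω, X j ω = g (f ω)) :
    sgm X S ≤ MeasurableSpace.comap f mβ := by
  refine iSup₂_le fun j hj => ?_
  obtain ⟨g, hg, e⟩ := h j hj
  have : X j = g ∘ f := funext e
  rw [this, ← MeasurableSpace.comap_comp]
  exact MeasurableSpace.comap_mono hg.comap_le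

lemma indep_sgm {Ω ι β γ : Type} [MeasurableSpace Ω] [mβ : MeasurableSpace β] [mγ : MeasurableSpace γ] {μ : Measure Ω}
    {X : ι → Ω → ℝ} {S T : Set ι} {f : Ω → β} {f' : Ω → γ} (hi : IndepFun f f' μ)
    (h : ∀ j ∈ S, ∃ g : β → ℝ, Measurable g ∧ ∀ ω, X j ω = g (f ω))
    (h' : ∀ j ∈ T, ∃ g : γ → ℝ, Measurable g ∧ ∀ ω, X j ω = g (f' ω)) :
    Indep (sgm X S) (sgm X T) μ := by
  rw [IndepFun_iff_Indep] at hi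
  exact indep_of_indep_of_le_left (indep_of_indep_of_le_right hi (sgm_le_comap h')) (sgm_le_comap h)

theorem stmt_4 :
    ∃ Cc : ℝ, 0 < Cc ∧
    ∀ (Ω : Type) [MeasurableSpace Ω] (μ : Measure Ω) [IsProbabilityMeasure μ]
      (ι : Type) [Fintype ι] [DecidableEq ι]
      (p : ℝ), 2 < p → p ≤ 3 →
    ∀ (X : ι → Ω → ℝ) (A B Bstar Cstar Dstar : ι → Finset ι),
      (∀ i, Measurable (X i)) →
      (∀ i, ∫ ω, X i ω ∂μ = 0) →
      (∀ i, Integrable (fun ω => |X i ω| ^ p) μ) →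
      (∀ i, i ∈ A i) → (∀ i, A i ⊆ B i) → (∀ i, B i ⊆ Bstar i) →
      (∀ i, Bstar i ⊆ Cstar i) → (∀ i, Cstar i ⊆ Dstar i) →
      (∀ i, IndepFun (X i) (fun ω => fun j : ((A i)ᶜ : Finset ι) => X j.1 ω) μ) →
      (∀ i, IndepFun (fun ω => fun j : (A i : Finset ι) => X j.1 ω)
        (fun ω => fun j : ((B i)ᶜ : Finset ι) => X j.1 ω) μ) →
      (∀ i, IndepFun (fun ω => fun j : (A i : Finset ι) => X j.1 ω)
        (fun ω => fun l : ((Bstar i)ᶜ : Finset ι) =>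
          fun j : (A l.1 : Finset ι) => X j.1 ω) μ) →
      (∀ i, IndepFun (fun ω => fun l : (Bstar i : Finset ι) =>
          fun j : (A l.1 : Finset ι) => X j.1 ω)
        (fun ω => fun l : ((Cstar i)ᶜ : Finset ι) =>
          fun j : (A l.1 : Finset ι) => X j.1 ω) μ) →
      (∀ i, IndepFun (fun ω => fun l : (Cstar i : Finset ι) =>
          fun j : (A l.1 : Finset ι) => X j.1 ω)
        (fun ω => fun l : ((Dstar i)ᶜ : Finset ι) =>
          fun j : (A l.1 : Finset ι) => X j.1 ω) μ) →
    ∀ (W : Ω → ℝ), (∀ ω, W ω = ∑ i, X i ω) →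
      (∫ ω, (W ω) ^ 2 ∂μ) = 1 →
    ∀ (κ : ℕ), (κ = Finset.univ.sup fun i => max (Dstar i).card
        (Finset.univ.filter fun j => i ∈ Dstar j).card) →
    ∀ z : ℝ, |(μ {ω | W ω ≤ z}).toReal - stdGaussianCDF z| ≤
      Cc * (κ : ℝ) ^ p * (1 + |z|) ^ (-p) * ∑ i, ∫ ω, |X i ω| ^ p ∂μ := by
  obtain ⟨K, hK, main⟩ := main_thm
  refine ⟨K, hK, ?_⟩
  intro Ω _ μ _ ι _ _ p hp hp3 X A B Bs Cs Ds hmeas hmean hint hA hAB hBBs hBC hCD i1 _ i2 i3 _ W hW hvar κ hκ z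
  have hWS : W = SX X Finset.univ := by ext ω; rw [hW]; rfl
  have hk1 : ∀ i, (Ds i).card ≤ κ := fun i => by
    rw [hκ]
    exact (le_max_left _ _).trans (Finset.le_sup (f := fun i => max (Ds i).card (Finset.univ.filter fun j => i ∈ Ds j).card) (Finset.mem_univ i))
  have hk2 : ∀ i, (Finset.univ.filter fun j => i ∈ Ds j).card ≤ κ := fun i => by
    rw [hκ]
    exact (le_max_right _ _).trans (Finset.le_sup (f := fun i => max (Ds i).card (Finset.univ.filter fun j => i ∈ Ds j).card) (Finset.mem_univ i))
  have hne : Nonempty ι := by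
    by_contra hn
    rw [not_nonempty_iff] at hn
    have : ∀ ω, W ω = 0 := fun ω => by rw [hW]; simp
    simp [this] at hvar
  have hκ1 : (1:ℝ) ≤ κ := by
    obtain ⟨i⟩ := hne
    have hi : i ∈ Ds i := hCD i (hBC i (hBBs i (hAB i (hA i))))
    have : 1 ≤ (Ds i).card := Finset.card_pos.2 ⟨i, hi⟩
    exact_mod_cast this.trans (hk1 i)
  have h : HY μ X A Bs Cs (κ : ℝ) p :=
    { p2 := hp
      p3 := hp3
      meas := hmeas
      int := hint
      mean := hmean
      memA := hA
      AB := fun i => (hAB i).trans (hBBs i)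
      BC := hBC
      cardC := fun i => by exact_mod_cast (Finset.card_le_card (hCD i)).trans (hk1 i)
      cardC' := fun i => by
        have : (Finset.univ.filter fun j => i ∈ Cs j).card ≤ κ :=
          (Finset.card_le_card (fun j hj => by
            simp only [Finset.mem_filter, Finset.mem_univ, true_and] at hj ⊢
            exact hCD j hj)).trans (hk2 i)
        exact_mod_cast this
      J1 := fun i => by
        refine indep_sgm (i1 i) ?_ ?_
        · intro j hj
          rw [Set.mem_singleton_iff] at hj
          subst hj
          exact ⟨id, measurable_id, fun ω => rfl⟩
        · intro j hj
          exact ⟨fun v => v ⟨j, Finset.mem_compl.2 hj⟩, measurable_pi_apply _, fun ω => rfl⟩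
      J2 := fun i => by
        refine indep_sgm (i2 i) ?_ ?_
        · intro j hj
          exact ⟨fun v => v ⟨j, hj⟩, measurable_pi_apply _, fun ω => rfl⟩
        · rintro j ⟨l, hl, hj⟩
          exact ⟨fun v => v ⟨l, Finset.mem_compl.2 hl⟩ ⟨j, hj⟩, (measurable_pi_apply _).comp (measurable_pi_apply _), fun ω => rfl⟩
      J3 := fun i => by
        refine indep_sgm (i3 i) ?_ ?_
        · intro j hj
          exact ⟨fun v => v ⟨j, hj⟩ ⟨j, hA j⟩, (measurable_pi_apply (⟨j, hA j⟩ : A j)).comp (measurable_pi_apply (⟨j, hj⟩ : Bs i)), fun ω => rfl⟩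
        · rintro j ⟨l, hl, hj⟩
          exact ⟨fun v => v ⟨l, Finset.mem_compl.2 hl⟩ ⟨j, hj⟩, (measurable_pi_apply _).comp (measurable_pi_apply _), fun ω => rfl⟩
      var := by rw [← hWS]; exact hvar }
  have r := main Ω μ ι X A Bs Cs κ p h hκ1 z
  rw [hWS]
  exact r
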